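/- arXiv:math/0206178 — 2 statements merged into one kernel-verified Lean document; each statement's English description precedes it below -/
import Mathlib

section
/- The sequence of rational numbers p_n/q_n converges to ζ(5); more precisely, lim_{n→∞} (log|ζ(5) − p_n/q_n|)/n = log|μ2/μ3|, where μ2 is the root of μ^3+2368μ^2−752μ−16 in (0.337, 0.338) and μ3 is its root in (−2369, −2368) (numerically |μ2/μ3| < 1.42521964·10^{−4}). -/
noncomputable section

open Filter


/-- `a₀(n)` from recursion (1). -/
def a0 (x : ℚ) : ℚ := 41218*x^3 - 48459*x^2 + 20010*x - 2871

/-- `a₁(n)` from recursion (1). -/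
def a1 (x : ℚ) : ℚ := 2*(48802112*x^9 + 89030880*x^8 + 36002654*x^7 - 24317344*x^6
  - 19538418*x^5 + 1311365*x^4 + 3790503*x^3 + 460056*x^2 - 271701*x - 60291)

/-- `a₂(n)` from recursion (1). -/
def a2 (x : ℚ) : ℚ := 3874492*x^8 - 2617900*x^7 - 3144314*x^6 + 2947148*x^5
  + 647130*x^4 - 1182926*x^3 + 115771*x^2 + 170716*x - 44541

/-- The third-order difference equation (1), imposed for all integers `n ≥ 2`. -/
def Rec1 (y : ℕ → ℚ) : Prop := ∀ n : ℕ, 2 ≤ n →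
  ((n : ℚ) + 1)^6 * a0 (n : ℚ) * y (n+1) + a1 (n : ℚ) * y n
    - 4*(2*(n : ℚ) - 1) * a2 (n : ℚ) * y (n-1)
    - 4*((n : ℚ) - 1)^4*(2*(n : ℚ) - 1)*(2*(n : ℚ) - 3) * a0 ((n : ℚ) + 1) * y (n-2) = 0

/-- The (real) value of the Riemann zeta function at a natural number argument. -/
def zetaRe (s : ℕ) : ℝ := (riemannZeta s).re

/-!
Poincaré's theorem says that for a recurrence with convergent coefficients whose limiting
characteristic polynomial has roots of distinct moduli, the ratios `y (n + 1) / y n` of any solution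
that is not eventually zero converge to one of these roots. Here the roots satisfy
`|μ₁| < |μ₂| < |μ₃|`, so it suffices to show that the root attached to `q n` is `μ₃` and the one
attached to `q n * ζ(5) - p n` is `μ₂`.

The first ratios of `q` are larger than `10` in absolute value and the recurrence propagates this,
which leaves only `μ₃`. For the linear form, a very-well-poised hypergeometric series with values in
`ℚ + ℚ ζ(3) + ℚ ζ(5)`, together with two companions, satisfies a first-order `3 × 3` system, by
creative telescoping. The cross product of this vector with the solution of the system that starts
at the coefficients of `ζ(3)` no longer involves `ζ(3)`, and one of its coordinates is a multiple of
`q n * ζ(5) - p n`. The series stay bounded and the entries of the system are moderate, which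
excludes the growth rate `|μ₃|`; and since `μ₁ < 0`, ratios tending to `μ₁` would, by running the
recurrence backwards, make the first two values have opposite signs, which they do not.
-/

namespace ZetaFive

open Asymptotics Topology Matrix Finset

/-! ### Poincaré's theorem -/

section Dichotomy

variable {A B : ℕ → ℝ} {α β : ℝ}

theorem eventually_mul_le_of_frequently_mul_le (hβ : 0 ≤ β) (hβα : β < α)
    (hlow : ∀ c > 0, ∀ᶠ n in atTop, α * A n - c * (A n + B n) ≤ A (n + 1))
    (hup : ∀ c > 0, ∀ᶠ n in atTop, B (n + 1) ≤ β * B n + c * (A n + B n))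
    {η : ℝ} (hη : 0 < η) (hfreq : ∃ᶠ n in atTop, η * B n ≤ A n) :
    ∀ᶠ n in atTop, η * B n ≤ A n := by
  have hgap : 0 < α - β := sub_pos.2 hβα
  set c := (α - β) * η / (η + 1) ^ 2 with hc
  have hcη : c * (η + 1) ^ 2 = (α - β) * η := by rw [hc]; field_simp
  have hc0 : 0 < c := by positivity
  obtain ⟨N, hN⟩ := eventually_atTop.1 ((hlow c hc0).and (hup c hc0))
  obtain ⟨M, hMN, hM⟩ := frequently_atTop.1 hfreq N
  refine eventually_atTop.2 ⟨M, fun n hn => ?_⟩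
  induction n, hn using Nat.le_induction with
  | base => exact hM
  | succ n hn ih =>
    obtain ⟨hAn, hBn⟩ := hN n (hMN.trans hn)
    have hsum : η * (A n + B n) ≤ (η + 1) * A n := by linarith
    have hβη : β * (η * B n) ≤ β * A n := mul_le_mul_of_nonneg_left ih hβ
    have hAη : η * (α * A n) - c * ((η + 1) * A n) ≤ η * A (n + 1) := by
      nlinarith [mul_le_mul_of_nonneg_left hsum hc0.le]
    have hBη : η * B (n + 1) ≤ β * A n + c * ((η + 1) * A n) := by
      nlinarith [mul_le_mul_of_nonneg_left hsum hc0.le]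
    have hcA : c * (η + 1) ^ 2 * A n = (α - β) * η * A n := by rw [hcη]
    refine le_of_mul_le_mul_left ?_ hη
    nlinarith [mul_le_mul_of_nonneg_left hBη hη.le]

theorem not_eventually_comparable (hA : ∀ n, 0 ≤ A n) (hB : ∀ n, 0 ≤ B n)
    (hβ : 0 ≤ β) (hβα : β < α)
    (hlow : ∀ c > 0, ∀ᶠ n in atTop, α * A n - c * (A n + B n) ≤ A (n + 1))
    (hup : ∀ c > 0, ∀ᶠ n in atTop, B (n + 1) ≤ β * B n + c * (A n + B n))
    {K : ℝ} (hK : 0 < K) :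
    ¬ ∀ᶠ n in atTop, A n < K * B n ∧ B n ≤ K * A n := by
  intro hcomp
  set ε := (α - β) / 3 with hε
  have hε0 : 0 < ε := div_pos (sub_pos.2 hβα) three_pos
  set c := ε / (1 + K) with hc
  have hcK : c * (1 + K) = ε := by rw [hc]; field_simp
  have hc0 : 0 < c := by positivity
  have hpos : ∀ᶠ n in atTop, 0 < A n := by
    filter_upwards [hcomp] with n hn
    have hBn : 0 < B n := pos_of_mul_pos_right ((hA n).trans_lt hn.1) hK.le
    exact pos_of_mul_pos_right (hBn.trans_le hn.2) hK.le
  have hratio : ∀ᶠ n in atTop, ‖B (n + 1) / A (n + 1)‖ ≤ (β + ε) / (α - ε) * ‖B n / A n‖ := by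
    filter_upwards [hcomp, hlow c hc0, hup c hc0, hpos] with n hn hAn hBn hpos
    have hsumA : c * (A n + B n) ≤ ε * A n := by rw [← hcK]; nlinarith
    have hsumB : c * (A n + B n) ≤ ε * B n := by rw [← hcK]; nlinarith
    rw [Real.norm_of_nonneg (div_nonneg (hB _) (hA _)),
      Real.norm_of_nonneg (div_nonneg (hB _) (hA _)), div_mul_div_comm]
    exact div_le_div₀ (mul_nonneg (by linarith) (hB n)) (by linarith)
      (mul_pos (by linarith) hpos) (by linarith)
  have hlt : (β + ε) / (α - ε) < 1 := by rw [div_lt_one] <;> linarith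
  have hlim : Tendsto (fun n => B n / A n) atTop (𝓝 0) :=
    (summable_of_ratio_norm_eventually_le hlt hratio).tendsto_atTop_zero
  obtain ⟨n, hn, hn', hpos⟩ :=
    ((hlim.eventually_lt_const (inv_pos.2 hK)).and (hcomp.and hpos)).exists
  rw [div_lt_iff₀ hpos, inv_mul_eq_div, lt_div_iff₀ hK] at hn
  linarith

theorem isLittleO_or_isLittleO_of_gap (hA : ∀ n, 0 ≤ A n) (hB : ∀ n, 0 ≤ B n)
    (hβ : 0 ≤ β) (hβα : β < α)
    (hlow : ∀ c > 0, ∀ᶠ n in atTop, α * A n - c * (A n + B n) ≤ A (n + 1))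
    (hup : ∀ c > 0, ∀ᶠ n in atTop, B (n + 1) ≤ β * B n + c * (A n + B n)) :
    A =o[atTop] B ∨ B =o[atTop] A := by
  simp only [isLittleO_iff, Real.norm_of_nonneg (hA _), Real.norm_of_nonneg (hB _)]
  by_contra! h
  obtain ⟨⟨η, hη, hAη⟩, ⟨θ, hθ, hBθ⟩⟩ := h
  have hcone : ∀ᶠ n in atTop, η * B n ≤ A n :=
    eventually_mul_le_of_frequently_mul_le hβ hβα hlow hup hη (hAη.mono fun _ => le_of_lt)
  have hcone' : ∀ᶠ n in atTop, A n < θ⁻¹ * B n := by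
    by_contra hfreq
    have hBA := eventually_mul_le_of_frequently_mul_le hβ hβα hlow hup (inv_pos.2 hθ)
      ((not_eventually.1 hfreq).mono fun _ => not_lt.1)
    obtain ⟨n, hn, hn'⟩ := (hBθ.and_eventually hBA).exists
    rw [inv_mul_eq_div, div_le_iff₀' hθ] at hn'
    linarith
  refine not_eventually_comparable hA hB hβ hβα hlow hup
    (K := θ⁻¹ + η⁻¹) (by positivity) ?_
  filter_upwards [hcone, hcone'] with n hn hn'
  have hBA : B n ≤ η⁻¹ * A n := by rwa [inv_mul_eq_div, le_div_iff₀' hη]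
  have := mul_nonneg (inv_pos.2 hθ).le (hA n)
  have := mul_nonneg (inv_pos.2 hη).le (hB n)
  constructor <;> linarith

end Dichotomy

theorem add_isLittleO_of_isLittleO_add {u v w : ℕ → ℝ} (hu0 : ∀ n, 0 ≤ u n) (hv0 : ∀ n, 0 ≤ v n)
    (hw0 : ∀ n, 0 ≤ w n) (hu : u =o[atTop] (w + v)) (hv : v =o[atTop] (w + u)) :
    (u + v) =o[atTop] w := by
  have hsum : (u + v) =o[atTop] (w + (u + v)) := by
    refine .add (hu.trans_isBigO (.of_bound' (.of_forall fun n => ?_)))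
      (hv.trans_isBigO (.of_bound' (.of_forall fun n => ?_))) <;>
    · have := hu0 n; have := hv0 n; have := hw0 n
      simp only [Pi.add_apply]
      rw [Real.norm_of_nonneg (by positivity), Real.norm_of_nonneg (by positivity)]
      linarith
  simpa using hsum.trans_isBigO hsum.right_isBigO_sub

section PerturbedDiagonalSystem

variable {ι 𝕜 : Type*} [Fintype ι] [NormedField 𝕜] {x : ℕ → ι → 𝕜} {μ : ι → 𝕜}

theorem eventually_sum_norm_sub_le (hx : (fun n => x (n + 1) - μ * x n) =o[atTop] x)
    (s : Finset ι) {c : ℝ} (hc : 0 < c) :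
    ∀ᶠ n in atTop, ∑ i ∈ s, ‖x (n + 1) i - μ i * x n i‖ ≤ c * ∑ i, ‖x n i‖ := by
  filter_upwards [hx.def (show 0 < c / (#s + 1) by positivity)] with n hn
  have hnorm : ‖x n‖ ≤ ∑ i, ‖x n i‖ := by
    rw [pi_norm_le_iff_of_nonneg (sum_nonneg fun i _ => norm_nonneg _)]
    exact fun i => single_le_sum (f := fun i => ‖x n i‖) (fun j _ => norm_nonneg _) (mem_univ i)
  calc ∑ i ∈ s, ‖x (n + 1) i - μ i * x n i‖
      ≤ #s • (c / (#s + 1) * ‖x n‖) :=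
        sum_le_card_nsmul _ _ _ fun i _ => (norm_le_pi_norm _ i).trans hn
    _ = #s / (#s + 1) * c * ‖x n‖ := by rw [nsmul_eq_mul]; ring
    _ ≤ 1 * c * ∑ i, ‖x n i‖ := by
        gcongr
        exact (div_le_one (by positivity)).2 (by linarith)
    _ = c * ∑ i, ‖x n i‖ := by rw [one_mul]

theorem isLittleO_sum_or_isLittleO_sum_compl [DecidableEq ι]
    (hx : (fun n => x (n + 1) - μ * x n) =o[atTop] x)
    {s : Finset ι} (hs : ∀ i ∈ s, ∀ j ∉ s, ‖μ i‖ < ‖μ j‖) :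
    ((fun n => ∑ i ∈ s, ‖x n i‖) =o[atTop] fun n => ∑ i ∈ sᶜ, ‖x n i‖) ∨
      (fun n => ∑ i ∈ sᶜ, ‖x n i‖) =o[atTop] fun n => ∑ i ∈ s, ‖x n i‖ := by
  rcases s.eq_empty_or_nonempty with rfl | hne
  · left; simpa only [sum_empty] using isLittleO_zero _ _
  rcases sᶜ.eq_empty_or_nonempty with hc | hne'
  · right; simpa only [hc, sum_empty] using isLittleO_zero _ _
  obtain ⟨i₀, hi₀, hi₀max⟩ := exists_max_image s (‖μ ·‖) hne
  obtain ⟨j₀, hj₀, hj₀min⟩ := exists_min_image sᶜ (‖μ ·‖) hne'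
  have hsplit n : ∑ i ∈ sᶜ, ‖x n i‖ + ∑ i ∈ s, ‖x n i‖ = ∑ i, ‖x n i‖ := by
    rw [add_comm, sum_add_sum_compl]
  refine (isLittleO_or_isLittleO_of_gap (fun n => sum_nonneg fun i _ => norm_nonneg _)
    (fun n => sum_nonneg fun i _ => norm_nonneg _) (norm_nonneg (μ i₀))
    (hs i₀ hi₀ j₀ (mem_compl.1 hj₀)) (fun c hc => ?_) fun c hc => ?_).symm
  · filter_upwards [eventually_sum_norm_sub_le hx sᶜ hc] with n hn
    rw [hsplit, sub_le_iff_le_add']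
    refine le_trans ?_ (add_le_add hn le_rfl)
    rw [mul_sum, ← sum_add_distrib]
    refine sum_le_sum fun i hi => ?_
    calc ‖μ j₀‖ * ‖x n i‖ ≤ ‖μ i * x n i‖ := by
          rw [norm_mul]; gcongr; exact hj₀min i hi
      _ ≤ ‖x (n + 1) i - μ i * x n i‖ + ‖x (n + 1) i‖ := by
          rw [norm_sub_rev]; exact norm_le_norm_sub_add _ _
  · filter_upwards [eventually_sum_norm_sub_le hx s hc] with n hn
    rw [hsplit]
    refine le_trans ?_ (add_le_add le_rfl hn)
    rw [mul_sum, ← sum_add_distrib]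
    refine sum_le_sum fun i hi => ?_
    calc ‖x (n + 1) i‖ ≤ ‖μ i * x n i‖ + ‖x (n + 1) i - μ i * x n i‖ :=
          norm_le_norm_add_norm_sub' _ _
      _ ≤ ‖μ i₀‖ * ‖x n i‖ + ‖x (n + 1) i - μ i * x n i‖ := by
          rw [norm_mul]; gcongr; exact hi₀max i hi

theorem exists_sum_lt_isLittleO_and_sum_gt_isLittleO [LinearOrder ι]
    (hx : (fun n => x (n + 1) - μ * x n) =o[atTop] x)
    (hμ : StrictMono (‖μ ·‖)) (hx0 : ∃ᶠ n in atTop, x n ≠ 0) :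
    ∃ i, ((fun n => ∑ j with j < i, ‖x n j‖) =o[atTop] fun n => ∑ j with i ≤ j, ‖x n j‖) ∧
      (fun n => ∑ j with i < j, ‖x n j‖) =o[atTop] fun n => ∑ j with j ≤ i, ‖x n j‖ := by
  let P (i : ι) : Prop :=
    (fun n => ∑ j with j ≤ i, ‖x n j‖) =o[atTop] fun n => ∑ j with i < j, ‖x n j‖
  have hι : (univ : Finset ι).Nonempty := by
    obtain ⟨n, hn⟩ := hx0.exists
    exact (Function.ne_iff.1 hn).imp fun i _ => mem_univ i
  have htop : ¬ P (univ.max' hι) := by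
    intro h
    have hle (j : ι) : j ≤ univ.max' hι := le_max' _ j (mem_univ j)
    simp only [P, hle, (hle _).not_gt, filter_true, filter_false, sum_empty] at h
    obtain ⟨n, hn, hn'⟩ := (hx0.and_eventually (isLittleO_zero_right_iff.1 h)).exists
    refine hn (funext fun i => norm_eq_zero.1 ?_)
    exact (sum_eq_zero_iff_of_nonneg fun i _ => norm_nonneg _).1 hn' i (mem_univ i)
  obtain ⟨i, hi, hmin⟩ := wellFounded_lt.has_min {i | ¬ P i} ⟨_, htop⟩
  refine ⟨i, ?_, ?_⟩
  · rcases ({j | j < i} : Finset ι).eq_empty_or_nonempty with hempty | hne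
    · simpa only [hempty, sum_empty] using isLittleO_zero _ _
    · have hlt (j : ι) : j < i ↔ j ≤ max' _ hne :=
        ⟨fun h => le_max' _ j (by simp [h]),
          fun h => h.trans_lt (by simpa only [mem_filter_univ] using max'_mem _ hne)⟩
      have hP : P (max' _ hne) := not_not.1 fun h => hmin _ h ((hlt _).2 le_rfl)
      simpa only [P, ← hlt, ← not_lt (a := max' _ hne), ← not_le (b := max' _ hne), not_lt] using hP
  · have hgap : ∀ j ∈ ({j | j ≤ i} : Finset ι), ∀ l ∉ ({j | j ≤ i} : Finset ι), ‖μ j‖ < ‖μ l‖ := by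
      simp only [mem_filter_univ, not_le]
      exact fun j hj l hl => hμ (hj.trans_lt hl)
    have := isLittleO_sum_or_isLittleO_sum_compl hx hgap
    simp only [compl_filter, not_le] at this
    exact this.resolve_left hi

theorem exists_forall_ne_isLittleO [LinearOrder ι]
    (hx : (fun n => x (n + 1) - μ * x n) =o[atTop] x)
    (hμ : StrictMono (‖μ ·‖)) (hx0 : ∃ᶠ n in atTop, x n ≠ 0) :
    ∃ i, ∀ j ≠ i, (x · j) =o[atTop] (x · i) := by
  obtain ⟨i, hlt, hgt⟩ := exists_sum_lt_isLittleO_and_sum_gt_isLittleO hx hμ hx0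
  have hle n : ∑ j with j ≤ i, ‖x n j‖ = ‖x n i‖ + ∑ j with j < i, ‖x n j‖ := by
    rw [← sum_insert (f := fun j => ‖x n j‖) (by simp)]
    congr 1; ext j; simp [le_iff_eq_or_lt]
  have hge n : ∑ j with i ≤ j, ‖x n j‖ = ‖x n i‖ + ∑ j with i < j, ‖x n j‖ := by
    rw [← sum_insert (f := fun j => ‖x n j‖) (by simp)]
    congr 1; ext j; simp [le_iff_eq_or_lt, eq_comm]
  simp only [hle, hge] at hlt hgt
  have hsum := add_isLittleO_of_isLittleO_add (fun n => sum_nonneg fun j _ => norm_nonneg _)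
    (fun n => sum_nonneg fun j _ => norm_nonneg _) (fun n => norm_nonneg (x n i)) hlt hgt
  refine ⟨i, fun j hj => (IsBigO.trans_isLittleO (.of_bound' (.of_forall fun n => ?_))
    hsum).of_norm_right⟩
  have hmem (s : Finset ι) (hjs : j ∈ s) : ‖x n j‖ ≤ ∑ l ∈ s, ‖x n l‖ :=
    single_le_sum (f := fun l => ‖x n l‖) (fun l _ => norm_nonneg _) hjs
  refine le_trans ?_ (Real.le_norm_self _)
  rcases hj.lt_or_gt with h | h
  · exact (hmem _ (by simpa)).trans
      (le_add_of_nonneg_right (sum_nonneg fun l _ => norm_nonneg _))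
  · exact (hmem _ (by simpa)).trans
      (le_add_of_nonneg_left (sum_nonneg fun l _ => norm_nonneg _))

theorem eventually_ne_zero_of_isLittleO {z : ℕ → 𝕜} {m : 𝕜}
    (hz : (fun n => z (n + 1) - m * z n) =o[atTop] z) (hz0 : ∃ᶠ n in atTop, z n ≠ 0) :
    ∀ᶠ n in atTop, z n ≠ 0 := by
  obtain ⟨N, hN⟩ := eventually_atTop.1 (hz.def one_pos)
  refine eventually_atTop.2 ⟨N, fun M hM hzM => ?_⟩
  obtain ⟨n, hn, hzn⟩ := frequently_atTop.1 hz0 M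
  refine hzn ?_
  clear hzn
  induction n, hn using Nat.le_induction with
  | base => exact hzM
  | succ n hn ih => simpa [ih] using hN n (hM.trans hn)

theorem exists_dominant_coord [LinearOrder ι]
    (hx : (fun n => x (n + 1) - μ * x n) =o[atTop] x)
    (hμ : StrictMono (‖μ ·‖)) (hx0 : ∃ᶠ n in atTop, x n ≠ 0) :
    ∃ i, (∀ j ≠ i, (x · j) =o[atTop] (x · i)) ∧
      Tendsto (fun n => x (n + 1) i / x n i) atTop (𝓝 (μ i)) := by
  obtain ⟨i, hi⟩ := exists_forall_ne_isLittleO hx hμ hx0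
  have hxi : x =O[atTop] (x · i) := by
    refine isBigO_pi.2 fun j => ?_
    rcases eq_or_ne j i with rfl | hj
    exacts [isBigO_refl _ _, (hi j hj).isBigO]
  have hstep : (fun n => x (n + 1) i - μ i * x n i) =o[atTop] (x · i) :=
    (isLittleO_pi.1 hx i).trans_isBigO hxi
  have hne : ∀ᶠ n in atTop, x n i ≠ 0 := by
    refine eventually_ne_zero_of_isLittleO hstep fun h => ?_
    simp only [not_not] at h
    obtain ⟨n, hn, hn'⟩ := (hx0.and_eventually
      (isBigO_zero_right_iff.1 (hxi.congr' .rfl h))).exists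
    exact hn hn'
  refine ⟨i, hi, ?_⟩
  have hlim := hstep.tendsto_div_nhds_zero.add_const (μ i)
  rw [zero_add] at hlim
  refine hlim.congr' ?_
  filter_upwards [hne] with n hn
  field_simp
  ring

end PerturbedDiagonalSystem

section Poincare

variable {𝕜 : Type*} [NormedField 𝕜] {d : ℕ}

theorem isBigO_mulVec {ι κ : Type*} [Fintype ι] [Fintype κ] (A : Matrix ι κ 𝕜)
    (f : ℕ → κ → 𝕜) : (fun n => A *ᵥ f n) =O[atTop] f :=
  isBigO_pi.2 fun i => .fun_sum fun j _ =>
    (isBigO_pi.1 (isBigO_refl f atTop) j).const_mul_left (A i j)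

variable {a : Fin d → ℕ → 𝕜} {α μ : Fin d → 𝕜} {y : ℕ → 𝕜} {x : ℕ → Fin d → 𝕜}

/-- The Vandermonde matrix diagonalizes the companion matrix of the limiting recurrence. -/
theorem isLittleO_sub_mul_of_vandermonde (ha : ∀ k, Tendsto (a k) atTop (𝓝 (α k)))
    (hy : ∀ n, y (n + d) = ∑ k, a k n * y (n + k))
    (hroot : ∀ i, μ i ^ d = ∑ k : Fin d, α k * μ i ^ (k : ℕ)) (hμ : Function.Injective μ)
    (hx : ∀ n (k : Fin d), ((vandermonde μ)ᵀ *ᵥ x n) k = y (n + k)) :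
    (fun n => x (n + 1) - μ * x n) =o[atTop] x := by
  set U := (vandermonde μ)ᵀ
  have hU : IsUnit U.det := by
    rw [det_transpose]
    exact (det_vandermonde_ne_zero_iff.2 hμ).isUnit
  have hUμ n (k : Fin d) : (U *ᵥ (μ * x n)) k = ∑ i, μ i ^ ((k : ℕ) + 1) * x n i := by
    simp only [U, mulVec, dotProduct, transpose_apply, vandermonde_apply, Pi.mul_apply, pow_succ,
      mul_assoc]
  have hUx n (k : Fin d) : y (n + k) = ∑ i, μ i ^ (k : ℕ) * x n i := by
    rw [← hx]; rfl
  have hyO (k : Fin d) : (fun n => y (n + k)) =O[atTop] x := by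
    simp only [← hx]
    exact isBigO_pi.1 (isBigO_mulVec U x) k
  have hremainder (k : Fin d) : (fun n => (U *ᵥ (x (n + 1) - μ * x n)) k) =o[atTop] x := by
    simp only [mulVec_sub, Pi.sub_apply, hx, hUμ]
    obtain hk | hk : (k : ℕ) + 1 < d ∨ (k : ℕ) + 1 = d := by omega
    · have hzero n : y (n + 1 + k) - ∑ i, μ i ^ ((k : ℕ) + 1) * x n i = 0 := by
        rw [← hUx n ⟨k + 1, hk⟩, sub_eq_zero]; congr 1; simp only []; ring
      simp only [hzero, isLittleO_zero]
    · have herr n : y (n + 1 + k) - ∑ i, μ i ^ ((k : ℕ) + 1) * x n i =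
          ∑ l, (a l n - α l) * y (n + l) := by
        have hα : ∑ i, μ i ^ d * x n i = ∑ l, α l * y (n + l) := by
          simp only [hroot, hUx n, sum_mul, mul_sum, mul_assoc]
          rw [sum_comm]
        rw [hk, hα, show n + 1 + k = n + d by omega, hy]
        simp only [sub_mul, sum_sub_distrib]
      simp only [herr]
      refine .fun_sum fun l _ => ?_
      have hl : (fun n => a l n - α l) =o[atTop] fun _ => (1 : 𝕜) :=
        (isLittleO_one_iff _).2 (by simpa using (ha l).sub_const (α l))
      simpa only [norm_one, one_mul, isLittleO_norm_right] using
        hl.norm_right.mul_isBigO (hyO l).norm_right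
  have := (isBigO_mulVec U⁻¹ fun n => U *ᵥ (x (n + 1) - μ * x n)).trans_isLittleO
    (isLittleO_pi.2 hremainder)
  simpa only [mulVec_mulVec, nonsing_inv_mul _ hU, one_mulVec] using this

theorem poincare_exists_tendsto_ratio (ha : ∀ k, Tendsto (a k) atTop (𝓝 (α k)))
    (hy : ∀ n, y (n + d) = ∑ k, a k n * y (n + k))
    (hroot : ∀ i, μ i ^ d = ∑ k : Fin d, α k * μ i ^ (k : ℕ)) (hμ : StrictMono (‖μ ·‖))
    (hy0 : ∃ᶠ n in atTop, y n ≠ 0) :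
    ∃ i, Tendsto (fun n => y (n + 1) / y n) atTop (𝓝 (μ i)) := by
  have hμinj : Function.Injective μ := fun i j h => hμ.injective (congrArg norm h)
  have hU : IsUnit (vandermonde μ)ᵀ.det := by
    rw [det_transpose]
    exact (det_vandermonde_ne_zero_iff.2 hμinj).isUnit
  set x : ℕ → Fin d → 𝕜 := fun n => (vandermonde μ)ᵀ⁻¹ *ᵥ fun k => y (n + k)
  have hx n (k : Fin d) : ((vandermonde μ)ᵀ *ᵥ x n) k = y (n + k) := by
    rw [mulVec_mulVec, mul_nonsing_inv _ hU, one_mulVec]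
  have hd : d ≠ 0 := by
    rintro rfl
    obtain ⟨n, hn⟩ := hy0.exists
    exact hn (by simpa using hy n)
  have hxy n : y n = ∑ i, x n i := by
    simpa [mulVec, dotProduct] using (hx n ⟨0, Nat.pos_of_ne_zero hd⟩).symm
  have hx0 : ∃ᶠ n in atTop, x n ≠ 0 := hy0.mono fun n hn h => hn (by simp [hxy, h])
  obtain ⟨i, hsmall, hratio⟩ := exists_dominant_coord
    (isLittleO_sub_mul_of_vandermonde ha hy hroot hμinj hx) hμ hx0
  have hyx : y ~[atTop] (x · i) := by
    have : (fun n => ∑ j ∈ univ.erase i, x n j) =o[atTop] (x · i) :=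
      .fun_sum fun j hj => hsmall j (ne_of_mem_erase hj)
    refine this.congr_left fun n => ?_
    rw [Pi.sub_apply, hxy, ← add_sum_erase univ _ (mem_univ i), add_sub_cancel_left]
  exact ⟨i, ((hyx.comp_tendsto (tendsto_add_atTop_nat 1)).div hyx).tendsto_nhds_iff.2 hratio⟩

end Poincare

/-! ### Recurrences and limiting ratios -/

section RatioLimit

variable {y : ℕ → ℝ} {m : ℝ}

theorem eventually_ne_zero_of_tendsto_ratio (hm : m ≠ 0)
    (hy : Tendsto (fun n => y (n + 1) / y n) atTop (𝓝 m)) : ∀ᶠ n in atTop, y n ≠ 0 :=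
  (hy.eventually_ne hm).mono fun n hn h => hn (by rw [h, div_zero])

theorem tendsto_log_abs_div_of_tendsto_ratio (hm : m ≠ 0)
    (hy : Tendsto (fun n => y (n + 1) / y n) atTop (𝓝 m)) :
    Tendsto (fun n : ℕ => Real.log |y n| / n) atTop (𝓝 (Real.log |m|)) := by
  have hne := eventually_ne_zero_of_tendsto_ratio hm hy
  have hdiff : Tendsto (fun n => Real.log |y (n + 1)| - Real.log |y n|) atTop
      (𝓝 (Real.log |m|)) := by
    refine (hy.abs.log (abs_ne_zero.2 hm)).congr' ?_
    filter_upwards [hne, (tendsto_add_atTop_nat 1).eventually hne] with n hn hn'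
    rw [abs_div, Real.log_div (abs_ne_zero.2 hn') (abs_ne_zero.2 hn)]
  have hsum := hdiff.cesaro.add (tendsto_const_div_atTop_nhds_zero_nat (Real.log |y 0|))
  rw [add_zero] at hsum
  refine hsum.congr fun n => ?_
  rw [sum_range_sub (fun i => Real.log |y i|)]
  ring

theorem abs_le_of_tendsto_ratio_of_isBigO_pow {r : ℝ} (hr : 0 ≤ r)
    (hy : Tendsto (fun n => y (n + 1) / y n) atTop (𝓝 m)) (hO : y =O[atTop] (r ^ ·)) :
    |m| ≤ r := by
  by_contra! hrm
  obtain ⟨s, hrs, hsm⟩ := exists_between hrm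
  have hs : 0 < s := hr.trans_lt hrs
  have hsummable : Summable fun n => y n / s ^ n := by
    refine summable_of_isBigO_nat (summable_geometric_of_lt_one (by positivity)
      ((div_lt_one hs).2 hrs)) ?_
    simpa only [div_eq_mul_inv, mul_pow, inv_pow] using
      hO.mul (isBigO_refl (fun n : ℕ => (s ^ n)⁻¹) atTop)
  refine not_summable_of_ratio_test_tendsto_gt_one ((one_lt_div hs).2 hsm) ?_ hsummable
  refine (hy.abs.div_const s).congr fun n => ?_
  rw [Real.norm_eq_abs, Real.norm_eq_abs, abs_div, abs_div, abs_div, abs_of_pos (pow_pos hs n),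
    abs_of_pos (pow_pos hs (n + 1)), pow_succ]
  field_simp

theorem tendsto_div_and_log_abs_sub_div {P Q : ℕ → ℝ} {z ν : ℝ} (hm : m ≠ 0) (hmν : |m| < |ν|)
    (hQ : Tendsto (fun n => Q (n + 1) / Q n) atTop (𝓝 ν))
    (hL : Tendsto (fun n => (Q (n + 1) * z - P (n + 1)) / (Q n * z - P n)) atTop (𝓝 m)) :
    Tendsto (fun n => P n / Q n) atTop (𝓝 z) ∧
      Tendsto (fun n : ℕ => Real.log |z - P n / Q n| / n) atTop (𝓝 (Real.log |m / ν|)) := by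
  have hν : ν ≠ 0 := abs_pos.1 ((abs_nonneg m).trans_lt hmν)
  have herr : ∀ᶠ n in atTop, (Q n * z - P n) / Q n = z - P n / Q n := by
    filter_upwards [eventually_ne_zero_of_tendsto_ratio hν hQ] with n hn
    field_simp
  have hratio : Tendsto (fun n => (z - P (n + 1) / Q (n + 1)) / (z - P n / Q n)) atTop
      (𝓝 (m / ν)) := by
    refine (hL.div hQ hν).congr' ?_
    filter_upwards [herr, (tendsto_add_atTop_nat 1).eventually herr] with n hn hn'
    rw [Pi.div_apply, ← hn, ← hn', div_div_div_comm]
  have hmν0 : m / ν ≠ 0 := div_ne_zero hm hν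
  refine ⟨?_, tendsto_log_abs_div_of_tendsto_ratio hmν0 hratio⟩
  have hsummable : Summable fun n => z - P n / Q n := by
    refine summable_of_ratio_test_tendsto_lt_one (l := |m / ν|)
      (by rwa [abs_div, div_lt_one (abs_pos.2 hν)])
      (eventually_ne_zero_of_tendsto_ratio (y := fun n => z - P n / Q n) hmν0 hratio) ?_
    simpa only [Real.norm_eq_abs, abs_div] using hratio.abs
  simpa using hsummable.tendsto_atTop_zero.const_sub z

end RatioLimit

section SignedRecurrence

variable {α β γ δ u : ℕ → ℝ} {κ : ℝ}

theorem mul_abs_le_abs_succ_of_recurrence (hκ : 0 < κ) (hα : ∀ n, 0 < α n) (hγ : ∀ n, 0 ≤ γ n)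
    (hδ : ∀ n, 0 ≤ δ n) (hdom : ∀ n, κ ^ 3 * α n + κ * γ n + δ n ≤ κ ^ 2 * β n)
    (hu : ∀ n, α n * u (n + 3) + β n * u (n + 2) - γ n * u (n + 1) - δ n * u n = 0)
    (h0 : κ * |u 0| ≤ |u 1|) (h1 : κ * |u 1| ≤ |u 2|) (n : ℕ) :
    κ * |u n| ≤ |u (n + 1)| := by
  suffices κ * |u n| ≤ |u (n + 1)| ∧ κ * |u (n + 1)| ≤ |u (n + 2)| from this.1
  induction n with
  | zero => exact ⟨h0, h1⟩
  | succ n ih =>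
    obtain ⟨ih0, ih1⟩ := ih
    refine ⟨ih1, ?_⟩
    have htriangle : β n * |u (n + 2)| ≤ α n * |u (n + 3)| + γ n * |u (n + 1)| + δ n * |u n| :=
      calc β n * |u (n + 2)| ≤ |β n * u (n + 2)| := by rw [abs_mul]; gcongr; exact le_abs_self _
        _ = |-(α n * u (n + 3)) + γ n * u (n + 1) + δ n * u n| := by congr 1; linarith [hu n]
        _ ≤ |-(α n * u (n + 3))| + |γ n * u (n + 1)| + |δ n * u n| := abs_add_three _ _ _
        _ = α n * |u (n + 3)| + γ n * |u (n + 1)| + δ n * |u n| := by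
          rw [abs_neg, abs_mul, abs_mul, abs_mul, abs_of_pos (hα n), abs_of_nonneg (hγ n),
            abs_of_nonneg (hδ n)]
    have hγ' : κ * γ n * (κ * |u (n + 1)|) ≤ κ * γ n * |u (n + 2)| :=
      mul_le_mul_of_nonneg_left ih1 (mul_nonneg hκ.le (hγ n))
    have hδ' : δ n * (κ * (κ * |u n|)) ≤ δ n * |u (n + 2)| :=
      mul_le_mul_of_nonneg_left ((mul_le_mul_of_nonneg_left ih0 hκ.le).trans ih1) (hδ n)
    have hdom' := mul_le_mul_of_nonneg_right (hdom n) (abs_nonneg (u (n + 2)))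
    have hκα : 0 < κ ^ 2 * α n := mul_pos (pow_pos hκ 2) (hα n)
    refine le_of_mul_le_mul_left (a := κ ^ 2 * α n) ?_ hκα
    linarith [mul_le_mul_of_nonneg_left htriangle (pow_pos hκ 2).le]

theorem mul_abs_le_abs_of_cone {a b : ℝ} (h : κ * b ^ 2 + a * b ≤ 0) : κ * |b| ≤ |a| := by
  rcases eq_or_ne b 0 with rfl | hb
  · simp
  · refine le_of_mul_le_mul_right ?_ (abs_pos.2 hb)
    calc κ * |b| * |b| = κ * b ^ 2 := by rw [mul_assoc, ← sq, sq_abs]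
      _ ≤ -(a * b) := by linarith
      _ ≤ |a| * |b| := by rw [← abs_mul]; exact neg_le_abs _

/-- The cone condition confines the ratio of consecutive terms to `[-κ⁻¹, 0]`; it is the backward
recurrence that preserves it. -/
theorem cone_of_cone_succ (hκ : 0 < κ) (hα : ∀ n, 0 ≤ α n) (hβ : ∀ n, 0 ≤ β n)
    (hδ : ∀ n, 0 < δ n) (hdom : ∀ n, κ ^ 3 * δ n + α n ≤ κ ^ 2 * γ n)
    (hu : ∀ n, α n * u (n + 3) + β n * u (n + 2) - γ n * u (n + 1) - δ n * u n = 0) {n : ℕ}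
    (h1 : κ * u (n + 2) ^ 2 + u (n + 1) * u (n + 2) ≤ 0)
    (h2 : κ * u (n + 3) ^ 2 + u (n + 2) * u (n + 3) ≤ 0) :
    κ * u (n + 1) ^ 2 + u n * u (n + 1) ≤ 0 := by
  have hsign : u (n + 1) * u (n + 2) ≤ 0 := by
    linarith [mul_nonneg hκ.le (sq_nonneg (u (n + 2)))]
  have hsmall : κ ^ 2 * (u (n + 1) * u (n + 3)) ≤ u (n + 1) ^ 2 :=
    calc κ ^ 2 * (u (n + 1) * u (n + 3)) ≤ κ ^ 2 * (|u (n + 1)| * |u (n + 3)|) := by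
          rw [← abs_mul]; gcongr; exact le_abs_self _
      _ = |u (n + 1)| * (κ * (κ * |u (n + 3)|)) := by ring
      _ ≤ |u (n + 1)| * |u (n + 1)| := by
          gcongr
          exact (mul_le_mul_of_nonneg_left (mul_abs_le_abs_of_cone h2) hκ.le).trans
            (mul_abs_le_abs_of_cone h1)
      _ = u (n + 1) ^ 2 := by rw [← sq, sq_abs]
  have hmul : κ ^ 2 * δ n * (κ * u (n + 1) ^ 2 + u n * u (n + 1)) =
      κ ^ 3 * δ n * u (n + 1) ^ 2 + α n * (κ ^ 2 * (u (n + 1) * u (n + 3)))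
        + κ ^ 2 * β n * (u (n + 1) * u (n + 2)) - κ ^ 2 * γ n * u (n + 1) ^ 2 := by
    linear_combination -κ ^ 2 * u (n + 1) * hu n
  refine nonpos_of_mul_nonpos_right ?_ (mul_pos (pow_pos hκ 2) (hδ n))
  rw [hmul]
  have hβ' := mul_nonpos_of_nonneg_of_nonpos (mul_nonneg (sq_nonneg κ) (hβ n)) hsign
  linarith [mul_le_mul_of_nonneg_left hsmall (hα n),
    mul_le_mul_of_nonneg_right (hdom n) (sq_nonneg (u (n + 1)))]

theorem cone_zero_of_tendsto_ratio {m : ℝ} (hκ : 0 < κ) (hα : ∀ n, 0 ≤ α n) (hβ : ∀ n, 0 ≤ β n)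
    (hδ : ∀ n, 0 < δ n) (hdom : ∀ n, κ ^ 3 * δ n + α n ≤ κ ^ 2 * γ n)
    (hu : ∀ n, α n * u (n + 3) + β n * u (n + 2) - γ n * u (n + 1) - δ n * u n = 0)
    (hm : m < 0) (hm' : -κ⁻¹ < m) (hlim : Tendsto (fun n => u (n + 1) / u n) atTop (𝓝 m)) :
    κ * u 1 ^ 2 + u 0 * u 1 ≤ 0 := by
  have hcone : ∀ᶠ n in atTop, κ * u (n + 1) ^ 2 + u n * u (n + 1) ≤ 0 := by
    filter_upwards [hlim.eventually_lt_const hm, hlim.eventually_const_lt hm',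
      eventually_ne_zero_of_tendsto_ratio hm.ne hlim] with n hneg hgt hn
    have hratio : 0 ≤ κ * (u (n + 1) / u n) + 1 := by
      have := mul_le_mul_of_nonneg_left hgt.le hκ.le
      rw [mul_neg, mul_inv_cancel₀ hκ.ne'] at this
      linarith
    have heq : κ * u (n + 1) ^ 2 + u n * u (n + 1) =
        u n ^ 2 * ((u (n + 1) / u n) * (κ * (u (n + 1) / u n) + 1)) := by field_simp
    rw [heq]
    exact mul_nonpos_of_nonneg_of_nonpos (sq_nonneg _)
      (mul_nonpos_of_nonpos_of_nonneg hneg.le hratio)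
  obtain ⟨N, hN⟩ := eventually_atTop.1 hcone
  suffices ∀ n, (κ * u (n + 1) ^ 2 + u n * u (n + 1) ≤ 0 ∧
      κ * u (n + 2) ^ 2 + u (n + 1) * u (n + 2) ≤ 0) → κ * u 1 ^ 2 + u 0 * u 1 ≤ 0 from
    this N ⟨hN N le_rfl, hN (N + 1) N.le_succ⟩
  intro n
  induction n with
  | zero => exact And.left
  | succ n ih => exact fun h => ih ⟨cone_of_cone_succ hκ hα hβ hδ hdom hu h.1 h.2, h.1⟩

end SignedRecurrence

/-! ### The very-well-poised series -/

/-- The rational function `n!⁴ ∏_{j=1}^{n} (t - j) (t + n + j) / ∏_{j=0}^{n} (t + j)⁶` at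
`t = k + 1`, written with factorials; times `2 t + n` it is the summand of a very-well-poised
series. -/
def kernel (n k : ℕ) : ℝ :=
  (n.factorial : ℝ) ^ 4 * k.descFactorial n * (k + 1 + 2 * n).factorial * (k.factorial : ℝ) ^ 6 /
    ((k + 1 + n).factorial : ℝ) ^ 7

lemma kernel_nonneg (n k : ℕ) : 0 ≤ kernel n k := by
  unfold kernel
  positivity

lemma kernel_eq_zero_of_lt {n k : ℕ} (h : k < n) : kernel n k = 0 := by
  simp [kernel, Nat.descFactorial_of_lt h]

lemma cast_descFactorial_succ (k n : ℕ) :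
    (k.descFactorial (n + 1) : ℝ) = (k - n) * k.descFactorial n := by
  rcases le_or_gt n k with h | h
  · rw [Nat.descFactorial_succ, Nat.cast_mul, Nat.cast_sub h]
  · simp [Nat.descFactorial_of_lt h]

lemma kernel_succ_left (n k : ℕ) : kernel (n + 1) k =
    kernel n k *
      ((n + 1) ^ 4 * (k - n) * (k + 2 + 2 * n) * (k + 3 + 2 * n) / (k + 2 + n) ^ 7) := by
  unfold kernel
  rw [cast_descFactorial_succ, show k + 1 + 2 * (n + 1) = k + 1 + 2 * n + 1 + 1 by ring,
    ← add_assoc (k + 1) n 1]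
  simp only [Nat.factorial_succ]
  push_cast
  have hk : (k : ℝ) + 2 + n = k + 1 + n + 1 := by ring
  rw [hk]
  have : ((k + 1 + n).factorial : ℝ) ≠ 0 := by positivity
  have : (k : ℝ) + 1 + n + 1 ≠ 0 := by positivity
  field_simp
  ring

lemma kernel_succ_right (n k : ℕ) : (k + 1 - n) * kernel n (k + 1) =
    kernel n k * (k + 1) ^ 7 * (k + 2 + 2 * n) / (k + 2 + n) ^ 7 := by
  have hdesc : ((k : ℝ) + 1 - n) * (k + 1).descFactorial n = (k + 1) * k.descFactorial n := by
    have := cast_descFactorial_succ (k + 1) n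
    rw [Nat.succ_descFactorial_succ] at this
    push_cast at this
    exact this.symm
  unfold kernel
  rw [show k + 1 + 1 + 2 * n = k + 1 + 2 * n + 1 by ring,
    show k + 1 + 1 + n = k + 1 + n + 1 by ring]
  simp only [Nat.factorial_succ]
  push_cast
  have hk : (k : ℝ) + 2 + n = k + 1 + n + 1 := by ring
  rw [hk]
  have : ((k + 1 + n).factorial : ℝ) ≠ 0 := by positivity
  have : (k : ℝ) + 1 + n + 1 ≠ 0 := by positivity
  field_simp
  linear_combination (k + 1 + 2 * n + 1 : ℝ) * hdesc

lemma kernel_antitone (k : ℕ) : Antitone (kernel · k) := by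
  refine antitone_nat_of_succ_le fun n => ?_
  rcases le_or_gt k n with h | h
  · rw [kernel_eq_zero_of_lt (by lia)]
    exact kernel_nonneg n k
  rw [kernel_succ_left]
  refine mul_le_of_le_one_right (kernel_nonneg n k) (div_le_one_of_le₀ ?_ (by positivity))
  have hn : (n : ℝ) + 1 ≤ k := by exact_mod_cast h
  calc ((n : ℝ) + 1) ^ 4 * (k - n) * (k + 2 + 2 * n) * (k + 3 + 2 * n)
      ≤ (((k : ℝ) + 2 + n) / 2) ^ 4 * (k + 2 + n) * (2 * (k + 2 + n)) * (2 * (k + 2 + n)) := by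
        have : (0 : ℝ) ≤ k - n := by linarith
        gcongr <;> linarith
    _ = ((k : ℝ) + 2 + n) ^ 7 / 4 := by ring
    _ ≤ ((k : ℝ) + 2 + n) ^ 7 := div_le_self (by positivity) (by norm_num)

lemma kernel_one (k : ℕ) : kernel 1 k = k * (k + 3) / ((k + 1) ^ 6 * (k + 2) ^ 6) := by
  have hzero : kernel 0 k = 1 / ((k : ℝ) + 1) ^ 6 := by
    have : (k.factorial : ℝ) ≠ 0 := by positivity
    simp only [kernel, Nat.factorial_zero, Nat.descFactorial_zero, mul_zero, add_zero,
      Nat.factorial_succ]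
    push_cast
    field_simp
  have hstep := kernel_succ_left 0 k
  rw [hzero] at hstep
  rw [hstep]
  push_cast
  field_simp
  ring

lemma kernel_le {n : ℕ} (hn : 1 ≤ n) (k : ℕ) : kernel n k ≤ 1 / ((k : ℝ) + 1) ^ 10 := by
  refine (kernel_antitone k hn).trans ?_
  dsimp only
  rw [kernel_one, div_le_div_iff₀ (by positivity) (by positivity)]
  calc (k : ℝ) * (k + 3) * (k + 1) ^ 10
      ≤ ((k : ℝ) + 1) * (k + 2) * (k + 1) ^ 10 := by
        gcongr ?_ * _
        linarith
    _ = ((k : ℝ) + 1) ^ 6 * (k + 2) * (k + 1) ^ 5 := by ring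
    _ ≤ ((k : ℝ) + 1) ^ 6 * (k + 2) * (k + 2) ^ 5 := by
        gcongr
        norm_num
    _ = 1 * (((k : ℝ) + 1) ^ 6 * (k + 2) ^ 6) := by ring

lemma summable_one_div_add_one_sq : Summable fun k : ℕ => 1 / ((k : ℝ) + 1) ^ 2 := by
  simpa using (summable_nat_add_iff 1).2 (Real.summable_one_div_nat_pow.2 one_lt_two)

/-- The `k`-th terms of the three series attached to `kernel n`, for `n ≥ 1`: the well-poised
summand weighted by the powers `0, 1, 2` of `t (t + n) / n ^ 2`, where `t = k + 1`. Dividing by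
`n ^ 2` makes the three series grow at the same rate. -/
def wellPoisedTerm (n k : ℕ) : Fin 3 → ℝ := fun j =>
  (2 * (k + 1) + n) * ((k + 1) * (k + 1 + n) / n ^ 2) ^ (j : ℕ) * kernel n k

lemma norm_wellPoisedTerm_le {n : ℕ} (hn : 1 ≤ n) (k : ℕ) :
    ‖wellPoisedTerm n k‖ ≤ 12 * (1 / ((k : ℝ) + 1) ^ 2) := by
  refine (pi_norm_le_iff_of_nonneg (by positivity)).2 fun j => ?_
  have hnonneg : 0 ≤ wellPoisedTerm n k j := by
    have := kernel_nonneg n k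
    unfold wellPoisedTerm
    positivity
  rw [Real.norm_of_nonneg hnonneg]
  rcases lt_or_ge k n with h | h
  · rw [wellPoisedTerm, kernel_eq_zero_of_lt h, mul_zero]
    positivity
  have hnk : (n : ℝ) ≤ k := by exact_mod_cast h
  have hn' : (1 : ℝ) ≤ n := by exact_mod_cast hn
  have ht : (1 : ℝ) ≤ k + 1 := by linarith
  have hx : ((k : ℝ) + 1) * (k + 1 + n) / n ^ 2 ≤ 2 * (k + 1) ^ 2 :=
    calc ((k : ℝ) + 1) * (k + 1 + n) / n ^ 2 ≤ (k + 1) * (k + 1 + n) :=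
          div_le_self (by positivity) (one_le_pow₀ hn')
      _ ≤ 2 * (k + 1) ^ 2 := by nlinarith
  calc wellPoisedTerm n k j
      ≤ 3 * (k + 1) * (2 * (k + 1) ^ 2) ^ (j : ℕ) * (1 / ((k : ℝ) + 1) ^ 10) := by
        unfold wellPoisedTerm
        gcongr
        · exact kernel_nonneg n k
        · linarith
        · exact kernel_le hn k
    _ ≤ 3 * (k + 1) * (2 * (k + 1) ^ 2) ^ 2 * (1 / ((k : ℝ) + 1) ^ 10) := by
        gcongr
        · nlinarith
        · lia
    _ = 12 * (1 / (k + 1) ^ 2) / (k + 1) ^ 3 := by field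
    _ ≤ 12 * (1 / (k + 1) ^ 2) := div_le_self (by positivity) (one_le_pow₀ ht)

lemma summable_wellPoisedTerm {n : ℕ} (hn : 1 ≤ n) : Summable (wellPoisedTerm n) :=
  .of_norm_bounded (summable_one_div_add_one_sq.mul_left 12) (norm_wellPoisedTerm_le hn)

/-- The vector of the three series attached to `kernel n`, for `n ≥ 1`. -/
def wellPoisedSum (n : ℕ) : Fin 3 → ℝ := ∑' k, wellPoisedTerm n k

lemma hasSum_succ_sub {E : Type*} [AddCommGroup E] [TopologicalSpace E] [IsTopologicalAddGroup E]
    [T2Space E] {g : ℕ → E} (hg : Summable g) : HasSum (fun k => g (k + 1) - g k) (-g 0) := by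
  have h := ((summable_nat_add_iff 1).2 hg).hasSum.sub hg.hasSum
  rwa [hg.tsum_eq_zero_add, sub_add_cancel_right] at h

/-- The monomials `t ^ i (t - 1 - n) R(t)`, `i ≤ 5`, at `t = k + 1`, where `R` is `kernel n`. Their
differences in `k` span the telescoping certificates for the recurrence of `wellPoisedSum`. -/
def kernelMoment (n k : ℕ) : Fin 6 → ℝ := fun i => (k + 1) ^ (i : ℕ) * ((k - n) * kernel n k)

lemma norm_kernelMoment_le {n : ℕ} (hn : 1 ≤ n) (k : ℕ) :
    ‖kernelMoment n k‖ ≤ 1 / ((k : ℝ) + 1) ^ 2 := by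
  refine (pi_norm_le_iff_of_nonneg (by positivity)).2 fun i => ?_
  rcases lt_or_ge k n with h | h
  · simp only [kernelMoment, kernel_eq_zero_of_lt h, mul_zero, norm_zero]
    positivity
  have hnk : (0 : ℝ) ≤ k - n := sub_nonneg.2 (by exact_mod_cast h)
  have ht : (1 : ℝ) ≤ k + 1 := by simp
  have hR := kernel_nonneg n k
  rw [Real.norm_of_nonneg (by unfold kernelMoment; positivity)]
  calc kernelMoment n k i ≤ (k + 1) ^ 5 * ((k + 1) * (1 / ((k : ℝ) + 1) ^ 10)) := by
        unfold kernelMoment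
        gcongr
        · lia
        · linarith [n.cast_nonneg (α := ℝ)]
        · exact kernel_le hn k
    _ = 1 / (k + 1) ^ 2 / (k + 1) ^ 2 := by field
    _ ≤ 1 / (k + 1) ^ 2 := div_le_self (by positivity) (one_le_pow₀ ht)

lemma hasSum_kernelMoment_succ_sub {n : ℕ} (hn : 1 ≤ n) :
    HasSum (fun k => kernelMoment n (k + 1) - kernelMoment n k) 0 := by
  have hzero : kernelMoment n 0 = 0 := by
    ext i
    simp [kernelMoment, kernel_eq_zero_of_lt hn]
  simpa only [hzero, neg_zero] using
    hasSum_succ_sub (.of_norm_bounded summable_one_div_add_one_sq (norm_kernelMoment_le hn))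

/-- The matrix of the first-order system satisfied by `wellPoisedSum`, up to the scalar factor
`(x + 1) ^ 5`; see `wellPoisedSum_succ`. -/
def transfer (x : ℝ) : Matrix (Fin 3) (Fin 3) ℝ :=
  !![302 * x ^ 5 + 662 * x ^ 4 + 575 * x ^ 3 + 283 * x ^ 2 + 77 * x + 9,
      x ^ 2 * (262 * x ^ 3 + 557 * x ^ 2 + 230 * x + 33), -196 * x ^ 5;
    -98 * x ^ 5 - 208 * x ^ 4 - 170 * x ^ 3 - 77 * x ^ 2 - 19 * x - 2,
      x ^ 2 * (-90 * x ^ 3 - 192 * x ^ 2 - 81 * x - 12), 66 * x ^ 5;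
    33 * x ^ 5 + 65 * x ^ 4 + 45 * x ^ 3 + 15 * x ^ 2 + 2 * x,
      x ^ 2 * (34 * x ^ 3 + 73 * x ^ 2 + 32 * x + 5), -24 * x ^ 5]

/-- Row `j` holds the coefficients, with respect to `kernelMoment`, of the telescoping certificate
for row `j` of `transfer`. -/
def certificate (x : ℝ) : Matrix (Fin 3) (Fin 6) ℝ :=
  !![-306 * x ^ 5 - 378 * x ^ 4 - 247 * x ^ 3 - 96 * x ^ 2 - 21 * x - 2,
      -1152 * x ^ 4 - 1018 * x ^ 3 - 453 * x ^ 2 - 108 * x - 11,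
      -1795 * x ^ 3 - 1074 * x ^ 2 - 291 * x - 32, -1437 * x ^ 2 - 522 * x - 65,
      -588 * x - 98, -98;
    98 * x ^ 5 + 110 * x ^ 4 + 60 * x ^ 3 + 17 * x ^ 2 + 2 * x,
      380 * x ^ 4 + 320 * x ^ 3 + 129 * x ^ 2 + 26 * x + 2,
      600 * x ^ 3 + 351 * x ^ 2 + 90 * x + 9, 483 * x ^ 2 + 174 * x + 21, 198 * x + 33, 33;
    -33 * x ^ 5 - 32 * x ^ 4 - 13 * x ^ 3 - 2 * x ^ 2,
      -133 * x ^ 4 - 102 * x ^ 3 - 33 * x ^ 2 - 4 * x,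
      -215 * x ^ 3 - 120 * x ^ 2 - 27 * x - 2, -175 * x ^ 2 - 62 * x - 7, -72 * x - 12, -12]

lemma kernelMoment_succ_right (n k : ℕ) (i : Fin 6) : kernelMoment n (k + 1) i =
    (k + 2) ^ (i : ℕ) * (kernel n k * (k + 1) ^ 7 * (k + 2 + 2 * n) / (k + 2 + n) ^ 7) := by
  rw [← kernel_succ_right, kernelMoment]
  push_cast
  ring

lemma wellPoisedTerm_succ_sub {n : ℕ} (hn : 1 ≤ n) (k : ℕ) :
    ((n : ℝ) + 1) ^ 5 • wellPoisedTerm (n + 1) k - transfer n *ᵥ wellPoisedTerm n k =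
      certificate n *ᵥ (kernelMoment n (k + 1) - kernelMoment n k) := by
  have hn0 : (n : ℝ) ≠ 0 := by positivity
  have hk : (k : ℝ) + 2 + n ≠ 0 := by positivity
  ext j
  simp only [Pi.sub_apply, Pi.smul_apply, smul_eq_mul, mulVec, dotProduct, Fin.sum_univ_succ,
    Fin.sum_univ_zero, kernelMoment_succ_right]
  simp only [wellPoisedTerm, kernelMoment, kernel_succ_left]
  fin_cases j <;> simp [transfer, certificate] <;> field_simp <;> ring

/-- Creative telescoping: the certificate sums to zero. -/
lemma wellPoisedSum_succ {n : ℕ} (hn : 1 ≤ n) :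
    ((n : ℝ) + 1) ^ 5 • wellPoisedSum (n + 1) = transfer n *ᵥ wellPoisedSum n := by
  have hmulVec {l m : ℕ} (A : Matrix (Fin l) (Fin m) ℝ) {f : ℕ → Fin m → ℝ} {s : Fin m → ℝ}
      (h : HasSum f s) : HasSum (fun k => A *ᵥ f k) (A *ᵥ s) :=
    h.map (mulVecLin A) (continuous_const.matrix_mulVec continuous_id)
  have hdiff := ((summable_wellPoisedTerm n.succ_pos).hasSum.const_smul (((n : ℝ) + 1) ^ 5)).sub
    (hmulVec (transfer n) (summable_wellPoisedTerm hn).hasSum)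
  simp only [Nat.succ_eq_add_one, wellPoisedTerm_succ_sub hn] at hdiff
  have hzero := hmulVec (certificate n) (hasSum_kernelMoment_succ_sub hn)
  rw [mulVec_zero] at hzero
  exact sub_eq_zero.1 (hdiff.unique hzero)

/-- Solutions of the first-order system with matrix `transfer`, shifted so that `v n` stands for
the vector of index `n + 1`. -/
def IsOrbit (v : ℕ → Fin 3 → ℝ) : Prop :=
  ∀ n : ℕ, ((n : ℝ) + 2) ^ 5 • v (n + 1) = transfer (n + 1) *ᵥ v n

lemma isOrbit_wellPoisedSum : IsOrbit fun n => wellPoisedSum (n + 1) := by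
  intro n
  have h := wellPoisedSum_succ n.succ_pos
  push_cast at h
  rwa [add_assoc, one_add_one_eq_two] at h

/-- The solution of the first-order system with initial vector `v₀`. -/
def orbit (v₀ : Fin 3 → ℝ) : ℕ → Fin 3 → ℝ
  | 0 => v₀
  | n + 1 => ((n + 2 : ℝ) ^ 5)⁻¹ • (transfer (n + 1) *ᵥ orbit v₀ n)

lemma isOrbit_orbit (v₀ : Fin 3 → ℝ) : IsOrbit (orbit v₀) := fun n =>
  smul_inv_smul₀ (by positivity) _

lemma abs_transfer_apply_le {x : ℝ} (hx : 0 ≤ x) (i j : Fin 3) :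
    |transfer x i j| ≤ 302 * (x + 1) ^ 5 := by
  rw [abs_le]
  constructor <;> fin_cases i <;> fin_cases j <;> rw [← sub_nonneg] <;>
    simp only [transfer, of_apply, cons_val', Matrix.cons_val, Fin.zero_eta, Fin.mk_one,
      Fin.reduceFinMk] <;> ring_nf <;> positivity

lemma norm_transfer_mulVec_le {x : ℝ} (hx : 0 ≤ x) (v : Fin 3 → ℝ) :
    ‖transfer x *ᵥ v‖ ≤ (x + 1) ^ 5 * (906 * ‖v‖) := by
  refine (pi_norm_le_iff_of_nonneg (by positivity)).2 fun i => ?_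
  calc ‖∑ j, transfer x i j * v j‖ ≤ ∑ j, ‖transfer x i j * v j‖ := norm_sum_le _ _
    _ ≤ ∑ _j : Fin 3, 302 * (x + 1) ^ 5 * ‖v‖ := by
        refine sum_le_sum fun j _ => ?_
        rw [norm_mul]
        exact mul_le_mul (abs_transfer_apply_le hx i j) (norm_le_pi_norm v j) (norm_nonneg _)
          (by positivity)
    _ = (x + 1) ^ 5 * (906 * ‖v‖) := by
        rw [sum_const, card_univ, Fintype.card_fin, nsmul_eq_mul]
        push_cast
        ring

lemma IsOrbit.norm_le {v : ℕ → Fin 3 → ℝ} (hv : IsOrbit v) (n : ℕ) :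
    ‖v n‖ ≤ 906 ^ n * ‖v 0‖ := by
  induction n with
  | zero => simp
  | succ n ih =>
    have h := norm_transfer_mulVec_le (x := n + 1) (by positivity) (v n)
    rw [← hv n, norm_smul, Real.norm_of_nonneg (by positivity), add_assoc, one_add_one_eq_two,
      mul_le_mul_iff_right₀ (by positivity)] at h
    calc ‖v (n + 1)‖ ≤ 906 * ‖v n‖ := h
      _ ≤ 906 * (906 ^ n * ‖v 0‖) := by gcongr
      _ = 906 ^ (n + 1) * ‖v 0‖ := by ring

/-! ### The third-order recurrence -/

theorem mulVec_cross_mulVec {R : Type*} [CommRing R] (A : Matrix (Fin 3) (Fin 3) R)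
    (u v : Fin 3 → R) : (A *ᵥ u) ⨯₃ (A *ᵥ v) = A.adjugateᵀ *ᵥ (u ⨯₃ v) := by
  ext i
  fin_cases i <;>
    simp [cross_apply, adjugate_fin_three, mulVec, dotProduct, Fin.sum_univ_three] <;> ring

/-- The cofactor matrix of `transfer x`, divided by `x ^ 2 * (x + 1) ^ 2`. -/
def reducedCofactor (x : ℝ) : Matrix (Fin 3) (Fin 3) ℝ :=
  !![x ^ 4 * (-42 * x * (2 * x + 1)), -x ^ 2 * (x * (x + 1) * (48 + 180 * x + 174 * x ^ 2)),
      (x + 1) ^ 2 * (-10 - 95 * x - 357 * x ^ 2 - 592 * x ^ 3 - 362 * x ^ 4);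
    -x ^ 4 * (188 * x * (2 * x + 1)), x ^ 2 * (x * (x + 1) * (-216 - 808 * x - 780 * x ^ 2)),
      -(x + 1) ^ 2 * (45 + 427 * x + 1603 * x ^ 2 + 2655 * x ^ 3 + 1622 * x ^ 4);
    x ^ 4 * (-174 * x * (2 * x + 1)), -x ^ 2 * (x * (x + 1) * (202 + 752 * x + 724 * x ^ 2)),
      (x + 1) ^ 2 * (-42 - 398 * x - 1492 * x ^ 2 - 2466 * x ^ 3 - 1504 * x ^ 4)]

lemma adjugate_transfer_transpose (x : ℝ) :
    (transfer x).adjugateᵀ = (x ^ 2 * (x + 1) ^ 2) • reducedCofactor x := by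
  ext i j
  fin_cases i <;> fin_cases j <;>
    simp [transfer, reducedCofactor, adjugate_fin_three] <;> ring

/-- The cross product of two orbits, with the factor that clears the common content of the
cofactor matrices. -/
def scaledCross (v w : ℕ → Fin 3 → ℝ) (n : ℕ) : Fin 3 → ℝ :=
  ((n : ℝ) + 1) ^ 2 • (v n ⨯₃ w n)

lemma scaledCross_succ {v w : ℕ → Fin 3 → ℝ} (hv : IsOrbit v) (hw : IsOrbit w) (n : ℕ) :
    ((n : ℝ) + 2) ^ 6 • scaledCross v w (n + 1) =
      reducedCofactor (n + 1) *ᵥ scaledCross v w n := by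
  have h := mulVec_cross_mulVec (transfer (n + 1)) (v n) (w n)
  rw [← hv n, ← hw n, adjugate_transfer_transpose, smul_mulVec, map_smul, map_smul,
    LinearMap.smul_apply, smul_smul] at h
  refine smul_right_injective (Fin 3 → ℝ) (pow_ne_zero 2 (by positivity : (n : ℝ) + 2 ≠ 0)) ?_
  simp only [scaledCross, mulVec_smul, smul_smul]
  convert h using 2 <;> push_cast <;> ring

/-- The coefficients, up to sign, of the difference equation of the theorem at index `n + 3`:
`recCoeff n i` is attached to the value at index `n + 1 + i`. -/
def recCoeff (n : ℕ) : Fin 4 → ℚ :=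
  ![4 * ((n : ℚ) + 2) ^ 4 * (2 * n + 5) * (2 * n + 3) * a0 (n + 4), 4 * (2 * n + 5) * a2 (n + 3),
    a1 (n + 3), ((n : ℚ) + 4) ^ 6 * a0 (n + 3)]

lemma recCoeff_pos (n : ℕ) (i : Fin 4) : 0 < recCoeff n i := by
  fin_cases i <;>
    simp only [recCoeff, a0, a1, a2, Matrix.cons_val, Fin.zero_eta, Fin.mk_one,
      Fin.reduceFinMk] <;> ring_nf <;> positivity

lemma recCoeff_growth_dominance (n : ℕ) :
    10 ^ 3 * recCoeff n 3 + 10 * recCoeff n 1 + recCoeff n 0 ≤ 10 ^ 2 * recCoeff n 2 := by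
  rw [← sub_nonneg]
  simp only [recCoeff, a0, a1, a2, Matrix.cons_val]
  ring_nf
  positivity

lemma recCoeff_cone_dominance (n : ℕ) :
    10 ^ 3 * recCoeff n 0 + recCoeff n 3 ≤ 10 ^ 2 * recCoeff n 1 := by
  rw [← sub_nonneg]
  simp only [recCoeff, a0, a1, a2, Matrix.cons_val]
  ring_nf
  positivity

/-- Real solutions of the difference equation of the theorem from index `3` on, shifted so that
`u n` stands for the value at index `n + 1`. -/
def IsSolution (u : ℕ → ℝ) : Prop := ∀ n : ℕ,
  recCoeff n 3 * u (n + 3) + recCoeff n 2 * u (n + 2) - recCoeff n 1 * u (n + 1) -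
    recCoeff n 0 * u n = 0

lemma isSolution_of_rec1 {y : ℕ → ℚ} (hy : Rec1 y) : IsSolution fun n => y (n + 1) := by
  intro n
  have h := congrArg (Rat.cast : ℚ → ℝ) (hy (n + 3) (by lia))
  simp only [show n + 3 - 1 = n + 2 by lia, show n + 3 - 2 = n + 1 by lia] at h
  simp only [recCoeff, Matrix.cons_val]
  push_cast at h ⊢
  ring_nf at h ⊢
  exact h

namespace IsSolution

lemma const_mul_sub_const_mul {u v : ℕ → ℝ} (hu : IsSolution u) (hv : IsSolution v) (c d : ℝ) :
    IsSolution fun n => c * u n - d * v n := fun n => by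
  linear_combination c * hu n - d * hv n

lemma ext {u v : ℕ → ℝ} (hu : IsSolution u) (hv : IsSolution v) (h0 : u 0 = v 0)
    (h1 : u 1 = v 1) (h2 : u 2 = v 2) : u = v := by
  have h (n : ℕ) : u n = v n ∧ u (n + 1) = v (n + 1) ∧ u (n + 2) = v (n + 2) := by
    induction n with
    | zero => exact ⟨h0, h1, h2⟩
    | succ n ih =>
      have hne : (recCoeff n 3 : ℝ) ≠ 0 := by exact_mod_cast (recCoeff_pos n 3).ne'
      refine ⟨ih.2.1, ih.2.2, mul_left_cancel₀ hne ?_⟩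
      linear_combination hu n - hv n - (recCoeff n 2 : ℝ) * ih.2.2 + recCoeff n 1 * ih.2.1 +
        recCoeff n 0 * ih.1
  exact funext fun n => (h n).1

lemma frequently_ne_zero {u : ℕ → ℝ} (hu : IsSolution u) (h0 : u 0 ≠ 0) :
    ∃ᶠ n in atTop, u n ≠ 0 := by
  intro hev
  obtain ⟨N, hN⟩ := eventually_atTop.1 hev
  simp only [not_not] at hN
  have hdown (j : ℕ) : ∀ n, N ≤ n + j → u n = 0 := by
    induction j with
    | zero => exact hN
    | succ j ih =>
      intro n hn
      have hne : (recCoeff n 0 : ℝ) ≠ 0 := by exact_mod_cast (recCoeff_pos n 0).ne'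
      have h := hu n
      rw [ih (n + 1) (by lia), ih (n + 2) (by lia), ih (n + 3) (by lia)] at h
      simpa [hne] using h
  exact h0 (hdown N 0 (by lia))

lemma ten_mul_abs_le {u : ℕ → ℝ} (hu : IsSolution u) (h0 : 10 * |u 0| ≤ |u 1|)
    (h1 : 10 * |u 1| ≤ |u 2|) (n : ℕ) : 10 * |u n| ≤ |u (n + 1)| :=
  mul_abs_le_abs_succ_of_recurrence (by norm_num) (fun n => Rat.cast_pos.2 (recCoeff_pos n 3))
    (fun n => Rat.cast_nonneg.2 (recCoeff_pos n 1).le)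
    (fun n => Rat.cast_nonneg.2 (recCoeff_pos n 0).le)
    (fun n => by exact_mod_cast recCoeff_growth_dominance n) hu h0 h1 n

lemma cone_of_tendsto_ratio {u : ℕ → ℝ} (hu : IsSolution u) {m : ℝ} (hm : m < 0)
    (hm' : -10⁻¹ < m) (hlim : Tendsto (fun n => u (n + 1) / u n) atTop (𝓝 m)) :
    10 * u 1 ^ 2 + u 0 * u 1 ≤ 0 :=
  cone_zero_of_tendsto_ratio (by norm_num) (fun n => Rat.cast_nonneg.2 (recCoeff_pos n 3).le)
    (fun n => Rat.cast_nonneg.2 (recCoeff_pos n 2).le)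
    (fun n => Rat.cast_pos.2 (recCoeff_pos n 0))
    (fun n => by exact_mod_cast recCoeff_cone_dominance n) hu hm hm' hlim

end IsSolution

lemma reducedCofactor_row_relation (n : ℕ) :
    (a0 (n + 3) : ℝ) • (reducedCofactor (n + 3) * reducedCofactor (n + 2) *
        reducedCofactor (n + 1)) 2 +
      (a1 (n + 3) : ℝ) • (reducedCofactor (n + 2) * reducedCofactor (n + 1)) 2 -
      (((n : ℝ) + 3) ^ 6 * recCoeff n 1) • reducedCofactor (n + 1) 2 -
      (((n : ℝ) + 3) ^ 6 * (n + 2) ^ 6 * recCoeff n 0) • (1 : Matrix (Fin 3) (Fin 3) ℝ) 2 = 0 := by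
  ext j
  fin_cases j <;>
    simp [reducedCofactor, recCoeff, a0, a1, a2] <;> ring

/-- Eliminating the other two coordinates from the first-order system of `scaledCross`. -/
lemma isSolution_scaledCross {v w : ℕ → Fin 3 → ℝ} (hv : IsOrbit v) (hw : IsOrbit w) :
    IsSolution fun n => scaledCross v w n 2 := by
  intro n
  set c := scaledCross v w
  have h₁ : ((n : ℝ) + 2) ^ 6 • c (n + 1) = reducedCofactor (n + 1) *ᵥ c n :=
    scaledCross_succ hv hw n
  have h₂ : ((n : ℝ) + 3) ^ 6 • c (n + 2) = reducedCofactor (n + 2) *ᵥ c (n + 1) := by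
    convert scaledCross_succ hv hw (n + 1) using 3 <;> push_cast <;> ring
  have h₃ : ((n : ℝ) + 4) ^ 6 • c (n + 3) = reducedCofactor (n + 3) *ᵥ c (n + 2) := by
    convert scaledCross_succ hv hw (n + 2) using 3 <;> push_cast <;> ring
  have h₂' : (((n : ℝ) + 2) ^ 6 * (n + 3) ^ 6) • c (n + 2) =
      (reducedCofactor (n + 2) * reducedCofactor (n + 1)) *ᵥ c n := by
    rw [mul_smul, h₂, ← mulVec_smul, h₁, mulVec_mulVec]
  have h₃' : (((n : ℝ) + 2) ^ 6 * (n + 3) ^ 6 * (n + 4) ^ 6) • c (n + 3) =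
      (reducedCofactor (n + 3) * reducedCofactor (n + 2) * reducedCofactor (n + 1)) *ᵥ c n := by
    rw [mul_smul, h₃, ← mulVec_smul, h₂', mulVec_mulVec, Matrix.mul_assoc]
  have hrel := congrArg (· ⬝ᵥ c n) (reducedCofactor_row_relation n)
  have hrow (M : Matrix (Fin 3) (Fin 3) ℝ) : M 2 ⬝ᵥ c n = (M *ᵥ c n) 2 := rfl
  simp only [add_dotProduct, sub_dotProduct, smul_dotProduct, hrow, ← h₁, ← h₂', ← h₃', one_mulVec,
    zero_dotProduct, Pi.smul_apply, smul_eq_mul] at hrel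
  refine (mul_eq_zero.1 ?_).resolve_left
    (by positivity : ((n : ℝ) + 2) ^ 6 * (n + 3) ^ 6 ≠ 0)
  simp only [recCoeff, Matrix.cons_val] at hrel ⊢
  push_cast at hrel ⊢
  linear_combination hrel

lemma tendsto_div_pow_succ_of_abs_sub_le {f : ℕ → ℝ} {l C : ℝ} {d : ℕ}
    (h : ∀ n : ℕ, |f n - l * ((n : ℝ) + 1) ^ (d + 1)| ≤ C * ((n : ℝ) + 1) ^ d) :
    Tendsto (fun n : ℕ => f n / ((n : ℝ) + 1) ^ (d + 1)) atTop (𝓝 l) := by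
  have hC : Tendsto (fun n : ℕ => C * (1 / ((n : ℝ) + 1))) atTop (𝓝 0) := by
    simpa using tendsto_one_div_add_atTop_nhds_zero_nat.const_mul C
  refine tendsto_iff_norm_sub_tendsto_zero.2
    (squeeze_zero (fun _ => norm_nonneg _) (fun n => ?_) hC)
  have hn : 0 < (n : ℝ) + 1 := by positivity
  rw [div_sub' (by positivity), Real.norm_eq_abs, abs_div, abs_of_pos (pow_pos hn (d + 1)),
    div_le_iff₀ (by positivity), mul_comm (_ ^ _) l]
  exact (h n).trans_eq (by field)

/-- The leading coefficients of `recCoeff`, as polynomials of degree `9`. -/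
def recLeadingCoeff : Fin 4 → ℝ := ![659488, 30995936, 97604224, 41218]

lemma tendsto_recCoeff_div_pow (i : Fin 4) :
    Tendsto (fun n => (recCoeff n i : ℝ) / ((n : ℝ) + 1) ^ 9) atTop (𝓝 (recLeadingCoeff i)) := by
  refine tendsto_div_pow_succ_of_abs_sub_le (d := 8) (C := 10 ^ 13) fun n => abs_le.2 ?_
  constructor <;> fin_cases i <;> rw [← sub_nonneg] <;>
    simp only [recCoeff, recLeadingCoeff, a0, a1, a2, Matrix.cons_val, Fin.zero_eta, Fin.mk_one,
      Fin.reduceFinMk] <;> push_cast <;> ring_nf <;> positivity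

namespace IsSolution

lemma exists_tendsto_ratio {u : ℕ → ℝ} (hu : IsSolution u) (h0 : u 0 ≠ 0) {μ : Fin 3 → ℝ}
    (hroot : ∀ i, μ i ^ 3 + 2368 * μ i ^ 2 - 752 * μ i - 16 = 0) (hμ : StrictMono (|μ ·|)) :
    ∃ i, Tendsto (fun n => u (n + 1) / u n) atTop (𝓝 (μ i)) := by
  have hlim (i : Fin 4) : Tendsto (fun n => (recCoeff n i : ℝ) / recCoeff n 3) atTop
      (𝓝 (![16, 752, 2368, 1] i)) := by
    have h := ((tendsto_recCoeff_div_pow i).div (tendsto_recCoeff_div_pow 3)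
      (by simp [recLeadingCoeff])).congr fun n => div_div_div_cancel_right₀
        (pow_ne_zero 9 n.cast_add_one_ne_zero) (recCoeff n i : ℝ) (recCoeff n 3 : ℝ)
    convert h using 2
    fin_cases i <;> simp [recLeadingCoeff] <;> norm_num
  refine poincare_exists_tendsto_ratio (a := ![fun n => (recCoeff n 0 : ℝ) / recCoeff n 3,
    fun n => (recCoeff n 1 : ℝ) / recCoeff n 3, fun n => -((recCoeff n 2 : ℝ) / recCoeff n 3)])
    (α := ![16, 752, -2368]) (fun k => ?_) (fun n => ?_) (fun i => ?_) hμ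
    (hu.frequently_ne_zero h0)
  · fin_cases k
    exacts [hlim 0, hlim 1, (hlim 2).neg]
  · have hne : (recCoeff n 3 : ℝ) ≠ 0 := by exact_mod_cast (recCoeff_pos n 3).ne'
    simp only [Fin.sum_univ_three, Matrix.cons_val, Fin.val_zero, Fin.val_one, Fin.val_two,
      add_zero]
    field_simp
    linear_combination hu n
  · simp only [Fin.sum_univ_three, Matrix.cons_val, Fin.val_zero, Fin.val_one, Fin.val_two]
    linear_combination hroot i

section Ratio

variable {u : ℕ → ℝ} {μ : Fin 3 → ℝ}

lemma tendsto_ratio_of_growth (hu : IsSolution u)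
    (hroot : ∀ i, μ i ^ 3 + 2368 * μ i ^ 2 - 752 * μ i - 16 = 0) (hμ : StrictMono (|μ ·|))
    (hμ1 : |μ 1| < 10) (hu0 : u 0 ≠ 0) (h0 : 10 * |u 0| ≤ |u 1|) (h1 : 10 * |u 1| ≤ |u 2|) :
    Tendsto (fun n => u (n + 1) / u n) atTop (𝓝 (μ 2)) := by
  obtain ⟨i, hi⟩ := hu.exists_tendsto_ratio hu0 hroot hμ
  have hne (n : ℕ) : u n ≠ 0 := by
    induction n with
    | zero => exact hu0
    | succ n ih =>
      exact abs_pos.1 ((by positivity : 0 < 10 * |u n|).trans_le (hu.ten_mul_abs_le h0 h1 n))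
  have hten : 10 ≤ |μ i| := ge_of_tendsto' hi.abs fun n => by
    rw [abs_div, le_div_iff₀ (abs_pos.2 (hne n))]
    exact hu.ten_mul_abs_le h0 h1 n
  have hi2 : i = 2 := by
    have : (1 : Fin 3) < i := hμ.lt_iff_lt.1 (hμ1.trans_le hten)
    lia
  rwa [← hi2]

lemma tendsto_ratio_of_isBigO (hu : IsSolution u)
    (hroot : ∀ i, μ i ^ 3 + 2368 * μ i ^ 2 - 752 * μ i - 16 = 0) (hμ : StrictMono (|μ ·|))
    (hμ0 : μ 0 ∈ Set.Ioo (-10⁻¹) 0) (hμ2 : 1000 < |μ 2|) (hu0 : 0 < u 0) (hu1 : 0 < u 1)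
    (hO : u =O[atTop] ((1000 : ℝ) ^ ·)) :
    Tendsto (fun n => u (n + 1) / u n) atTop (𝓝 (μ 1)) := by
  obtain ⟨i, hi⟩ := hu.exists_tendsto_ratio hu0.ne' hroot hμ
  match i with
  | 0 =>
    exact absurd (hu.cone_of_tendsto_ratio hμ0.2 hμ0.1 hi) (by positivity : _ < _).not_ge
  | 1 => exact hi
  | 2 => exact absurd hμ2 (abs_le_of_tendsto_ratio_of_isBigO_pow (by norm_num) hi hO).not_gt

end Ratio

end IsSolution

/-! ### Linear forms in `1` and `ζ(5)` -/

lemma norm_cross_le (v w : Fin 3 → ℝ) : ‖v ⨯₃ w‖ ≤ 2 * (‖v‖ * ‖w‖) := by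
  have hmul (i j : Fin 3) : |v i * w j| ≤ ‖v‖ * ‖w‖ := by
    rw [abs_mul]
    exact mul_le_mul (norm_le_pi_norm v i) (norm_le_pi_norm w j) (abs_nonneg _) (norm_nonneg _)
  have hsub (i j : Fin 3) : |v i * w j - v j * w i| ≤ 2 * (‖v‖ * ‖w‖) :=
    (abs_sub _ _).trans (by linarith [hmul i j, hmul j i])
  refine (pi_norm_le_iff_of_nonneg (by positivity)).2 fun i => ?_
  rw [cross_apply]
  fin_cases i
  exacts [hsub 1 2, hsub 2 0, hsub 0 1]

lemma isLittleO_add_one_sq_mul_pow {r s : ℝ} (h : ‖r‖ < s) :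
    (fun n : ℕ => ((n : ℝ) + 1) ^ 2 * r ^ n) =o[atTop] (s ^ ·) := by
  have hpow (k : ℕ) := isLittleO_pow_const_mul_const_pow_const_pow_of_norm_lt (R := ℝ) k h
  refine (((hpow 2).add ((hpow 1).const_mul_left 2)).add (hpow 0)).congr_left fun n => ?_
  ring

lemma isBigO_scaledCross {v w : ℕ → Fin 3 → ℝ} {r s : ℝ} (hr : ‖r‖ < s)
    (hv : v =O[atTop] (r ^ ·)) (hw : w =O[atTop] fun _ => (1 : ℝ)) :
    scaledCross v w =O[atTop] (s ^ ·) := by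
  have hcross : (fun n => v n ⨯₃ w n) =O[atTop] fun n => ‖v n‖ * ‖w n‖ :=
    .of_bound 2 (.of_forall fun n => (norm_cross_le _ _).trans_eq (by simp))
  have h := hcross.trans (hv.norm_left.mul hw.norm_left)
  simp only [mul_one] at h
  exact ((isBigO_refl (fun n : ℕ => ((n : ℝ) + 1) ^ 2) atTop).smul h).trans
    (isLittleO_add_one_sq_mul_pow hr).isBigO

lemma isBigO_wellPoisedSum : (fun n => wellPoisedSum (n + 1)) =O[atTop] fun _ => (1 : ℝ) :=
  .of_bound (∑' k : ℕ, 12 * (1 / ((k : ℝ) + 1) ^ 2)) (.of_forall fun n => by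
    rw [norm_one, mul_one]
    exact tsum_of_norm_bounded (summable_one_div_add_one_sq.mul_left 12).hasSum
      (norm_wellPoisedTerm_le n.succ_pos))

lemma IsOrbit.isBigO {v : ℕ → Fin 3 → ℝ} (hv : IsOrbit v) : v =O[atTop] ((906 : ℝ) ^ ·) :=
  .of_bound ‖v 0‖ (.of_forall fun n => (hv.norm_le n).trans_eq (by simp [mul_comm]))

lemma hasSum_zetaRe {s : ℕ} (hs : 1 < s) :
    HasSum (fun k : ℕ => 1 / ((k : ℝ) + 1) ^ s) (zetaRe s) := by
  have hzeta : zetaRe s = ∑' k : ℕ, 1 / (k : ℝ) ^ s := by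
    rw [zetaRe, zeta_nat_eq_tsum_of_gt_one hs, ← Complex.ofReal_re (∑' k : ℕ, 1 / (k : ℝ) ^ s)]
    push_cast
    rfl
  have h := (hasSum_nat_add_iff' 1).2 (Real.summable_one_div_nat_pow.2 hs).hasSum
  rw [← hzeta] at h
  simpa [(zero_lt_one.trans hs).ne'] using h

lemma hasSum_one_div_pow_succ_sub {s : ℕ} (hs : 1 < s) :
    HasSum (fun k : ℕ => 1 / ((k : ℝ) + 2) ^ s - 1 / ((k : ℝ) + 1) ^ s) (-1) := by
  simpa [add_assoc, one_add_one_eq_two] using hasSum_succ_sub (hasSum_zetaRe hs).summable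

lemma wellPoisedSum_one : wellPoisedSum 1 =
    zetaRe 5 • ![18, -4, 0] + zetaRe 3 • ![66, -24, 10] - ![98, -33, 12] := by
  let c : Fin 5 → Fin 3 → ℝ :=
    ![![33, -12, 5], ![33, -12, 5], ![21, -7, 2], ![9, -2, 0], ![2, 0, 0]]
  have hsum := (((hasSum_zetaRe (s := 5) (by norm_num)).smul_const ![18, -4, (0 : ℝ)]).add
    ((hasSum_zetaRe (s := 3) (by norm_num)).smul_const ![66, -24, (10 : ℝ)])).add
    (hasSum_sum (s := univ) fun (i : Fin 5) _ =>
      (hasSum_one_div_pow_succ_sub (s := i + 2) (by lia)).smul_const (c i))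
  have hpartial : wellPoisedTerm 1 = fun k : ℕ =>
      (1 / ((k : ℝ) + 1) ^ 5) • ![18, -4, 0] + (1 / ((k : ℝ) + 1) ^ 3) • ![66, -24, 10] +
        ∑ i : Fin 5,
          (1 / ((k : ℝ) + 2) ^ ((i : ℕ) + 2) - 1 / ((k : ℝ) + 1) ^ ((i : ℕ) + 2)) • c i := by
    ext k j
    fin_cases j <;> simp [wellPoisedTerm, kernel_one, Fin.sum_univ_five, c] <;> field_simp <;> ring
  rw [wellPoisedSum, hpartial, hsum.tsum_eq]
  ext j
  fin_cases j <;> simp [Fin.sum_univ_five, c] <;> ring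

/-- The added term is `∫ dt / t ^ 5` over `[n + 1/2, ∞)`, the midpoint estimate of the tail. -/
lemma antitone_sum_range_add_tail_estimate : Antitone fun n : ℕ =>
    ∑ k ∈ range n, 1 / ((k : ℝ) + 1) ^ 5 + 1 / (4 * ((n : ℝ) + 1 / 2) ^ 4) := by
  refine antitone_nat_of_succ_le fun n => ?_
  have hstep (x : ℝ) (hx : 0 ≤ x) :
      1 / (x + 1) ^ 5 + 1 / (4 * (x + 1 + 1 / 2) ^ 4) ≤ 1 / (4 * (x + 1 / 2) ^ 4) := by
    rw [div_add_div _ _ (by positivity) (by positivity),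
      div_le_div_iff₀ (by positivity) (by positivity), ← sub_nonneg]
    ring_nf
    positivity
  rw [sum_range_succ, add_assoc]
  push_cast
  gcongr
  exact hstep n n.cast_nonneg

lemma zetaRe_five_le_sum_range_add (N : ℕ) : zetaRe 5 ≤
    ∑ k ∈ range N, 1 / ((k : ℝ) + 1) ^ 5 + 1 / (4 * ((N : ℝ) + 1 / 2) ^ 4) := by
  refine le_of_tendsto (hasSum_zetaRe (s := 5) (by norm_num)).tendsto_sum_nat ?_
  filter_upwards [eventually_ge_atTop N] with n hn
  exact (le_add_of_nonneg_right (by positivity)).trans (antitone_sum_range_add_tail_estimate hn)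

/-- The endpoints are the approximations `p 1 / q 1` and `p 2 / q 2`. -/
lemma zetaRe_five_mem_Ioo : zetaRe 5 ∈ Set.Ioo (29 / 28) (1190161 / 1147776) := by
  constructor
  · have h := sum_le_hasSum (range 4) (fun k _ => by positivity)
      (hasSum_zetaRe (s := 5) (by norm_num))
    norm_num [sum_range_succ] at h ⊢
    linarith
  · refine (zetaRe_five_le_sum_range_add 12).trans_lt ?_
    norm_num [sum_range_succ]

/-- The cross product of the orbit of the coefficient of `ζ(3)` in `wellPoisedSum 1` with the
well-poised series; this choice eliminates `ζ(3)`. Its last coordinate is `4 (q ζ(5) - p)`. -/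
def zetaFiveCross : ℕ → Fin 3 → ℝ :=
  scaledCross (orbit ![66, -24, 10]) fun n => wellPoisedSum (n + 1)

lemma isSolution_zetaFiveCross : IsSolution fun n => zetaFiveCross n 2 :=
  isSolution_scaledCross (isOrbit_orbit _) isOrbit_wellPoisedSum

lemma isBigO_zetaFiveCross : (fun n => zetaFiveCross n 2) =O[atTop] ((1000 : ℝ) ^ ·) :=
  isBigO_pi.1 (isBigO_scaledCross (r := 906) (by norm_num) (isOrbit_orbit _).isBigO
    isBigO_wellPoisedSum) 2

lemma zetaFiveCross_succ (n : ℕ) : ((n : ℝ) + 2) ^ 6 • zetaFiveCross (n + 1) =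
    reducedCofactor (n + 1) *ᵥ zetaFiveCross n :=
  scaledCross_succ (isOrbit_orbit _) isOrbit_wellPoisedSum n

lemma zetaFiveCross_zero : zetaFiveCross 0 =
    ![40 * zetaRe 5 - 42, 180 * zetaRe 5 - 188, 168 * zetaRe 5 - 174] := by
  simp only [zetaFiveCross, scaledCross, orbit, zero_add, wellPoisedSum_one]
  ext i
  fin_cases i <;> simp [cross_apply] <;> ring

lemma zetaFiveCross_one : zetaFiveCross 1 =
    ![285495 / 16 - 17208 * zetaRe 5, 640373 / 8 - 77196 * zetaRe 5,
      1190161 / 16 - 71736 * zetaRe 5] := by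
  have h := zetaFiveCross_succ 0
  rw [zetaFiveCross_zero] at h
  ext i
  have hi := congrFun h i
  fin_cases i <;> simp [reducedCofactor] at hi ⊢ <;> linarith

lemma zetaFiveCross_two_apply_two :
    zetaFiveCross 2 2 = 57163920 * zetaRe 5 - 38410106195 / 648 := by
  have h := congrFun (zetaFiveCross_succ 1) 2
  rw [zetaFiveCross_one] at h
  simp [reducedCofactor] at h
  linarith

/-- The largest root would contradict the growth bound, the smallest would force a sign change at
the start. -/
lemma tendsto_zetaFiveCross_ratio {μ : Fin 3 → ℝ}
    (hroot : ∀ i, μ i ^ 3 + 2368 * μ i ^ 2 - 752 * μ i - 16 = 0) (hμ : StrictMono (|μ ·|))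
    (hμ0 : μ 0 ∈ Set.Ioo (-10⁻¹) 0) (hμ2 : 1000 < |μ 2|) :
    Tendsto (fun n => zetaFiveCross (n + 1) 2 / zetaFiveCross n 2) atTop (𝓝 (μ 1)) := by
  obtain ⟨hlower, hupper⟩ := zetaRe_five_mem_Ioo
  refine isSolution_zetaFiveCross.tendsto_ratio_of_isBigO hroot hμ hμ0 hμ2 ?_ ?_
    isBigO_zetaFiveCross
  · simp only [zetaFiveCross_zero, Matrix.cons_val]
    linarith
  · simp only [zetaFiveCross_one, Matrix.cons_val]
    linarith

lemma rec1_two {y : ℕ → ℚ} (hy : Rec1 y) :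
    729 * a0 2 * y 3 + a1 2 * y 2 - 12 * a2 2 * y 1 - 12 * a0 3 * y 0 = 0 := by
  have h := hy 2 le_rfl
  norm_num at h
  linarith

lemma denominator_three {q : ℕ → ℚ} (hq : Rec1 q) (hq0 : q 0 = -1) (hq1 : q 1 = 42)
    (hq2 : q 2 = -17934) : q 3 = 14290980 := by
  have h := rec1_two hq
  norm_num [a0, a1, a2, hq0, hq1, hq2] at h
  linarith

lemma tendsto_denominator_ratio {q : ℕ → ℚ} (hq : Rec1 q) (hq0 : q 0 = -1) (hq1 : q 1 = 42)
    (hq2 : q 2 = -17934) {μ : Fin 3 → ℝ}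
    (hroot : ∀ i, μ i ^ 3 + 2368 * μ i ^ 2 - 752 * μ i - 16 = 0) (hμ : StrictMono (|μ ·|))
    (hμ1 : |μ 1| < 10) :
    Tendsto (fun n => (q (n + 1) : ℝ) / q n) atTop (𝓝 (μ 2)) := by
  have hq3 := denominator_three hq hq0 hq1 hq2
  have hshift : Tendsto (fun n => (q (n + 1 + 1) : ℝ) / q (n + 1)) atTop (𝓝 (μ 2)) := by
    refine (isSolution_of_rec1 hq).tendsto_ratio_of_growth hroot hμ hμ1 ?_ ?_ ?_
    · simp [hq1]
    · norm_num [hq1, hq2]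
    · norm_num [hq2, hq3]
  exact (tendsto_add_atTop_iff_nat (f := fun n => (q (n + 1) : ℝ) / q n) 1).1 hshift

lemma linearForm_eq_zetaFiveCross {q p : ℕ → ℚ} (hq : Rec1 q) (hp : Rec1 p) (hq0 : q 0 = -1)
    (hq1 : q 1 = 42) (hq2 : q 2 = -17934) (hp0 : p 0 = 0) (hp1 : p 1 = 87 / 2)
    (hp2 : p 2 = -1190161 / 64) :
    (fun n => (q (n + 1) : ℝ) * zetaRe 5 - p (n + 1)) = fun n => 4⁻¹ * zetaFiveCross n 2 := by
  have hq3 := denominator_three hq hq0 hq1 hq2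
  have hp3 : p 3 = 38410106195 / 2592 := by
    have h := rec1_two hp
    norm_num [a0, a1, a2, hp0, hp1, hp2] at h
    linarith
  have hL : IsSolution fun n => (q (n + 1) : ℝ) * zetaRe 5 - p (n + 1) := by
    simpa [mul_comm] using
      (isSolution_of_rec1 hq).const_mul_sub_const_mul (isSolution_of_rec1 hp) (zetaRe 5) 1
  have hS : IsSolution fun n => 4⁻¹ * zetaFiveCross n 2 := by
    simpa using
      isSolution_zetaFiveCross.const_mul_sub_const_mul isSolution_zetaFiveCross 4⁻¹ 0
  refine hL.ext hS ?_ ?_ ?_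
  · simp [hq1, hp1, zetaFiveCross_zero]
    ring
  · simp [hq2, hp2, zetaFiveCross_one]
    ring
  · simp [hq3, hp3, zetaFiveCross_two_apply_two]
    ring

lemma tendsto_linearForm_ratio {q p : ℕ → ℚ} (hq : Rec1 q) (hp : Rec1 p) (hq0 : q 0 = -1)
    (hq1 : q 1 = 42) (hq2 : q 2 = -17934) (hp0 : p 0 = 0) (hp1 : p 1 = 87 / 2)
    (hp2 : p 2 = -1190161 / 64) {μ : Fin 3 → ℝ}
    (hroot : ∀ i, μ i ^ 3 + 2368 * μ i ^ 2 - 752 * μ i - 16 = 0) (hμ : StrictMono (|μ ·|))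
    (hμ0 : μ 0 ∈ Set.Ioo (-10⁻¹) 0) (hμ2 : 1000 < |μ 2|) :
    Tendsto (fun n => (q (n + 1) * zetaRe 5 - p (n + 1)) / (q n * zetaRe 5 - p n)) atTop
      (𝓝 (μ 1)) := by
  have hform := congrFun (linearForm_eq_zetaFiveCross hq hp hq0 hq1 hq2 hp0 hp1 hp2)
  have hshift : Tendsto (fun n => (q (n + 1 + 1) * zetaRe 5 - p (n + 1 + 1)) /
      (q (n + 1) * zetaRe 5 - p (n + 1))) atTop (𝓝 (μ 1)) := by
    refine (tendsto_zetaFiveCross_ratio hroot hμ hμ0 hμ2).congr fun n => ?_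
    rw [hform (n + 1), hform n, mul_div_mul_left _ _ (by norm_num)]
  exact (tendsto_add_atTop_iff_nat
    (f := fun n => (q (n + 1) * zetaRe 5 - p (n + 1)) / (q n * zetaRe 5 - p n)) 1).1 hshift

lemma exists_isRoot_mem_Ioo :
    ∃ μ ∈ Set.Ioo (-10⁻¹ : ℝ) 0, μ ^ 3 + 2368 * μ ^ 2 - 752 * μ - 16 = 0 := by
  have hcont : ContinuousOn (fun μ : ℝ => μ ^ 3 + 2368 * μ ^ 2 - 752 * μ - 16)
      (Set.Icc (-10⁻¹) 0) := by fun_prop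
  exact intermediate_value_Ioo' (by norm_num) hcont ⟨by norm_num, by norm_num⟩

lemma exists_strictMono_abs_roots {μ₂ μ₃ : ℝ} (hμ₂ : μ₂ ^ 3 + 2368 * μ₂ ^ 2 - 752 * μ₂ - 16 = 0)
    (hμ₃ : μ₃ ^ 3 + 2368 * μ₃ ^ 2 - 752 * μ₃ - 16 = 0) (hlt : 10⁻¹ < |μ₂|) (hlt' : |μ₂| < |μ₃|) :
    ∃ μ : Fin 3 → ℝ, μ 0 ∈ Set.Ioo (-10⁻¹) 0 ∧ μ 1 = μ₂ ∧ μ 2 = μ₃ ∧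
      (∀ i, μ i ^ 3 + 2368 * μ i ^ 2 - 752 * μ i - 16 = 0) ∧ StrictMono (|μ ·|) := by
  obtain ⟨μ₁, hμ₁mem, hμ₁⟩ := exists_isRoot_mem_Ioo
  have hμ₁abs : |μ₁| < |μ₂| :=
    (abs_lt.2 ⟨hμ₁mem.1, hμ₁mem.2.trans (by norm_num)⟩ : |μ₁| < 10⁻¹).trans hlt
  refine ⟨![μ₁, μ₂, μ₃], hμ₁mem, rfl, rfl, ?_, Fin.strictMono_iff_lt_succ.2 ?_⟩
  · simp [Fin.forall_fin_succ, hμ₁, hμ₂, hμ₃]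
  · simp [Fin.forall_fin_succ, hμ₁abs, hlt']

end ZetaFive

/-- `p_n/q_n → ζ(5)`; more precisely `lim (log |ζ(5) − p_n/q_n|)/n = log |μ₂/μ₃|`, where
`μ₂` is the root of `μ³ + 2368 μ² − 752 μ − 16` in `(0.337, 0.338)` and `μ₃` is its root
in `(−2369, −2368)`. -/
theorem stmt4
    (q p : ℕ → ℚ)
    (hq : Rec1 q) (hp : Rec1 p)
    (hq0 : q 0 = -1) (hq1 : q 1 = 42) (hq2 : q 2 = -17934)
    (hp0 : p 0 = 0) (hp1 : p 1 = 87/2) (hp2 : p 2 = -1190161/64)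
    (μ2 : ℝ) (hμ2root : μ2^3 + 2368*μ2^2 - 752*μ2 - 16 = 0)
    (hμ2mem : μ2 ∈ Set.Ioo (0.337 : ℝ) 0.338)
    (μ3 : ℝ) (hμ3root : μ3^3 + 2368*μ3^2 - 752*μ3 - 16 = 0)
    (hμ3mem : μ3 ∈ Set.Ioo (-2369 : ℝ) (-2368)) :
    Tendsto (fun n : ℕ => ((p n / q n : ℚ) : ℝ)) atTop (nhds (zetaRe 5)) ∧
    Tendsto (fun n : ℕ => Real.log |zetaRe 5 - ((p n / q n : ℚ) : ℝ)| / (n : ℝ))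
      atTop (nhds (Real.log |μ2 / μ3|)) := by
  have hμ2abs : |μ2| ∈ Set.Ioo 0.337 0.338 := by
    rwa [abs_of_pos ((by norm_num : (0 : ℝ) < 0.337).trans hμ2mem.1)]
  have hμ3abs : 2368 < |μ3| := lt_abs.2 (.inr (lt_neg.2 hμ3mem.2))
  have hlt : |μ2| < |μ3| := by linarith [hμ2abs.2]
  obtain ⟨μ, hμ0, rfl, rfl, hroot, hμ⟩ := ZetaFive.exists_strictMono_abs_roots hμ2root hμ3root
    ((by norm_num : (10⁻¹ : ℝ) < 0.337).trans hμ2abs.1) hlt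
  have hQ := ZetaFive.tendsto_denominator_ratio hq hq0 hq1 hq2 hroot hμ
    (hμ2abs.2.trans (by norm_num))
  have hL := ZetaFive.tendsto_linearForm_ratio hq hp hq0 hq1 hq2 hp0 hp1 hp2 hroot hμ hμ0
    ((by norm_num : (1000 : ℝ) < 2368).trans hμ3abs)
  simpa only [Rat.cast_div] using ZetaFive.tendsto_div_and_log_abs_sub_div
    (P := fun n => (p n : ℝ)) (Q := fun n => (q n : ℝ))
    (abs_pos.1 ((by norm_num : (0 : ℝ) < 0.337).trans hμ2abs.1)) hlt hQ hL
end
end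

section
/- For all integers n ≥ 1 one has q_n ∈ ℤ, 2 D_n^5 p_n ∈ ℤ, and 2 D_n^3 p̃_n ∈ ℤ, where D_n denotes the least common multiple of the numbers 1, 2, …, n. -/
noncomputable section

open Filter


/-- `Dlcm n` is the least common multiple of `1, 2, …, n`. -/
def Dlcm (n : ℕ) : ℕ := (Finset.Icc 1 n).lcm id

/-!
For a rational function of `s` and `t` with double poles at the integer points `(k, l)`, the double
residue at `(k, l)` is the coefficient of `e * f` after substituting `s = k + e`, `t = l + f` with
`e² = f² = 0`. Summing over `k` and `l` the residues of a fixed hypergeometric summand times a test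
function of weight zero, three or one gives, up to normalisation, `q`, `2 p` and `2 p̃`.

All three obey the recurrence by creative telescoping: applied to the summand it yields
`Δₖ(flux) + Δₗ(flux')`, and summation by parts moves each difference to the test function, where
what is left is a sum of all residues of a rational function which decays too fast at infinity to
have a nonzero one. So it remains to compare three initial values.

The denominators are governed by a subring: each summand lies in the one generated by `D⁻¹ e` and
`D⁻¹ f`, where `D = lcm(1, …, n)`, a test function of weight `w` adds `D ^ w`, and the coefficient
of `e * f` another `D ^ 2`. For `q` the test function `e * f` cancels the latter.
-/

/-- Horner evaluation at `x` of the polynomial with coefficients `φ c` for `c ∈ l`, constant term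
first. It asks for operations only, no axioms, so that it also runs on coefficient lists. -/
def horner {C B : Type*} [Zero B] [Add B] [Mul B] (φ : C → B) (x : B) : List C → B
  | [] => 0
  | c :: l => φ c + x * horner φ x l

/-- Univariate polynomials given by their coefficient lists, constant term first. Iterated three
times over `ℤ` this is a model of `ℤ[n, s, t]` in which the kernel can compute. -/
def CoeffList (R : Type*) := List R

namespace CoeffList

variable {R : Type*}

instance : Zero (CoeffList R) := ⟨([] : List R)⟩

instance [IntCast R] : IntCast (CoeffList R) := ⟨fun z ↦ [(z : R)]⟩

/-- Addition of polynomials, padding the shorter list. -/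
protected def add [Add R] : List R → List R → List R
  | [], m => m
  | l, [] => l
  | a :: l, b :: m => (a + b) :: CoeffList.add l m

instance [Add R] : Add (CoeffList R) := ⟨CoeffList.add⟩

instance [Neg R] : Neg (CoeffList R) := ⟨List.map (- ·)⟩

/-- Multiplication of polynomials. -/
protected def mul [Zero R] [Add R] [Mul R] : List R → List R → List R
  | [], _ => []
  | a :: l, m => CoeffList.add (m.map (a * ·)) (0 :: CoeffList.mul l m)

instance [Zero R] [Add R] [Mul R] : Mul (CoeffList R) := ⟨CoeffList.mul⟩

end CoeffList

/-- The map `φ` preserves the operations a polynomial expression is built from. Its domain need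
not be a ring: coefficient lists are not one, because of trailing zeros. -/
structure PreservesOps {B A : Type*} [Zero B] [Add B] [Neg B] [Mul B] [IntCast B] [CommRing A]
    (φ : B → A) : Prop where
  zero : φ 0 = 0
  add (x y : B) : φ (x + y) = φ x + φ y
  neg (x : B) : φ (-x) = -φ x
  mul (x y : B) : φ (x * y) = φ x * φ y
  intCast (z : ℤ) : φ z = z

section Horner

variable {A : Type*} [CommRing A]

theorem PreservesOps.ringHom {B : Type*} [CommRing B] (φ : B →+* A) : PreservesOps φ :=
  ⟨map_zero φ, map_add φ, map_neg φ, map_mul φ, map_intCast φ⟩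

theorem horner_eq_zero {C : Type*} {φ : C → A} {p : C → Bool} (hp : ∀ c, p c → φ c = 0) {x : A}
    {l : List C} (hl : l.all p) : horner φ x l = 0 := by
  induction l with
  | nil => rfl
  | cons c l ih =>
    rw [List.all_cons, Bool.and_eq_true] at hl
    rw [horner, hp c hl.1, ih hl.2, mul_zero, add_zero]

variable {R : Type*} [Zero R] [Add R] [Neg R] [Mul R] [IntCast R]

theorem horner_add {φ : R → A} (hφ : PreservesOps φ) (x : A) (l m : List R) :
    horner φ x (CoeffList.add l m) = horner φ x l + horner φ x m := by
  induction l, m using CoeffList.add.induct with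
  | case1 m => simp only [CoeffList.add, horner, zero_add]
  | case2 l => cases l <;> simp only [CoeffList.add, horner, add_zero]
  | case3 a l b m ih => simp only [CoeffList.add, horner, hφ.add, ih]; ring

theorem horner_map_mul {φ : R → A} (hφ : PreservesOps φ) (x : A) (a : R) (l : List R) :
    horner φ x (l.map (a * ·)) = φ a * horner φ x l := by
  induction l with
  | nil => simp only [List.map_nil, horner, mul_zero]
  | cons b l ih => simp only [List.map_cons, horner, hφ.mul, ih]; ring

theorem horner_mul {φ : R → A} (hφ : PreservesOps φ) (x : A) (l m : List R) :
    horner φ x (CoeffList.mul l m) = horner φ x l * horner φ x m := by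
  induction l with
  | nil => simp only [CoeffList.mul, horner, zero_mul]
  | cons a l ih =>
    simp only [CoeffList.mul, horner_add hφ, horner_map_mul hφ, horner, hφ.zero, ih]
    ring

theorem horner_map_neg {φ : R → A} (hφ : PreservesOps φ) (x : A) (l : List R) :
    horner φ x (l.map (- ·)) = -horner φ x l := by
  induction l with
  | nil => simp only [List.map_nil, horner, neg_zero]
  | cons a l ih => simp only [List.map_cons, horner, hφ.neg, ih]; ring

theorem preservesOps_horner {φ : R → A} (hφ : PreservesOps φ) (x : A) :
    PreservesOps (B := CoeffList R) (horner φ x) where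
  zero := rfl
  add := horner_add hφ x
  neg := horner_map_neg hφ x
  mul := horner_mul hφ x
  intCast z := by
    change φ z + x * 0 = z
    rw [hφ.intCast, mul_zero, add_zero]

theorem PreservesOps.map_horner {C : Type*} {φ : R → A} (hφ : PreservesOps φ) (ψ : C → R) (x : R)
    (l : List C) : φ (horner ψ x l) = horner (φ ∘ ψ) (φ x) l := by
  induction l with
  | nil => exact hφ.zero
  | cons c l ih => simp only [horner, hφ.add, hφ.mul, ih, Function.comp_apply]

end Horner

section Certificate

/-- The coefficients of `a0`, constant term first. -/
def a0Coeffs : List ℤ := [-2871, 20010, -48459, 41218]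

/-- The coefficients of `a1`, constant term first. -/
def a1Coeffs : List ℤ := [-120582, -543402, 920112, 7581006, 2622730, -39076836, -48634688,
  72005308, 178061760, 97604224]

/-- The coefficients of `a2`, constant term first. -/
def a2Coeffs : List ℤ :=
  [-44541, 170716, 115771, -1182926, 647130, 2947148, -3144314, -2617900, 3874492]

/-- The coefficients of the certificate `X(n, s, t)`: the outer index is the exponent of `s`, the
middle one that of `t`, and the inner one that of `n`. They solve the linear system expressing
`certificateDefect n s t = 0`. -/
def certificateCoeffs : List (List (List ℤ)) := [
  [[-397380, -10933392, 84313256, 24912142, -871628452, 330192854, 3958957700, -1740088062,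
    -9698298778, 3133917604, 13170438452, -2653829346, -10326134596, 1177554922, 4782117408,
    -296926894, -1099367610, 35200172],
   [702842, 26387539, -176364291, -7597015, 1449362387, -1013443282, -4670015504, 4092512110,
    6071201084, -6786401729, -865866891, 6362626197, -2370973709, -2716934328, 1857614062,
    -202643900, -1295659980, 245494408],
   [-17064, -5155660, -27034417, -32701106, 664740253, 338169024, -4364013916, -1321029764,
    11886057730, 3966811380, -9754548225, -201598890, 384895553, -5512661928, -1464625314,
    1922585760, -245494408],
   [297238, -25310029, 225640808, -63815861, -2000097738, 1510725112, 7156035604, -5226125998,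
    -11584541722, 7570497871, 4962880236, -12967914293, -6694806370, 4243532966, 1841633608,
    -245494408],
   [-1765132, 4270450, -5665725, 135402596, -99119583, -1443525606, 1201366953, 5825444028,
    -3340563753, -11270267252, 1833228688, 8287280240, 412361464, -2029436184, 490988816],
   [1179496, 10741092, -100889631, -56865508, 856745789, 244421898, -2950488851, -1600476156,
    3636900623, 4156350946, 1980147710, 366551792, -404898896, -490988816]],
  [[529840, 14842776, -104852080, -79436300, 1083579920, 49384558, -4835643622, 124504378,
    11069714668, 497458908, -12884666704, -563518104, 8596258724, -41651610, -3469506330,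
    243909802, 544585584, -245494408],
   [-484832, -36462112, 204931388, -8360854, -1632489718, 1879632554, 4953598106, -9358008374,
    -6335023694, 21686079282, 5416326034, -23445197320, -5862467188, 10050414148, 1127305000,
    -2650907820, 245494408],
   [906150, 33291055, -77778745, 43228253, -6113995, -1892317008, 3114634946, 9391270842,
    -11401610778, -22119663657, 5966720273, 10671362573, -3726418769, -2764173462, 1592546550,
    -122747204],
   [-2834002, -21752827, 2397735, 282946187, 348343941, -1518187826, -2910794969, 3351751930,
    9587834559, 1381430571, -5991881110, -718548845, 1510965794, 224013146, 122747204],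
   [2280224, 21014500, -105973322, -242376028, 831659684, 1467857896, -2503866872, -5366149536,
    1348229008, 8262773900, 3758330586, -2672502212, -1281151244, 245494408]],
  [[],
   [-678436, 1970950, 56715644, -21614535, -657071971, -69450036, 3370658324, 1770775488,
    -8421649964, -8257324456, 6635267258, 10061800683, -421213373, -3854399706, -562027482,
    368241612],
   [-1543370, -1275769, -107251717, 45648767, 1380137864, -7801806, -6945625978, -2846766996,
    15904786914, 14213778977, -7076113165, -9028059283, 979472056, 1390097102, -368241612],
   [3199358, 417149, 69500635, -118640464, -929360231, 832275256, 4571171307, -1111993782,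
    -10600724135, -4963377785, 4540458666, 2940034882, -635897936, -245494408],
   [14748, -9237142, 7855567, 101187272, -14709497, -504832750, -320899433, 1254517888,
    1837842153, -483322908, -1820424778, -293485528, 245494408],
   [-1124760, 5761208, 1981451, -48537158, 9678737, 175703650, 34894867, -312846546, -386032097,
    10866762, 386906682, 122747204]],
  [[],
   [],
   [2856066, -1966267, -47674913, 23287196, 322894762, -70509382, -1101847746, -107241092,
    1753904206, 465440085, -1272606053, -431757744, 342473678, 122747204],
   [-3483426, -1787649, 75188087, -6245040, -542671253, 53212146, 1847315639, 185754126,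
    -2808039145, -643172857, 1772148782, 440022202, -368241612],
   [],
   [494900, -1819860, -140194, 11390724, -14309950, -21238888, 50887098, -2042500, -55453806,
    32232476]],
  [[-132460, -3909384, 20538824, 54753838, -210476964, -381172784, 855914392, 1601453984,
    -1260819652, -3437912916, -492995032, 2404436882, 1333465300, -237649620, -245494408],
   [460426, 8898383, -61667237, -98156488, 591942830, 612762514, -2283554030, -2603658940,
    3322752494, 5382444803, 529579091, -1787721388, -216703078, 368241612],
   [-1407022, -3361975, 69220360, 15990362, -606316876, -144378922, 2300649800, 1295607904,
    -3593754906, -3913044479, -248036864, 940464422, 122747204],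
   [966392, -4588932, -3219785, 43191746, 3850337, -174361258, -70996941, 342787006, 411377063,
    -56498430, -369759994, -122747204],
   [],
   [-19796, -34104, 90494, 142158, -181068, -204972, 192806, 96918, -82436]]]

variable {B : Type*} [Zero B] [Add B] [Neg B] [Mul B] [IntCast B]

/-- The polynomial `X(n, s, t)` of the telescoping certificate. -/
def certificate (n s t : B) : B :=
  horner (horner (horner Int.cast n) t) s certificateCoeffs

/-- The factors acquired by the summand when its Pochhammer index increases. -/
def linearFactors (n s t : B) (i : ℤ) : B := (s + n + i) * (t + n + i) * (s + t + n + i)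

/-- The factors lost by the summand when its weight index increases. -/
def squareFactors (n s t : B) (i : ℤ) : B :=
  (s + -n + i) * (t + -n + i) * ((s + -n + i) * (t + -n + i))

/-- The difference in `s` of `s ^ 3 * (s + t) * X(n, s, t)`, taken relative to the summand. -/
def certificateStep (n s t : B) : B :=
  (s + n + (-1 : ℤ)) * ((s + -n + (-1 : ℤ)) * (s + -n + (-1 : ℤ))) * (s + t + n + (-1 : ℤ)) *
      certificate n (s + (1 : ℤ)) t +
    -(s * s * s * (s + t) * certificate n s t)

/-- The failure of the certificate to telescope: the recurrence and the differences in `s` and `t`,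
both taken relative to the summand and over the common denominator. -/
def certificateDefect (n s t : B) : B :=
  let c : ℤ → B := Int.cast
  let lin := linearFactors n s t
  let sq := squareFactors n s t
  let m := n + c (-1)
  let p := n + c 1
  c 4 * m * p *
      (c 2 * (c 2 * n + c 1) * (p * p * p * p * p * p) * horner c n a0Coeffs *
            (lin (-1) * lin 0 * lin 1) +
          -(horner c n a1Coeffs * (lin (-1) * lin 0) * sq (-1)) +
        -(c 2 * horner c n a2Coeffs * lin (-1) * (sq (-1) * sq 0)) +
      m * m * m * m * horner c p a0Coeffs * (sq (-1) * sq 0 * sq 1)) +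
    -(certificateStep n s t + certificateStep n t s)

theorem PreservesOps.map_certificate {A : Type*} [CommRing A] {φ : B → A} (hφ : PreservesOps φ)
    (n s t : B) : φ (certificate n s t) = certificate (φ n) (φ s) (φ t) := by
  have hcast : φ ∘ (Int.cast : ℤ → B) = Int.cast := funext hφ.intCast
  have hn : φ ∘ horner Int.cast n = horner Int.cast (φ n) :=
    funext fun l ↦ by rw [Function.comp_apply, hφ.map_horner, hcast]
  have ht : φ ∘ horner (horner Int.cast n) t = horner (horner Int.cast (φ n)) (φ t) :=
    funext fun l ↦ by rw [Function.comp_apply, hφ.map_horner, hn]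
  rw [certificate, hφ.map_horner, ht, certificate]

theorem PreservesOps.map_certificateDefect {A : Type*} [CommRing A] {φ : B → A}
    (hφ : PreservesOps φ) (n s t : B) :
    φ (certificateDefect n s t) = certificateDefect (φ n) (φ s) (φ t) := by
  have hcast : φ ∘ (Int.cast : ℤ → B) = Int.cast := funext hφ.intCast
  simp only [certificateDefect, certificateStep, linearFactors, squareFactors, hφ.add, hφ.neg,
    hφ.mul, hφ.intCast, hφ.map_certificate, hφ.map_horner, hcast]

/-- The list model of `ℤ[n, s, t]`, with `n` innermost and `s` outermost. -/
abbrev TrivariateList := CoeffList (CoeffList (CoeffList ℤ))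

/-- The variable `n` in the list model. -/
def listN : TrivariateList := [[[0, 1]]]

/-- The variable `s` in the list model. -/
def listS : TrivariateList := [[], [[1]]]

/-- The variable `t` in the list model. -/
def listT : TrivariateList := [[[], [1]]]

theorem certificateDefect_coeffList_eq_zero :
    List.all (α := List (List ℤ)) (certificateDefect (B := TrivariateList) listN listS listT)
      (List.all · (List.all · (· = 0))) := by
  decide +kernel

theorem certificateDefect_eq_zero {A : Type*} [CommRing A] (n s t : A) :
    certificateDefect n s t = 0 := by
  have hφ := preservesOps_horner (preservesOps_horner (preservesOps_horner
    (PreservesOps.ringHom (Int.castRingHom A)) n) t) s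
  have h := hφ.map_certificateDefect listN listS listT
  simp only [listN, listS, listT, horner, map_zero, map_one, mul_zero, mul_one, zero_add,
    add_zero] at h
  refine h.symm.trans (horner_eq_zero (fun c ↦ horner_eq_zero fun d ↦ horner_eq_zero fun z hz ↦ ?_)
    certificateDefect_coeffList_eq_zero)
  rw [of_decide_eq_true hz, map_zero]

theorem horner_a0Coeffs {A : Type*} [CommRing A] [Algebra ℚ A] (x : ℚ) :
    horner Int.cast (algebraMap ℚ A x) a0Coeffs = algebraMap ℚ A (a0 x) := by
  simp only [horner, a0Coeffs, a0, map_add, map_sub, map_mul, map_pow, map_ofNat]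
  push_cast
  ring

theorem horner_a1Coeffs {A : Type*} [CommRing A] [Algebra ℚ A] (x : ℚ) :
    horner Int.cast (algebraMap ℚ A x) a1Coeffs = algebraMap ℚ A (a1 x) := by
  simp only [horner, a1Coeffs, a1, map_add, map_sub, map_mul, map_pow, map_ofNat]
  push_cast
  ring

theorem horner_a2Coeffs {A : Type*} [CommRing A] [Algebra ℚ A] (x : ℚ) :
    horner Int.cast (algebraMap ℚ A x) a2Coeffs = algebraMap ℚ A (a2 x) := by
  simp only [horner, a2Coeffs, a2, map_add, map_sub, map_mul, map_pow, map_ofNat]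
  push_cast
  ring

theorem certificate_identity {A : Type*} [CommRing A] [Algebra ℚ A] (n : ℚ) {N : A}
    (hN : algebraMap ℚ A n = N) (s t : A) :
    (4 * (n ^ 2 - 1)) •
        ((2 * (2 * n + 1) * (n + 1) ^ 6 * a0 n) •
            (linearFactors N s t (-1) * linearFactors N s t 0 * linearFactors N s t 1) -
          a1 n • (linearFactors N s t (-1) * linearFactors N s t 0 * squareFactors N s t (-1)) -
          (2 * a2 n) •
            (linearFactors N s t (-1) * squareFactors N s t (-1) * squareFactors N s t 0) +
          ((n - 1) ^ 4 * a0 (n + 1)) •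
            (squareFactors N s t (-1) * squareFactors N s t 0 * squareFactors N s t 1)) =
      certificateStep N s t + certificateStep N t s := by
  subst hN
  have h := certificateDefect_eq_zero (algebraMap ℚ A n) s t
  have h1 : algebraMap ℚ A n + 1 = algebraMap ℚ A (n + 1) := by rw [map_add, map_one]
  simp only [certificateDefect, Int.cast_neg, Int.cast_one, Int.cast_ofNat, h1, horner_a0Coeffs,
    horner_a1Coeffs, horner_a2Coeffs] at h
  simp only [Algebra.smul_def, map_mul, map_sub, map_add, map_pow, map_one, map_ofNat] at h ⊢
  linear_combination h

end Certificate

section CertificateProperties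

variable {A : Type*} [CommRing A]

open Polynomial

theorem natDegree_horner_le {C : Type*} {φ : C → A[X]} {d : ℕ} {l : List C}
    (h : ∀ c ∈ l, (φ c).natDegree ≤ d) (p : A[X]) :
    (horner φ p l).natDegree ≤ d + (l.length - 1) * p.natDegree := by
  induction l with
  | nil => simp only [horner, natDegree_zero, zero_le]
  | cons c l ih =>
    rw [List.forall_mem_cons] at h
    refine (natDegree_add_le _ _).trans (max_le (h.1.trans (Nat.le_add_right _ _)) ?_)
    cases l with
    | nil => simp only [horner, mul_zero, natDegree_zero, zero_le]
    | cons c' l =>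
      refine natDegree_mul_le.trans ((Nat.add_le_add_left (ih h.2) _).trans_eq ?_)
      simp only [List.length_cons, Nat.add_sub_cancel]
      ring

theorem natDegree_horner_C_le {C' : Type*} {φ : C' → A[X]} {d : ℕ} {l : List C'}
    (h : ∀ c ∈ l, (φ c).natDegree ≤ d) (x : A) : (horner φ (C x) l).natDegree ≤ d :=
  (natDegree_horner_le h (C x)).trans_eq (by rw [natDegree_C, mul_zero, add_zero])

theorem natDegree_certificate_X_C_le (n t : A) :
    (certificate (C n) X (C t)).natDegree ≤ 4 := by
  have hcoeff (l : List (List ℤ)) : (horner (horner Int.cast (C n)) (C t) l).natDegree ≤ 0 :=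
    natDegree_horner_C_le (fun _ _ ↦
      natDegree_horner_C_le (fun z _ ↦ (natDegree_intCast z).le) n) t
  exact (natDegree_horner_le (fun l _ ↦ hcoeff l) X).trans <|
    (Nat.add_le_add_left (Nat.mul_le_mul_left _ natDegree_X_le) 0).trans (by decide)

theorem natDegree_certificate_C_X_le (n s : A) :
    (certificate (C n) (C s) X).natDegree ≤ 5 := by
  have hcoeff (l : List ℤ) : (horner Int.cast (C n) l).natDegree ≤ 0 :=
    natDegree_horner_C_le (fun z _ ↦ (natDegree_intCast z).le) n
  have hlength : ∀ l ∈ certificateCoeffs, 0 + (l.length - 1) * 1 ≤ 5 := by decide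
  exact natDegree_horner_C_le (fun l hl ↦ (natDegree_horner_le (fun l _ ↦ hcoeff l) X).trans <|
    (Nat.add_le_add_left (Nat.mul_le_mul_left _ natDegree_X_le) 0).trans (hlength l hl)) s

theorem aeval_certificate {W : Type*} [CommRing W] [Algebra A W] (x : W) (p q s : A[X]) :
    aeval x (certificate p q s) = certificate (aeval x p) (aeval x q) (aeval x s) :=
  (PreservesOps.ringHom (aeval (R := A) x).toRingHom).map_certificate p q s

end CertificateProperties

section Weight

open Nat Polynomial

variable {A : Type*} [CommRing A] [Algebra ℚ A]

/-- The first-order expansion at `s = k + e`, where `e ^ 2 = 0`, of `e ^ 2 / ∏ j ≤ m, (s - j) ^ 2`.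
It vanishes for `k > m`. -/
def weight (e : A) (m k : ℕ) : A :=
  ((m.choose k / m ! : ℚ) ^ 2) • (1 + (2 * (harmonic (m - k) - harmonic k)) • e)

theorem weight_eq_zero (e : A) {m k : ℕ} (h : m < k) : weight e m k = 0 := by
  simp [weight, choose_eq_zero_of_lt h]

theorem weight_add_left (e : A) (k j : ℕ) :
    weight e (k + j) k =
      ((1 / (k ! * j ! : ℚ)) ^ 2) • (1 + (2 * (harmonic j - harmonic k)) • e) := by
  have hchoose : ((k + j).choose k / (k + j)! : ℚ) = 1 / (k ! * j !) := by
    rw [Nat.cast_add_choose]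
    field_simp
  rw [weight, hchoose, Nat.add_sub_cancel_left]

theorem map_weight {A' : Type*} [CommRing A'] [Algebra ℚ A'] (g : A →+* A') (e : A) (m k : ℕ) :
    g (weight e m k) = weight (g e) m k := by
  simp only [weight, map_rat_smul, map_add, map_one]

theorem smul_one_add_smul_mul_sq {e : A} (he : e ^ 2 = 0) {x c c' h h' : ℚ}
    (h₀ : c * x ^ 2 = c') (h₁ : c * (h * x ^ 2 + 2 * x) = c' * h') :
    c • (1 + h • e) * (algebraMap ℚ A x + e) ^ 2 = c' • (1 + h' • e) := by
  have h₀' := congrArg (algebraMap ℚ A) h₀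
  have h₁' := congrArg (algebraMap ℚ A) h₁
  simp only [Algebra.smul_def, map_mul, map_add, map_pow, map_ofNat] at h₀' h₁' ⊢
  set a := algebraMap ℚ A
  linear_combination h₀' + e * h₁' + a c * (1 + a h * e + 2 * a h * a x) * he

theorem weight_succ_left_mul {e : A} (he : e ^ 2 = 0) (m k : ℕ) :
    weight e (m + 1) k * (k + e - (m + 1)) ^ 2 = weight e m k := by
  rcases lt_trichotomy k (m + 1) with h | rfl | h
  · obtain ⟨j, rfl⟩ := Nat.exists_eq_add_of_le (Nat.lt_succ_iff.1 h)
    have hx : (k : A) + e - ((k + j : ℕ) + 1) = algebraMap ℚ A (-(j + 1)) + e := by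
      simp only [map_neg, map_add, map_natCast, map_one, Nat.cast_add]; ring
    rw [hx, add_assoc k j 1, weight_add_left, weight_add_left]
    refine smul_one_add_smul_mul_sq he ?_ ?_ <;> simp only [harmonic_succ, factorial_succ] <;>
      push_cast
    · field_simp
    · field_simp; ring
  · rw [weight_eq_zero e (Nat.lt_succ_self m), Nat.cast_succ, add_sub_cancel_left, he, mul_zero]
  · rw [weight_eq_zero e h, weight_eq_zero e (by lia), zero_mul]

theorem weight_succ_succ_mul {e : A} (he : e ^ 2 = 0) (m k : ℕ) :
    weight e (m + 1) (k + 1) * (k + 1 + e) ^ 2 = weight e m k := by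
  rcases lt_or_ge m k with h | h
  · rw [weight_eq_zero e h, weight_eq_zero e (by lia), zero_mul]
  · obtain ⟨j, rfl⟩ := Nat.exists_eq_add_of_le h
    have hx : (k : A) + 1 + e = algebraMap ℚ A (k + 1) + e := by
      simp only [map_add, map_natCast, map_one]
    rw [hx, add_right_comm k j 1, weight_add_left, weight_add_left]
    refine smul_one_add_smul_mul_sq he ?_ ?_ <;> simp only [harmonic_succ, factorial_succ] <;>
      push_cast
    · field_simp
    · field_simp; ring

end Weight

section Residues

open Finset Nat Polynomial

variable {B W M : Type*} [CommRing B] [CommRing W] [Algebra B W] [Algebra ℚ W] [AddCommGroup M]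
  [Module ℚ M] {π : W →ₗ[ℚ] M} {e : W}

/-- The sum of the residues of `P(s) / ∏ j ≤ m, (s - j) ^ 2`, where `π` reads off the coefficient
of the infinitesimal `e`. -/
def residueSum (π : W →ₗ[ℚ] M) (e : W) (m : ℕ) : B[X] →+ M where
  toFun P := ∑ k ∈ range (m + 1), π (aeval (k + e) P * weight e m k)
  map_zero' := by simp only [map_zero, zero_mul, sum_const_zero]
  map_add' P Q := by simp only [map_add, add_mul, sum_add_distrib]

theorem residueSum_apply (π : W →ₗ[ℚ] M) (e : W) (m : ℕ) (P : B[X]) :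
    residueSum π e m P = ∑ k ∈ range (m + 1), π (aeval (k + e) P * weight e m k) :=
  rfl

theorem residueSum_sub_sq_mul (he : e ^ 2 = 0) (m : ℕ) (N : B[X]) :
    residueSum π e (m + 1) ((X - (m + 1 : B[X])) ^ 2 * N) = residueSum π e m N := by
  rw [residueSum_apply, sum_range_succ, residueSum_apply, Nat.cast_add_one]
  have hlast : aeval ((m : W) + 1 + e) ((X - (m + 1 : B[X])) ^ 2 * N) = 0 := by
    simp only [map_mul, map_pow, map_sub, map_add, aeval_X, map_natCast, map_one,
      add_sub_cancel_left, he, zero_mul]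
  rw [hlast, zero_mul, map_zero, add_zero]
  refine sum_congr rfl fun k _ ↦ congrArg π ?_
  rw [← weight_succ_left_mul he m k, map_mul]
  simp only [map_pow, map_sub, map_add, aeval_X, map_natCast, map_one]
  ring

theorem residueSum_X_sq_mul_comp (he : e ^ 2 = 0) (m : ℕ) (N : B[X]) :
    residueSum π e (m + 1) (X ^ 2 * N.comp (X - 1)) = residueSum π e m N := by
  rw [residueSum_apply, sum_range_succ', residueSum_apply]
  have hfirst : aeval (((0 : ℕ) : W) + e) (X ^ 2 * N.comp (X - 1)) = 0 := by
    simp only [map_mul, map_pow, aeval_X, Nat.cast_zero, zero_add, he, zero_mul]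
  rw [hfirst, zero_mul, map_zero, add_zero]
  refine sum_congr rfl fun k _ ↦ congrArg π ?_
  have hk : (k : W) + 1 + e - 1 = k + e := by ring
  rw [← weight_succ_succ_mul he m k, map_mul, aeval_comp]
  simp only [map_pow, map_sub, aeval_X, map_one, Nat.cast_add_one, hk]
  ring

theorem residueSum_C (hπ : ∀ b : B, π (algebraMap B W b) = 0) (m : ℕ) (b : B) :
    residueSum π e m (C b) = 0 := by
  have hreflect : residueSum π e m (C b) = -residueSum π e m (C b) := by
    rw [residueSum_apply, ← sum_neg_distrib]
    refine (sum_range_reflect _ _).symm.trans (sum_congr rfl fun k hk ↦ ?_)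
    obtain ⟨j, rfl⟩ := Nat.exists_eq_add_of_le (Nat.lt_succ_iff.1 (mem_range.1 hk))
    have hj : k + j + 1 - 1 - k = j := by lia
    rw [aeval_C, aeval_C, hj, weight_add_left, add_comm k j, weight_add_left, mul_comm (k ! : ℚ)]
    simp only [mul_smul_comm, mul_add, mul_one, map_smul, map_add, hπ]
    module
  have : IsAddTorsionFree M := .of_module_rat M
  exact self_eq_neg.1 hreflect

theorem residueSum_C_mul_X (he : e ^ 2 = 0) (hπ : ∀ b : B, π (algebraMap B W b) = 0) (m : ℕ)
    (b : B) : residueSum π e (m + 1) (C b * X) = 0 := by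
  have hX : (2 * (m + 1)) • (C b * X : B[X]) =
      X ^ 2 * (C b).comp (X - 1) - (X - (m + 1 : B[X])) ^ 2 * C b + ((m + 1) ^ 2) • C b := by
    simp only [nsmul_eq_mul, Nat.cast_mul, Nat.cast_add, Nat.cast_pow, Nat.cast_ofNat,
      Nat.cast_one, C_comp]
    ring
  have : IsAddTorsionFree M := .of_module_rat M
  refine (smul_eq_zero_iff_right (by lia : 2 * (m + 1) ≠ 0)).1 ?_
  rw [← map_nsmul, hX, map_add, map_sub, map_nsmul, residueSum_X_sq_mul_comp he,
    residueSum_sub_sq_mul he, sub_self, residueSum_C hπ, smul_zero, add_zero]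

theorem residueSum_eq_zero (he : e ^ 2 = 0) (hπ : ∀ b : B, π (algebraMap B W b) = 0) {m : ℕ}
    {P : B[X]} (hP : P.natDegree ≤ 2 * m) : residueSum π e m P = 0 := by
  rcases subsingleton_or_nontrivial B with _ | _
  · rw [Subsingleton.elim P 0, map_zero]
  induction m generalizing P with
  | zero =>
    rw [eq_C_of_natDegree_le_zero (hP.trans_eq (mul_zero 2)), residueSum_C hπ]
  | succ m ih =>
    let D : B[X] := (X - C (m + 1 : B)) ^ 2
    have hD : D.Monic := (monic_X_sub_C _).pow 2
    have hdeg : D.natDegree = 2 := by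
      rw [(monic_X_sub_C _).natDegree_pow, natDegree_X_sub_C, mul_one]
    have hrem : (P %ₘ D).natDegree ≤ 1 := by
      have := natDegree_modByMonic_lt P hD fun h ↦ by simp [h] at hdeg
      lia
    have hquot : residueSum π e (m + 1) (D * (P /ₘ D)) = 0 := by
      have := residueSum_sub_sq_mul (π := π) he m (P /ₘ D)
      rw [ih (by rw [natDegree_divByMonic P hD]; lia)] at this
      simpa only [D, map_add, map_natCast, map_one] using this
    rw [← modByMonic_add_div P D, map_add, hquot, add_zero, eq_X_add_C_of_natDegree_le_one hrem,
      map_add, residueSum_C_mul_X he hπ, residueSum_C hπ, add_zero]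

end Residues

section Summand

open Finset

variable {A : Type*} [CommRing A]

/-- The Pochhammer symbol `(z + 1)_a`. -/
def rising (a : ℕ) (z : A) : A := ∏ j ∈ range a, (z + (j + 1))

theorem rising_succ (a : ℕ) (z : A) : rising (a + 1) z = rising a z * (z + (a + 1)) :=
  prod_range_succ _ a

theorem rising_add_one_mul (a : ℕ) (z : A) :
    rising a (z + 1) * (z + 1) = rising a z * (z + (a + 1)) := by
  rw [← rising_succ, rising, rising, prod_range_succ', Nat.cast_zero, zero_add]
  congr 1
  refine prod_congr rfl fun j _ ↦ ?_
  push_cast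
  ring

theorem map_rising {A' : Type*} [CommRing A'] (g : A →+* A') (a : ℕ) (z : A) :
    g (rising a z) = rising a (g z) := by
  simp only [rising, map_prod, map_add, map_natCast, map_one]

theorem natDegree_rising_le (a : ℕ) {p : Polynomial A} (hp : p.natDegree ≤ 1) :
    (rising a p).natDegree ≤ a := by
  refine (Polynomial.natDegree_prod_le _ _).trans ((sum_le_card_nsmul _ _ 1 fun j _ ↦ ?_).trans_eq
    (by rw [card_range, smul_eq_mul, mul_one]))
  rw [← Nat.cast_add_one, ← Polynomial.C_eq_natCast, Polynomial.natDegree_add_C]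
  exact hp

variable [Algebra ℚ A]

/-- With `x = k + e` and `y = l + f`, the product of `(x + 1)_a * (y + 1)_a * (x + y + 1)_a` and
the weights of index `b` at `k` and `l`. -/
def summand (e f : A) (a b k l : ℕ) : A :=
  rising a (k + e) * weight e b k * (rising a (l + f) * weight f b l) * rising a (k + e + (l + f))

theorem summand_comm (e f : A) (a b k l : ℕ) : summand e f a b k l = summand f e a b l k := by
  rw [summand, summand, add_comm ((l : A) + f), mul_comm (rising a (k + e) * weight e b k)]

theorem summand_eq_zero (e f : A) (a : ℕ) {b k l : ℕ} (h : b < k ∨ b < l) :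
    summand e f a b k l = 0 := by
  rcases h with h | h <;> simp only [summand, weight_eq_zero _ h, mul_zero, zero_mul]

theorem summand_succ_left (e f : A) {a : ℕ} {n : A} {i : ℤ} (hi : n + i = a + 1) (b k l : ℕ) :
    summand e f (a + 1) b k l = summand e f a b k l * linearFactors n (k + e) (l + f) i := by
  simp only [summand, rising_succ, linearFactors, add_assoc _ n, hi]
  ring

variable {e f : A}

theorem summand_succ_right_mul (he : e ^ 2 = 0) (hf : f ^ 2 = 0) (a : ℕ) {b : ℕ} {n : A} {i : ℤ}
    (hi : n - i = b + 1) (k l : ℕ) :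
    summand e f a (b + 1) k l * squareFactors n (k + e) (l + f) i = summand e f a b k l := by
  rw [summand, summand, ← weight_succ_left_mul he b, ← weight_succ_left_mul hf b, ← hi,
    squareFactors]
  ring

theorem summand_add_one_mul (he : e ^ 2 = 0) (f : A) (a b k l : ℕ) :
    summand e f a (b + 1) (k + 1) l * ((k + e + 1) ^ 3 * (k + e + 1 + (l + f))) =
      summand e f a (b + 1) k l *
        ((k + e + (a + 1)) * (k + e - (b + 1)) ^ 2 * (k + e + (l + f) + (a + 1))) := by
  have hweight := (weight_succ_succ_mul he b k).trans (weight_succ_left_mul he b k).symm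
  have hx := rising_add_one_mul a (k + e)
  have hxy := rising_add_one_mul a (k + e + (l + f))
  have hk : ((k + 1 : ℕ) : A) + e = k + e + 1 := by push_cast; ring
  have hkl : (k : A) + e + 1 + (l + f) = k + e + (l + f) + 1 := by ring
  rw [summand, summand, hk, hkl]
  linear_combination (rising a (l + f) * weight f (b + 1) l) *
    (rising a ((k : A) + e + 1) * (k + e + 1) * (rising a ((k : A) + e + (l + f) + 1) *
        (k + e + (l + f) + 1)) * hweight +
      weight e (b + 1) k * (k + e - (b + 1)) ^ 2 * ((rising a ((k : A) + e + (l + f) + 1) *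
        (k + e + (l + f) + 1)) * hx + rising a ((k : A) + e) * (k + e + (a + 1)) * hxy))

end Summand

section Telescoping

variable {A : Type*} [CommRing A] [Algebra ℚ A]

/-- The operator of the recurrence, shifted by `n = r + 2` and normalised so as to annihilate
`(-1) ^ n * n ! / (2 * n)! * y n` when `y` satisfies `Rec1`. -/
def recOperator {M : Type*} [AddCommGroup M] [Module ℚ M] (u : ℕ → M) (r : ℕ) : M :=
  let n : ℚ := r + 2
  (2 * (2 * n + 1) * (n + 1) ^ 6 * a0 n) • u (r + 3) - a1 n • u (r + 2) -
    (2 * a2 n) • u (r + 1) + ((n - 1) ^ 4 * a0 (n + 1)) • u r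

/-- The telescoping companion of the diagonal summands in the variable `k`. -/
def flux (e f : A) (r k l : ℕ) : A :=
  summand e f r (r + 3) k l *
    ((k + e) ^ 3 * (k + e + (l + f)) * certificate (algebraMap ℚ A (r + 2)) (k + e) (l + f))

variable {e f : A}

theorem flux_zero_left (he : e ^ 2 = 0) (f : A) (r l : ℕ) : flux e f r 0 l = 0 := by
  have he3 : e ^ 3 = 0 := by rw [pow_succ, he, zero_mul]
  simp only [flux, Nat.cast_zero, zero_add, he3, zero_mul, mul_zero]

theorem flux_eq_zero (e f : A) {r k : ℕ} (l : ℕ) (hk : r + 3 < k) : flux e f r k l = 0 := by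
  rw [flux, summand_eq_zero e f r (.inl hk), zero_mul]

theorem flux_succ_sub_flux (he : e ^ 2 = 0) (f : A) (r k l : ℕ) :
    flux e f r (k + 1) l - flux e f r k l = summand e f r (r + 3) k l *
      certificateStep (algebraMap ℚ A (r + 2)) (k + e) (l + f) := by
  have hshift := summand_add_one_mul he f r (r + 2) k l
  have hk : ((k + 1 : ℕ) : A) + e = k + e + 1 := by push_cast; ring
  simp only [flux, certificateStep, hk, map_add, map_natCast, map_ofNat, Int.cast_neg,
    Int.cast_one] at hshift ⊢
  push_cast at hshift
  linear_combination certificate ((r : A) + 2) (k + e + 1) (l + f) * hshift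

theorem smul_recOperator_summand (he : e ^ 2 = 0) (hf : f ^ 2 = 0) (r k l : ℕ) :
    (4 * ((r + 2 : ℚ) ^ 2 - 1)) • recOperator (fun n ↦ summand e f n n k l) r =
      flux e f r (k + 1) l - flux e f r k l + (flux f e r (l + 1) k - flux f e r l k) := by
  rw [flux_succ_sub_flux he, flux_succ_sub_flux hf, summand_comm f e, ← mul_add,
    ← certificate_identity _ rfl]
  set n : A := algebraMap ℚ A (r + 2)
  have hn : n = r + 2 := by simp only [n, map_add, map_natCast, map_ofNat]
  have raise₁ := summand_succ_left e f (n := n) (i := -1) (a := r) (by rw [hn]; push_cast; ring)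
  have raise₂ := summand_succ_left e f (n := n) (i := 0) (a := r + 1) (by rw [hn]; push_cast; ring)
  have raise₃ := summand_succ_left e f (n := n) (i := 1) (a := r + 2) (by rw [hn]; push_cast; ring)
  have lower₁ (a : ℕ) := summand_succ_right_mul he hf a (n := n) (i := -1) (b := r + 2)
    (by rw [hn]; push_cast; ring)
  have lower₂ (a : ℕ) := summand_succ_right_mul he hf a (n := n) (i := 0) (b := r + 1)
    (by rw [hn]; push_cast; ring)
  have lower₃ (a : ℕ) := summand_succ_right_mul he hf a (n := n) (i := 1) (b := r)
    (by rw [hn]; push_cast; ring)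
  simp only [recOperator, ← lower₃, ← lower₂, ← lower₁, raise₃, raise₂, raise₁]
  rw [mul_smul_comm]
  congr 1
  simp only [mul_add, mul_sub, mul_smul_comm]
  congr! 2 <;> ring_nf

end Telescoping

section ReducedFlux

open Finset Polynomial

/-- `flux` divided by `(k + e) * (k + e + (l + f))`: what remains of it once a difference of the
test function has contributed that denominator. -/
def reducedFlux {A : Type*} [CommRing A] [Algebra ℚ A] (e f : A) (r k l : ℕ) : A :=
  summand e f r (r + 3) k l *
    ((k + e) ^ 2 * certificate (algebraMap ℚ A (r + 2)) (k + e) (l + f))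

theorem flux_eq_reducedFlux_mul {A : Type*} [CommRing A] [Algebra ℚ A] (e f : A) (r k l : ℕ) :
    flux e f r k l = reducedFlux e f r k l * ((k + e) * (k + e + (l + f))) := by
  rw [flux, reducedFlux]
  ring

variable {B W M : Type*} [CommRing B] [Algebra ℚ B] [CommRing W] [Algebra B W] [Algebra ℚ W]
  [AddCommGroup M] [Module ℚ M] {π : W →ₗ[ℚ] M} {e : W}

theorem sum_summand_mul_aeval (he : e ^ 2 = 0) (hπ : ∀ b : B, π (algebraMap B W b) = 0) (g : B)
    (r l : ℕ) {Q : B[X]} (hQ : Q.natDegree ≤ 6) :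
    ∑ k ∈ range (r + 4),
      π (summand e (algebraMap B W g) r (r + 3) k l * aeval ((k : W) + e) Q) = 0 := by
  let P : B[X] := C (rising r (l + g) * weight g (r + 3) l) *
    (rising r X * rising r (X + C (l + g)) * Q)
  have hP : P.natDegree ≤ 2 * (r + 3) := by
    refine (natDegree_C_mul_le _ _).trans (natDegree_mul_le.trans ?_)
    have := natDegree_mul_le (p := rising r X) (q := rising r (X + C ((l : B) + g)))
    have := natDegree_rising_le r (A := B) (p := X) natDegree_X_le
    have := natDegree_rising_le r (A := B) (p := X + C ((l : B) + g))
      (natDegree_add_C.trans_le natDegree_X_le)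
    lia
  rw [← residueSum_eq_zero he hπ hP, residueSum_apply]
  refine sum_congr rfl fun k _ ↦ congrArg π ?_
  have haeval (p : B[X]) : aeval ((k : W) + e) (rising r p) =
      rising r (aeval ((k : W) + e) p) := map_rising (aeval _).toRingHom r p
  rw [summand, map_mul (aeval _), map_mul (aeval _), map_mul (aeval _), haeval, haeval, aeval_C,
    map_add (aeval _), aeval_X, aeval_C, map_mul (algebraMap _ _), map_rising, map_weight, map_add,
    map_natCast]
  ring

theorem sum_reducedFlux_succ_mul (he : e ^ 2 = 0) (hπ : ∀ b : B, π (algebraMap B W b) = 0)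
    (g a : B) (r l : ℕ) :
    ∑ k ∈ range (r + 4),
      π (reducedFlux e (algebraMap B W g) r (k + 1) l * algebraMap B W a) = 0 := by
  let Q : B[X] := X ^ 2 * certificate (C (algebraMap ℚ B (r + 2))) X (C (l + g)) * C a
  have hQ : Q.natDegree ≤ 6 := by
    refine (natDegree_mul_C_le _ _).trans (natDegree_mul_le.trans ?_)
    exact Nat.add_le_add (natDegree_X_pow_le 2) (natDegree_certificate_X_C_le _ _)
  have hterm (k : ℕ) : summand e (algebraMap B W g) r (r + 3) k l * aeval ((k : W) + e) Q =
      reducedFlux e (algebraMap B W g) r k l * algebraMap B W a := by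
    simp only [Q, reducedFlux, map_mul, map_pow, aeval_X, aeval_C, aeval_certificate, map_add,
      map_natCast, map_ofNat]
    ring
  have hsum := sum_summand_mul_aeval he hπ g r l hQ
  simp only [hterm] at hsum
  have hzero : reducedFlux e (algebraMap B W g) r 0 l = 0 := by
    simp only [reducedFlux, Nat.cast_zero, zero_add, he, zero_mul, mul_zero]
  have hlast : reducedFlux e (algebraMap B W g) r (r + 4) l = 0 := by
    rw [reducedFlux, summand_eq_zero _ _ _ (.inl (Nat.lt_succ_self _)), zero_mul]
  have hsucc := sum_range_succ'
    (fun k ↦ π (reducedFlux e (algebraMap B W g) r k l * algebraMap B W a)) (r + 4)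
  rw [sum_range_succ, hsum, hlast, hzero, zero_mul, map_zero, add_zero, add_zero] at hsucc
  exact hsucc.symm

theorem sum_reducedFlux_mul (he : e ^ 2 = 0) (hπ : ∀ b : B, π (algebraMap B W b) = 0)
    (g b : B) (r k : ℕ) :
    ∑ l ∈ range (r + 4),
      π (reducedFlux (algebraMap B W g) e r k l * algebraMap B W b) = 0 := by
  let Q : B[X] :=
    C ((k + g) ^ 2 * b) * certificate (C (algebraMap ℚ B (r + 2))) (C (k + g)) X
  have hQ : Q.natDegree ≤ 6 :=
    (natDegree_C_mul_le _ _).trans ((natDegree_certificate_C_X_le _ _).trans (by decide))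
  rw [← sum_summand_mul_aeval he hπ g r k hQ]
  refine sum_congr rfl fun l _ ↦ congrArg π ?_
  simp only [Q, reducedFlux, summand_comm (algebraMap B W g), map_mul, map_pow, aeval_X,
    aeval_C, aeval_certificate, map_add, map_natCast, map_ofNat]
  ring

end ReducedFlux

section Pairing

open Finset

theorem sum_sub_mul_eq_neg_sum_mul_sub {R : Type*} [CommRing R] {u : ℕ → R} (g : ℕ → R)
    {N : ℕ} (h₀ : u 0 = 0) (hN : u N = 0) :
    ∑ k ∈ range N, (u (k + 1) - u k) * g k = -∑ k ∈ range N, u (k + 1) * (g (k + 1) - g k) := by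
  have htel := sum_range_sub (fun k ↦ u k * g k) N
  rw [h₀, hN, zero_mul, zero_mul, sub_zero] at htel
  rw [eq_neg_iff_add_eq_zero, ← sum_add_distrib, ← htel]
  exact sum_congr rfl fun k _ ↦ by ring

variable {W : Type*} [CommRing W] [Algebra ℚ W]

/-- `e` and `f` are independent infinitesimals of the first order, and `π` behaves like the
coefficient of `e * f` on the algebra that they generate. -/
structure IsTopCoeff (π : W →ₗ[ℚ] ℚ) (e f : W) : Prop where
  sq_left : e ^ 2 = 0
  sq_right : f ^ 2 = 0
  map_one : π 1 = 0
  map_left : π e = 0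
  map_right : π f = 0
  map_mul : π (e * f) = 1

variable {π : W →ₗ[ℚ] ℚ} {e f : W} {F : ℕ → ℕ → W}

namespace IsTopCoeff

theorem symm (h : IsTopCoeff π e f) : IsTopCoeff π f e where
  sq_left := h.sq_right
  sq_right := h.sq_left
  map_one := h.map_one
  map_left := h.map_right
  map_right := h.map_left
  map_mul := mul_comm e f ▸ h.map_mul

theorem map_adjoin_left (h : IsTopCoeff π e f) {u : W} (hu : u ∈ Algebra.adjoin ℚ {e}) :
    π u = 0 := by
  have hspan : ∃ a b : ℚ, u = a • 1 + b • e := by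
    induction hu using Algebra.adjoin_induction with
    | mem u hu => exact ⟨0, 1, by rw [hu]; module⟩
    | algebraMap a => exact ⟨a, 0, by rw [Algebra.algebraMap_eq_smul_one]; module⟩
    | add u v _ _ hu hv =>
      obtain ⟨a, b, rfl⟩ := hu
      obtain ⟨c, d, rfl⟩ := hv
      exact ⟨a + c, b + d, by module⟩
    | mul u v _ _ hu hv =>
      obtain ⟨a, b, rfl⟩ := hu
      obtain ⟨c, d, rfl⟩ := hv
      refine ⟨a * c, a * d + b * c, ?_⟩
      simp only [Algebra.smul_def, _root_.map_mul, map_add]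
      linear_combination algebraMap ℚ W b * algebraMap ℚ W d * h.sq_left
  obtain ⟨a, b, rfl⟩ := hspan
  rw [map_add, map_smul, map_smul, h.map_one, h.map_left, smul_zero, smul_zero, add_zero]

end IsTopCoeff

/-- The sum over all `k` and `l` of the double residues at `(k, l)` of a diagonal summand times a
test function, whose first-order expansion at `(k, l)` is `F k l`. -/
def residuePairing (π : W →ₗ[ℚ] ℚ) (e f : W) (F : ℕ → ℕ → W) (n : ℕ) : ℚ :=
  ∑ k ∈ range (n + 1), ∑ l ∈ range (n + 1), π (summand e f n n k l * F k l)

theorem residuePairing_eq_sum_range {n N : ℕ} (h : n ≤ N) :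
    residuePairing π e f F n =
      ∑ k ∈ range (N + 1), ∑ l ∈ range (N + 1), π (summand e f n n k l * F k l) := by
  have hsub : range (n + 1) ⊆ range (N + 1) := range_subset_range.2 (Nat.succ_le_succ h)
  have hzero {k l : ℕ} (hkl : n < k ∨ n < l) : π (summand e f n n k l * F k l) = 0 := by
    rw [summand_eq_zero _ _ _ hkl, zero_mul, map_zero]
  have hlt {k : ℕ} (hk : k ∉ range (n + 1)) : n < k :=
    Nat.lt_of_succ_le (not_lt.1 (mt mem_range.2 hk))
  refine (sum_congr rfl fun k _ ↦ sum_subset hsub fun l _ hl ↦ hzero (.inr (hlt hl))).trans ?_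
  exact sum_subset hsub fun k _ hk ↦ sum_eq_zero fun l _ ↦ hzero (.inl (hlt hk))

/-- The differences of `F` in its first variable are rational functions that `flux` can absorb:
with `x = k + 1 + e` and `y = l + f` they are `(a y + b x) / (x * (x + y))`. -/
def Telescopes (e f : W) (F : ℕ → ℕ → W) : Prop :=
  ∃ a b : ℕ → W, (∀ l, a l ∈ Algebra.adjoin ℚ {f}) ∧ (∀ k, b k ∈ Algebra.adjoin ℚ {e}) ∧
    ∀ k l, (k + 1 + e) * (k + 1 + e + (l + f)) * (F (k + 1) l - F k l) = a l + b k

theorem IsTopCoeff.sum_flux_sub_mul (h : IsTopCoeff π e f) (hF : Telescopes e f F) (r : ℕ) :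
    ∑ k ∈ range (r + 4), ∑ l ∈ range (r + 4),
      π ((flux e f r (k + 1) l - flux e f r k l) * F k l) = 0 := by
  obtain ⟨a, b, ha, hb, hab⟩ := hF
  have habel (l : ℕ) : ∑ k ∈ range (r + 4), (flux e f r (k + 1) l - flux e f r k l) * F k l =
      -∑ k ∈ range (r + 4), (reducedFlux e f r (k + 1) l * a l +
        reducedFlux e f r (k + 1) l * b k) := by
    rw [sum_sub_mul_eq_neg_sum_mul_sub (u := (flux e f r · l)) (F · l)
      (flux_zero_left h.sq_left f r l) (flux_eq_zero e f l (show r + 3 < r + 4 by lia))]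
    refine congrArg _ (sum_congr rfl fun k _ ↦ ?_)
    rw [← mul_add, ← hab, flux_eq_reducedFlux_mul, Nat.cast_succ, mul_assoc]
  have hleft (l : ℕ) : ∑ k ∈ range (r + 4), π (reducedFlux e f r (k + 1) l * a l) = 0 :=
    sum_reducedFlux_succ_mul h.sq_left (fun b ↦ h.symm.map_adjoin_left b.2)
      (⟨f, Algebra.self_mem_adjoin_singleton ℚ f⟩ : Algebra.adjoin ℚ {f}) ⟨a l, ha l⟩ r l
  have hright (k : ℕ) : ∑ l ∈ range (r + 4), π (reducedFlux e f r (k + 1) l * b k) = 0 :=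
    sum_reducedFlux_mul h.sq_right (fun b ↦ h.map_adjoin_left b.2)
      (⟨e, Algebra.self_mem_adjoin_singleton ℚ e⟩ : Algebra.adjoin ℚ {e}) ⟨b k, hb k⟩ r (k + 1)
  rw [sum_comm]
  simp only [← map_sum, habel]
  simp only [map_neg, map_sum, map_add, sum_neg_distrib, sum_add_distrib, hleft]
  rw [sum_comm]
  simp only [hright, sum_const_zero, add_zero, neg_zero]

theorem recOperator_residuePairing_eq_sum (r : ℕ) :
    recOperator (residuePairing π e f F) r = ∑ k ∈ range (r + 4), ∑ l ∈ range (r + 4),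
      π (recOperator (fun n ↦ summand e f n n k l) r * F k l) := by
  simp only [recOperator, residuePairing_eq_sum_range (show r ≤ r + 3 by lia),
    residuePairing_eq_sum_range (show r + 1 ≤ r + 3 by lia),
    residuePairing_eq_sum_range (show r + 2 ≤ r + 3 by lia),
    residuePairing_eq_sum_range (le_refl (r + 3)), smul_sum, ← sum_add_distrib,
    ← sum_sub_distrib, add_mul, sub_mul, smul_mul_assoc, map_add, map_sub, map_smul]

theorem IsTopCoeff.recOperator_residuePairing (h : IsTopCoeff π e f) (hF : Telescopes e f F)
    (hF' : Telescopes f e fun l k ↦ F k l) (r : ℕ) :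
    recOperator (residuePairing π e f F) r = 0 := by
  have hpos : (4 * ((r + 2 : ℚ) ^ 2 - 1)) ≠ 0 := by
    have : (0 : ℚ) < 4 * ((r + 2 : ℚ) ^ 2 - 1) := by ring_nf; positivity
    exact this.ne'
  refine (smul_eq_zero_iff_right hpos).1 ?_
  have hleft := h.sum_flux_sub_mul hF r
  have hright := h.symm.sum_flux_sub_mul hF' r
  rw [sum_comm] at hright
  rw [recOperator_residuePairing_eq_sum, smul_sum]
  refine Eq.trans ?_ ((congrArg₂ (· + ·) hleft hright).trans (add_zero 0))
  simp only [← sum_add_distrib, smul_sum]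
  refine sum_congr rfl fun k _ ↦ sum_congr rfl fun l _ ↦ ?_
  rw [← map_smul, ← smul_mul_assoc, smul_recOperator_summand h.sq_left h.sq_right, add_mul,
    map_add]

end Pairing

section Solutions

open Finset Nat

theorem add_pow_three_eq_zero {R : Type*} [CommRing R] {e f : R} (he : e ^ 2 = 0) (hf : f ^ 2 = 0) :
    (e + f) ^ 3 = 0 :=
  (Commute.all e f).add_pow_eq_zero_of_add_le_succ_of_pow_eq_zero he hf le_rfl

variable {W : Type*} [CommRing W] [Algebra ℚ W] {π : W →ₗ[ℚ] ℚ} {e f : W} {F : ℕ → ℕ → W}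

/-- The residue pairing, rescaled by `(-1) ^ (n + 1) * (2 * n)! / n !` so as to satisfy `Rec1`. -/
def solution (π : W →ₗ[ℚ] ℚ) (e f : W) (F : ℕ → ℕ → W) (n : ℕ) : ℚ :=
  (-1) ^ (n + 1) * (n.centralBinom * n !) * residuePairing π e f F n

theorem succ_centralBinom_mul_factorial (n : ℕ) :
    ((n + 1).centralBinom * (n + 1)! : ℚ) = 2 * (2 * n + 1) * (n.centralBinom * n !) := by
  have := congrArg (Nat.cast (R := ℚ)) (n.succ_mul_centralBinom_succ)
  push_cast [factorial_succ] at this ⊢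
  linear_combination (n ! : ℚ) * this

theorem IsTopCoeff.rec1_solution (h : IsTopCoeff π e f) (hF : Telescopes e f F)
    (hF' : Telescopes f e fun l k ↦ F k l) : Rec1 (solution π e f F) := by
  intro n hn
  obtain ⟨r, rfl⟩ := Nat.exists_eq_add_of_le' hn
  have hrec := h.recOperator_residuePairing hF hF' r
  simp only [recOperator, smul_eq_mul] at hrec
  simp only [solution, show r + 2 - 1 = r + 1 by lia, Nat.add_sub_cancel,
    succ_centralBinom_mul_factorial]
  push_cast
  linear_combination 4 * (-1) ^ r * (2 * r + 1) * (2 * r + 3) * (r.centralBinom * r !) * hrec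

/-- The inverse of `z + w`, when `z ≠ 0` and `w ^ 3 = 0`. -/
def truncInv (w : W) (z : ℕ) : W :=
  let c := algebraMap ℚ W (z : ℚ)⁻¹
  c - c ^ 2 * w + c ^ 3 * w ^ 2

theorem mul_truncInv {w : W} (hw : w ^ 3 = 0) (m : ℕ) : (m + 1 + w) * truncInv w (m + 1) = 1 := by
  have hm : ((m : W) + 1) * algebraMap ℚ W ((m + 1 : ℕ) : ℚ)⁻¹ = 1 := by
    rw [← Nat.cast_add_one, ← map_natCast (algebraMap ℚ W), ← map_mul,
      mul_inv_cancel₀ (Nat.cast_ne_zero.2 m.succ_ne_zero), map_one]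
  rw [truncInv]
  set c := algebraMap ℚ W ((m + 1 : ℕ) : ℚ)⁻¹
  linear_combination (1 - c * w + c ^ 2 * w ^ 2) * hm + c ^ 3 * hw

theorem truncInv_mem {S : Subalgebra ℚ W} {w : W} (hw : w ∈ S) (z : ℕ) : truncInv w z ∈ S :=
  have hc := S.algebraMap_mem (z : ℚ)⁻¹
  add_mem (sub_mem hc (mul_mem (pow_mem hc 2) hw)) (mul_mem (pow_mem hc 3) (pow_mem hw 2))

/-- The generalized harmonic number `∑ m ≤ k, 1 / (m + w) ^ j`, expanded at `w`. -/
def shiftedHarmonic (j : ℕ) (w : W) (k : ℕ) : W := ∑ m ∈ range k, truncInv w (m + 1) ^ j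

theorem shiftedHarmonic_succ (j : ℕ) (w : W) (k : ℕ) :
    shiftedHarmonic j w (k + 1) = shiftedHarmonic j w k + truncInv w (k + 1) ^ j :=
  sum_range_succ _ k

theorem shiftedHarmonic_mem {S : Subalgebra ℚ W} {w : W} (hw : w ∈ S) (j k : ℕ) :
    shiftedHarmonic j w k ∈ S :=
  sum_mem fun m _ ↦ pow_mem (truncInv_mem hw (m + 1)) j

/-- The test function of weight one, which produces the approximations `p̃ n` to `ζ(3)`. -/
def zetaThreeTest (e f : W) (k l : ℕ) : W :=
  shiftedHarmonic 1 (e + f) (k + l) - shiftedHarmonic 1 e k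

/-- The test function of weight three, which produces the approximations `p n` to `ζ(5)`. -/
def zetaFiveTest (e f : W) (k l : ℕ) : W :=
  ∑ m ∈ range k, (shiftedHarmonic 2 f l * truncInv e (m + 1) -
      (shiftedHarmonic 2 f l + shiftedHarmonic 2 e m) * truncInv (e + f) (m + l + 1)) -
    ∑ m ∈ range l, shiftedHarmonic 2 f m * truncInv (e + f) (m + 1)

theorem zetaFiveTest_succ_left (e f : W) (k l : ℕ) :
    zetaFiveTest e f (k + 1) l - zetaFiveTest e f k l =
      shiftedHarmonic 2 f l * truncInv e (k + 1) -
        (shiftedHarmonic 2 f l + shiftedHarmonic 2 e k) * truncInv (e + f) (k + l + 1) := by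
  rw [zetaFiveTest, sum_range_succ, zetaFiveTest]
  ring

theorem zetaFiveTest_succ_right (he : e ^ 2 = 0) (hf : f ^ 2 = 0) (k l : ℕ) :
    zetaFiveTest e f k (l + 1) - zetaFiveTest e f k l =
      shiftedHarmonic 2 e k * truncInv f (l + 1) -
        (shiftedHarmonic 2 e k + shiftedHarmonic 2 f l) * truncInv (e + f) (k + l + 1) := by
  induction k with
  | zero =>
    simp only [zetaFiveTest, sum_range_succ, range_zero, sum_empty, shiftedHarmonic, zero_add]
    ring
  | succ k ih =>
    have hx := mul_truncInv (pow_eq_zero_of_le (by lia) he : e ^ 3 = 0) k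
    have hy := mul_truncInv (pow_eq_zero_of_le (by lia) hf : f ^ 3 = 0) l
    have hxy := mul_truncInv (add_pow_three_eq_zero he hf) (k + l + 1)
    have hleft := zetaFiveTest_succ_left e f k l
    have hleft' := zetaFiveTest_succ_left e f k (l + 1)
    rw [← add_assoc k l 1, shiftedHarmonic_succ] at hleft'
    rw [shiftedHarmonic_succ, show k + 1 + l + 1 = k + l + 1 + 1 by lia]
    push_cast at hxy
    set A := truncInv e (k + 1)
    set B := truncInv f (l + 1)
    set C := truncInv (e + f) (k + l + 1 + 1)
    have hpartial : A * B = (A + B) * C := by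
      linear_combination (-(A * B)) * hxy + B * C * hx + A * C * hy
    linear_combination hleft' - hleft + ih + (B - A) * hpartial

theorem telescopes_const (e f w : W) : Telescopes e f fun _ _ ↦ w :=
  ⟨0, 0, fun _ ↦ zero_mem _, fun _ ↦ zero_mem _, fun _ _ ↦ by
    rw [sub_self, mul_zero, Pi.zero_apply, Pi.zero_apply, add_zero]⟩

theorem natCast_add_mem_adjoin (e : W) (k : ℕ) : (k + e : W) ∈ Algebra.adjoin ℚ {e} :=
  add_mem (natCast_mem _ k) (Algebra.self_mem_adjoin_singleton ℚ e)

theorem telescopes_zetaThreeTest (he : e ^ 2 = 0) (hf : f ^ 2 = 0) :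
    Telescopes e f (zetaThreeTest e f) := by
  refine ⟨fun l ↦ -(l + f), 0, fun l ↦ neg_mem (natCast_add_mem_adjoin f l), fun _ ↦ zero_mem _,
    fun k l ↦ ?_⟩
  have hx := mul_truncInv (pow_eq_zero_of_le (by lia) he : e ^ 3 = 0) k
  have hxy := mul_truncInv (add_pow_three_eq_zero he hf) (k + l)
  rw [zetaThreeTest, zetaThreeTest, add_right_comm k 1 l, shiftedHarmonic_succ,
    shiftedHarmonic_succ, Pi.zero_apply]
  push_cast at hxy
  linear_combination (k + 1 + e) * hxy - (k + 1 + e + (l + f)) * hx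

theorem telescopes_zetaThreeTest_swap (he : e ^ 2 = 0) (hf : f ^ 2 = 0) :
    Telescopes f e fun l k ↦ zetaThreeTest e f k l := by
  refine ⟨0, fun l ↦ (l + 1 : ℕ) + f, fun _ ↦ zero_mem _, fun l ↦ natCast_add_mem_adjoin f (l + 1),
    fun l k ↦ ?_⟩
  have hxy := mul_truncInv (add_pow_three_eq_zero he hf) (k + l)
  simp only [zetaThreeTest, ← add_assoc, shiftedHarmonic_succ, Pi.zero_apply]
  push_cast at hxy ⊢
  linear_combination (l + 1 + f) * hxy

theorem telescopes_of_sub_eq {G : ℕ → ℕ → W} (he : e ^ 2 = 0) (hf : f ^ 2 = 0)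
    (hG : ∀ k l, G (k + 1) l - G k l = shiftedHarmonic 2 f l * truncInv e (k + 1) -
      (shiftedHarmonic 2 f l + shiftedHarmonic 2 e k) * truncInv (e + f) (k + l + 1)) :
    Telescopes e f G := by
  refine ⟨fun l ↦ (l + f) * shiftedHarmonic 2 f l,
    fun k ↦ -(((k + 1 : ℕ) + e) * shiftedHarmonic 2 e k),
    fun l ↦ mul_mem (natCast_add_mem_adjoin f l)
      (shiftedHarmonic_mem (Algebra.self_mem_adjoin_singleton ℚ f) 2 l),
    fun k ↦ neg_mem (mul_mem (natCast_add_mem_adjoin e (k + 1))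
      (shiftedHarmonic_mem (Algebra.self_mem_adjoin_singleton ℚ e) 2 k)), fun k l ↦ ?_⟩
  have hx := mul_truncInv (pow_eq_zero_of_le (by lia) he : e ^ 3 = 0) k
  have hxy := mul_truncInv (add_pow_three_eq_zero he hf) (k + l)
  rw [hG]
  push_cast at hxy ⊢
  linear_combination (k + 1 + e + (l + f)) * shiftedHarmonic 2 f l * hx -
    (k + 1 + e) * (shiftedHarmonic 2 f l + shiftedHarmonic 2 e k) * hxy

theorem telescopes_zetaFiveTest (he : e ^ 2 = 0) (hf : f ^ 2 = 0) :
    Telescopes e f (zetaFiveTest e f) :=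
  telescopes_of_sub_eq he hf (zetaFiveTest_succ_left e f)

theorem telescopes_zetaFiveTest_swap (he : e ^ 2 = 0) (hf : f ^ 2 = 0) :
    Telescopes f e fun l k ↦ zetaFiveTest e f k l :=
  telescopes_of_sub_eq hf he fun l k ↦ by
    rw [add_comm f e, add_comm l k, zetaFiveTest_succ_right he hf]

end Solutions

section Uniqueness

theorem a0_ne_zero {n : ℕ} (hn : 2 ≤ n) : a0 n ≠ 0 := by
  obtain ⟨r, rfl⟩ := Nat.exists_eq_add_of_le' hn
  have hpos : a0 (r + 2 : ℕ) = 41218 * r ^ 3 + 198849 * r ^ 2 + 320790 * r + 173057 := by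
    rw [a0]
    push_cast
    ring
  rw [hpos]
  positivity

theorem Rec1.const_mul {y : ℕ → ℚ} (hy : Rec1 y) (c : ℚ) : Rec1 fun n ↦ c * y n :=
  fun n hn ↦ by linear_combination c * hy n hn

theorem Rec1.eq_of_initial {u v : ℕ → ℚ} (hu : Rec1 u) (hv : Rec1 v) (h₀ : u 0 = v 0)
    (h₁ : u 1 = v 1) (h₂ : u 2 = v 2) (n : ℕ) : u n = v n := by
  induction n using Nat.strong_induction_on with
  | _ n ih =>
    match n with
    | 0 => exact h₀
    | 1 => exact h₁
    | 2 => exact h₂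
    | r + 3 =>
      have hlead : (((r + 2 : ℕ) : ℚ) + 1) ^ 6 * a0 (r + 2 : ℕ) ≠ 0 :=
        mul_ne_zero (by positivity) (a0_ne_zero (Nat.le_add_left 2 r))
      have hur := hu (r + 2) (Nat.le_add_left 2 r)
      have hvr := hv (r + 2) (Nat.le_add_left 2 r)
      rw [show r + 2 - 1 = r + 1 by lia, Nat.add_sub_cancel] at hur hvr
      rw [ih (r + 2) (by lia), ih (r + 1) (by lia), ih r (by lia)] at hur
      exact mul_left_cancel₀ hlead (by linear_combination hur - hvr)

end Uniqueness

section Model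

/-- The algebra generated over `ℚ` by two infinitesimals `e` and `f` with `e² = f² = 0`. -/
abbrev BidualNumber := DualNumber (DualNumber ℚ)

namespace BidualNumber

/-- The first infinitesimal. -/
def e : BidualNumber := DualNumber.eps

/-- The second infinitesimal. -/
def f : BidualNumber := TrivSqZeroExt.inl DualNumber.eps

/-- The coefficient of `e * f`. -/
def topCoeff : BidualNumber →ₗ[ℚ] ℚ where
  toFun u := u.snd.snd
  map_add' _ _ := rfl
  map_smul' _ _ := rfl

theorem isTopCoeff : IsTopCoeff topCoeff e f where
  sq_left := by rw [sq]; exact DualNumber.eps_mul_eps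
  sq_right := by
    rw [sq, f, ← TrivSqZeroExt.inl_mul, DualNumber.eps_mul_eps, TrivSqZeroExt.inl_zero]
  map_one := by decide +kernel
  map_left := by decide +kernel
  map_right := by decide +kernel
  map_mul := by decide +kernel

end BidualNumber

open BidualNumber

theorem eq_solution_const {q : ℕ → ℚ} (hq : Rec1 q) (h₀ : q 0 = -1) (h₁ : q 1 = 42)
    (h₂ : q 2 = -17934) (n : ℕ) : q n = solution topCoeff e f (fun _ _ ↦ e * f) n := by
  refine hq.eq_of_initial (isTopCoeff.rec1_solution (telescopes_const _ _ _)
    (telescopes_const _ _ _)) ?_ ?_ ?_ n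
  · rw [h₀]; decide +kernel
  · rw [h₁]; decide +kernel
  · rw [h₂]; decide +kernel

theorem two_mul_eq_solution_zetaFiveTest {p : ℕ → ℚ} (hp : Rec1 p) (h₀ : p 0 = 0)
    (h₁ : p 1 = 87 / 2) (h₂ : p 2 = -1190161 / 64) (n : ℕ) :
    2 * p n = solution topCoeff e f (zetaFiveTest e f) n := by
  have hsq := isTopCoeff.sq_left
  have hsq' := isTopCoeff.sq_right
  refine (hp.const_mul 2).eq_of_initial (isTopCoeff.rec1_solution (telescopes_zetaFiveTest hsq hsq')
    (telescopes_zetaFiveTest_swap hsq hsq')) ?_ ?_ ?_ n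
  · rw [h₀]; decide +kernel
  · rw [h₁]; decide +kernel
  · rw [h₂]; decide +kernel

theorem two_mul_eq_solution_zetaThreeTest {p : ℕ → ℚ} (hp : Rec1 p) (h₀ : p 0 = 0)
    (h₁ : p 1 = 101 / 2) (h₂ : p 2 = -344923 / 16) (n : ℕ) :
    2 * p n = solution topCoeff e f (zetaThreeTest e f) n := by
  have hsq := isTopCoeff.sq_left
  have hsq' := isTopCoeff.sq_right
  refine (hp.const_mul 2).eq_of_initial (isTopCoeff.rec1_solution
    (telescopes_zetaThreeTest hsq hsq') (telescopes_zetaThreeTest_swap hsq hsq')) ?_ ?_ ?_ n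
  · rw [h₀]; decide +kernel
  · rw [h₁]; decide +kernel
  · rw [h₂]; decide +kernel

end Model

section Divisibility

theorem dvd_Dlcm {n j : ℕ} (h₁ : 1 ≤ j) (h₂ : j ≤ n) : j ∣ Dlcm n :=
  Finset.dvd_lcm (f := id) (Finset.mem_Icc.2 ⟨h₁, h₂⟩)

theorem Dlcm_ne_zero (n : ℕ) : Dlcm n ≠ 0 := by
  rw [Dlcm, Ne, Finset.lcm_eq_zero_iff]
  rintro ⟨j, hj, rfl⟩
  exact Nat.not_succ_le_zero 0 (Finset.mem_Icc.1 hj).1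

theorem prime_dvd_choose_of_lt_pow {p i a b : ℕ} (hp : p.Prime) (ha : a < p ^ i) (hb : b < p ^ i)
    (hab : p ^ i ≤ a + b) : p ∣ (a + b).choose b := by
  have hi : i ≠ 0 := by
    rintro rfl
    lia
  refine Nat.dvd_of_factorization_pos ?_
  rw [Nat.factorization_choose' hp (Nat.lt_succ_self _)]
  refine Finset.card_ne_zero_of_mem (a := i) (Finset.mem_filter.2 ⟨Finset.mem_Ico.2
    ⟨Nat.one_le_iff_ne_zero.2 hi, Nat.lt_succ_iff.2 (Nat.le_log_of_pow_le hp.one_lt hab)⟩, ?_⟩)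
  rwa [Nat.mod_eq_of_lt ha, Nat.mod_eq_of_lt hb, add_comm]

theorem dvd_Dlcm_mul_choose {n k z : ℕ} (hk : k ≤ n) (h₁ : 1 ≤ z) (h₂ : z ≤ k + n) :
    z ∣ Dlcm n * (k + n).choose n := by
  refine (Nat.dvd_iff_prime_pow_dvd_dvd _ _).2 fun p i hp hpi ↦ ?_
  have hle : p ^ i ≤ k + n := (Nat.le_of_dvd h₁ hpi).trans h₂
  have hone (j : ℕ) : 1 ≤ p ^ j := Nat.one_le_pow _ _ hp.pos
  rcases le_or_gt (p ^ i) n with hge | hlt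
  · exact (dvd_Dlcm (hone i) hge).mul_right _
  cases i with
  | zero => exact one_dvd _
  | succ i =>
    have hdouble : p ^ i * 2 ≤ p ^ (i + 1) := Nat.mul_le_mul_left _ hp.two_le
    exact mul_dvd_mul (dvd_Dlcm (hone i) (show p ^ i ≤ n by lia))
      (prime_dvd_choose_of_lt_pow hp (hk.trans_lt hlt) hlt hle)

end Divisibility

section Integrality

open Finset Nat

section Rising

variable {A : Type*} [CommRing A]

theorem rising_natCast (a k : ℕ) : rising a (k : A) = (a ! * (k + a).choose a : ℕ) := by
  rw [← ascFactorial_eq_factorial_mul_choose, ascFactorial_eq_prod_range, rising, Nat.cast_prod]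
  refine prod_congr rfl fun j _ ↦ ?_
  push_cast
  ring

theorem rising_add_mul_self {e : A} (he : e ^ 2 = 0) (a : ℕ) (x : A) :
    rising a (x + e) * e = rising a x * e := by
  induction a with
  | zero => simp only [rising, range_zero, prod_empty]
  | succ a ih =>
    rw [rising_succ, rising_succ]
    linear_combination (x + (a + 1)) * ih + rising a (x + e) * he

end Rising

variable {W : Type*} [CommRing W] [Algebra ℚ W] {S : Subring W} {n : ℕ} {e f w : W}

theorem natCast_smul_mem {u : W} (hu : u ∈ S) (a : ℕ) : (a : ℚ) • u ∈ S := by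
  rw [Nat.cast_smul_eq_nsmul]
  exact nsmul_mem hu a

theorem div_smul_mem_of_dvd {u : W} (hu : u ∈ S) {a z : ℕ} (h : z ∣ a) : (a / z : ℚ) • u ∈ S := by
  rw [← Nat.cast_div_charZero h]
  exact natCast_smul_mem hu _

theorem div_smul_mem (hw : (Dlcm n : ℚ)⁻¹ • w ∈ S) {a z : ℕ} (h : z ∣ Dlcm n * a) :
    (a / z : ℚ) • w ∈ S := by
  have hD : (Dlcm n : ℚ) ≠ 0 := Nat.cast_ne_zero.2 (Dlcm_ne_zero n)
  have hmem := div_smul_mem_of_dvd hw h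
  rwa [smul_smul, Nat.cast_mul, show (Dlcm n : ℚ) * a / z * (Dlcm n : ℚ)⁻¹ = a / z by field_simp]
    at hmem

theorem inv_smul_mem (hw : (Dlcm n : ℚ)⁻¹ • w ∈ S) {j : ℕ} (h₁ : 1 ≤ j) (h₂ : j ≤ n) :
    (j : ℚ)⁻¹ • w ∈ S := by
  have hmem := div_smul_mem hw (a := 1) ((dvd_Dlcm h₁ h₂).mul_right 1)
  rwa [Nat.cast_one, one_div] at hmem

theorem harmonic_smul_mem (hw : (Dlcm n : ℚ)⁻¹ • w ∈ S) {j : ℕ} (hj : j ≤ n) :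
    harmonic j • w ∈ S := by
  rw [harmonic, sum_smul]
  exact sum_mem fun i hi ↦
    inv_smul_mem hw (Nat.le_add_left 1 i) ((Nat.succ_le_of_lt (mem_range.1 hi)).trans hj)

theorem smul_weight_mem (hw : (Dlcm n : ℚ)⁻¹ • w ∈ S) {k : ℕ} (hk : k ≤ n) :
    ((n ! : ℚ) ^ 2) • weight w n k ∈ S := by
  have hn : (n ! : ℚ) ≠ 0 := Nat.cast_ne_zero.2 (factorial_ne_zero n)
  have hweight : ((n ! : ℚ) ^ 2) • weight w n k = ((n.choose k ^ 2 : ℕ) : ℚ) •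
      (1 + ((2 : ℕ) : ℚ) • (harmonic (n - k) • w - harmonic k • w)) := by
    rw [weight, smul_smul, ← sub_smul, smul_smul, div_pow, mul_div_cancel₀ _ (pow_ne_zero 2 hn)]
    push_cast
    rfl
  rw [hweight]
  exact natCast_smul_mem (add_mem (one_mem S) (natCast_smul_mem
    (sub_mem (harmonic_smul_mem hw (Nat.sub_le n k)) (harmonic_smul_mem hw hk)) 2)) _

theorem inv_factorial_succ_mul (a : ℕ) : ((a + 1)! : ℚ)⁻¹ * (a + 1) = (a ! : ℚ)⁻¹ := by
  rw [factorial_succ]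
  push_cast
  field_simp

theorem inv_factorial_smul_rising_succ (a : ℕ) (w : W) :
    ((a + 1)! : ℚ)⁻¹ • rising (a + 1) w =
      (a ! : ℚ)⁻¹ • rising a w * (1 + ((a + 1 : ℕ) : ℚ)⁻¹ • w) := by
  have hsucc : ((a : ℚ) + 1) * ((a + 1 : ℕ) : ℚ)⁻¹ = 1 := by
    rw [← Nat.cast_add_one, mul_inv_cancel₀ (Nat.cast_ne_zero.2 a.succ_ne_zero)]
  rw [rising_succ, ← inv_factorial_succ_mul a, ← smul_smul, smul_mul_assoc, smul_mul_assoc,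
    ← mul_smul_comm ((a : ℚ) + 1), smul_add, smul_smul, hsucc, one_smul,
    Algebra.smul_def ((a : ℚ) + 1), map_add, map_natCast, map_one, mul_one, add_comm w]

theorem inv_factorial_smul_rising_add_one (a : ℕ) (x : W) :
    ((a + 1)! : ℚ)⁻¹ • rising (a + 1) (x + 1) =
      ((a + 1)! : ℚ)⁻¹ • rising (a + 1) x + (a ! : ℚ)⁻¹ • rising a (x + 1) := by
  have hsmul : (a ! : ℚ)⁻¹ • rising a (x + 1) =
      ((a + 1)! : ℚ)⁻¹ • (rising a (x + 1) * (a + 1)) := by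
    rw [← inv_factorial_succ_mul, ← smul_smul, Algebra.smul_def ((a : ℚ) + 1), map_add,
      map_natCast, map_one, mul_comm]
  rw [hsmul, ← smul_add, rising_succ, rising_succ, ← rising_add_one_mul a x]
  congr 1
  ring

theorem inv_factorial_smul_rising_mem (hw : (Dlcm n : ℚ)⁻¹ • w ∈ S) {a : ℕ} (ha : a ≤ n) (z : ℕ) :
    (a ! : ℚ)⁻¹ • rising a (z + w) ∈ S := by
  induction a generalizing z with
  | zero =>
    simp only [factorial_zero, Nat.cast_one, inv_one, one_smul, rising, range_zero, prod_empty,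
      one_mem]
  | succ a ih =>
    have hle : a ≤ n := (Nat.le_succ a).trans ha
    induction z with
    | zero =>
      have ih₀ := ih hle 0
      rw [Nat.cast_zero, zero_add] at ih₀ ⊢
      rw [inv_factorial_smul_rising_succ]
      exact mul_mem ih₀ (add_mem (one_mem S) (inv_smul_mem hw (Nat.le_add_left 1 a) ha))
    | succ z ihz =>
      have ih₁ := ih hle (z + 1)
      rw [Nat.cast_add_one, add_right_comm] at ih₁ ⊢
      rw [inv_factorial_smul_rising_add_one]
      exact add_mem ihz ih₁

/-- The factor of a diagonal summand that depends on `k` alone, cleared of its denominator. -/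
def numerator (e : W) (n k : ℕ) : W := (n ! : ℚ) • (rising n (k + e) * weight e n k)

theorem numerator_mem (he : (Dlcm n : ℚ)⁻¹ • e ∈ S) {k : ℕ} (hk : k ≤ n) :
    numerator e n k ∈ S := by
  have hn : (n ! : ℚ) ≠ 0 := Nat.cast_ne_zero.2 (factorial_ne_zero n)
  have hmem := mul_mem (inv_factorial_smul_rising_mem he le_rfl k) (smul_weight_mem he hk)
  rwa [smul_mul_smul_comm, sq, inv_mul_cancel_left₀ hn] at hmem

theorem numerator_mul_self (he : e ^ 2 = 0) (n k : ℕ) :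
    numerator e n k * e = (((k + n).choose n * n.choose k ^ 2 : ℕ) : ℚ) • e := by
  have hn : (n ! : ℚ) ≠ 0 := Nat.cast_ne_zero.2 (factorial_ne_zero n)
  have hweight : weight e n k * e = ((n.choose k / n ! : ℚ) ^ 2) • e := by
    rw [weight, smul_mul_assoc, add_mul, one_mul, smul_mul_assoc, ← sq, he, smul_zero, add_zero]
  rw [numerator, smul_mul_assoc, mul_assoc, hweight, mul_smul_comm, rising_add_mul_self he,
    rising_natCast, ← map_natCast (algebraMap ℚ W), ← Algebra.smul_def, smul_smul, smul_smul]
  congr 1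
  push_cast
  field_simp

theorem numerator_mul_inv_smul_mem (he : e ^ 2 = 0) (heS : (Dlcm n : ℚ)⁻¹ • e ∈ S) {k z : ℕ}
    (hk : k ≤ n) (h₁ : 1 ≤ z) (h₂ : z ≤ k + n) : numerator e n k * (z : ℚ)⁻¹ • e ∈ S := by
  rw [mul_smul_comm, numerator_mul_self he, smul_smul, inv_mul_eq_div]
  exact div_smul_mem heS ((dvd_Dlcm_mul_choose hk h₁ h₂).trans ⟨n.choose k ^ 2, by ring⟩)

/-- The diagonal summands with the normalisation of `solution`, up to sign. -/
def scaledSummand (e f : W) (n k l : ℕ) : W :=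
  (n.centralBinom * n ! : ℚ) • summand e f n n k l

theorem scaledSummand_eq (e f : W) (n k l : ℕ) :
    scaledSummand e f n k l = (n.centralBinom : ℚ) • (numerator e n k * numerator f n l *
      (n ! : ℚ)⁻¹ • rising n (((k + l : ℕ) : W) + (e + f))) := by
  have hn : (n ! : ℚ) ≠ 0 := Nat.cast_ne_zero.2 (factorial_ne_zero n)
  have hkl : ((k + l : ℕ) : W) + (e + f) = k + e + (l + f) := by push_cast; ring
  rw [scaledSummand, summand, numerator, numerator, smul_mul_smul_comm, smul_mul_smul_comm,
    smul_smul, hkl, mul_inv_cancel_right₀ hn]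

theorem scaledSummand_mem (he : (Dlcm n : ℚ)⁻¹ • e ∈ S) (hf : (Dlcm n : ℚ)⁻¹ • f ∈ S) {k l : ℕ}
    (hk : k ≤ n) (hl : l ≤ n) : scaledSummand e f n k l ∈ S := by
  rw [scaledSummand_eq]
  refine natCast_smul_mem (mul_mem (mul_mem (numerator_mem he hk) (numerator_mem hf hl)) ?_) _
  exact inv_factorial_smul_rising_mem (smul_add (_ : ℚ) e f ▸ add_mem he hf) le_rfl _

theorem truncInv_eq_smul (w : W) (z : ℕ) :
    truncInv w z = (z : ℚ)⁻¹ • (1 - (z : ℚ)⁻¹ • w + ((z : ℚ)⁻¹ • w) ^ 2) := by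
  simp only [truncInv, Algebra.smul_def]
  ring

theorem smul_truncInv_mem (hw : (Dlcm n : ℚ)⁻¹ • w ∈ S) {z : ℕ} (h₁ : 1 ≤ z) (h₂ : z ≤ n) :
    (Dlcm n : ℚ) • truncInv w z ∈ S := by
  have hz := inv_smul_mem hw h₁ h₂
  rw [truncInv_eq_smul, smul_smul, ← div_eq_mul_inv]
  exact div_smul_mem_of_dvd (add_mem (sub_mem (one_mem S) hz) (pow_mem hz 2)) (dvd_Dlcm h₁ h₂)

theorem smul_shiftedHarmonic_mem (hw : (Dlcm n : ℚ)⁻¹ • w ∈ S) (j : ℕ) {k : ℕ} (hk : k ≤ n) :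
    ((Dlcm n : ℚ) ^ j) • shiftedHarmonic j w k ∈ S := by
  rw [shiftedHarmonic, smul_sum]
  refine sum_mem fun m hm ↦ ?_
  rw [← smul_pow]
  exact pow_mem (smul_truncInv_mem hw (Nat.le_add_left 1 m)
    ((Nat.succ_le_of_lt (mem_range.1 hm)).trans hk)) j

/-- The numerators and the central binomial coefficient absorb the denominators `z > n` that
`Dlcm n` cannot clear. -/
theorem smul_scaledSummand_mul_truncInv_mem (he : e ^ 2 = 0) (hf : f ^ 2 = 0)
    (heS : (Dlcm n : ℚ)⁻¹ • e ∈ S) (hfS : (Dlcm n : ℚ)⁻¹ • f ∈ S) {k l z : ℕ} (hk : k ≤ n)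
    (hl : l ≤ n) (h₁ : 1 ≤ z) (h₂ : z ≤ k + l) :
    (Dlcm n : ℚ) • (scaledSummand e f n k l * truncInv (e + f) z) ∈ S := by
  have hsum : (Dlcm n : ℚ)⁻¹ • (e + f) ∈ S := smul_add (_ : ℚ) e f ▸ add_mem heS hfS
  have hk' := numerator_mem heS hk
  have hl' := numerator_mem hfS hl
  have hke := numerator_mul_inv_smul_mem he heS hk h₁ (h₂.trans (Nat.add_le_add_left hl k))
  have hlf := numerator_mul_inv_smul_mem hf hfS hl h₁ (by lia)
  have hz : z ∣ Dlcm n * n.centralBinom := by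
    rw [centralBinom_eq_two_mul_choose, two_mul]
    exact dvd_Dlcm_mul_choose le_rfl h₁ (by lia)
  set R := (n ! : ℚ)⁻¹ • rising n (((k + l : ℕ) : W) + (e + f))
  have hR : R ∈ S := inv_factorial_smul_rising_mem hsum le_rfl _
  set x := (z : ℚ)⁻¹ • e
  set y := (z : ℚ)⁻¹ • f
  have hx : x ^ 2 = 0 := by rw [smul_pow, he, smul_zero]
  have hy : y ^ 2 = 0 := by rw [smul_pow, hf, smul_zero]
  have hexpand : (Dlcm n : ℚ) • (scaledSummand e f n k l * truncInv (e + f) z) =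
      ((Dlcm n * n.centralBinom : ℕ) / z : ℚ) •
        ((numerator e n k * numerator f n l - numerator e n k * x * numerator f n l -
          numerator e n k * (numerator f n l * y) +
          2 * (numerator e n k * x) * (numerator f n l * y)) * R) := by
    rw [scaledSummand_eq, truncInv_eq_smul, smul_mul_smul_comm, smul_smul, Nat.cast_mul,
      ← mul_assoc, ← div_eq_mul_inv, smul_add]
    congr 1
    linear_combination numerator e n k * numerator f n l * R * (hx + hy)
  rw [hexpand]
  refine div_smul_mem_of_dvd (mul_mem (add_mem (sub_mem (sub_mem (mul_mem hk' hl')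
    (mul_mem hke hl')) (mul_mem hk' hlf)) (mul_mem (mul_mem ?_ hke) hlf)) hR) hz
  exact ofNat_mem S 2

theorem smul_scaledSummand_mul_zetaThreeTest_mem (he : e ^ 2 = 0) (hf : f ^ 2 = 0)
    (heS : (Dlcm n : ℚ)⁻¹ • e ∈ S) (hfS : (Dlcm n : ℚ)⁻¹ • f ∈ S) {k l : ℕ} (hk : k ≤ n)
    (hl : l ≤ n) : (Dlcm n : ℚ) • (scaledSummand e f n k l * zetaThreeTest e f k l) ∈ S := by
  have hharmonic := smul_shiftedHarmonic_mem heS 1 hk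
  rw [pow_one] at hharmonic
  rw [zetaThreeTest, mul_sub, smul_sub, ← mul_smul_comm _ _ (shiftedHarmonic 1 e k)]
  refine sub_mem ?_ (mul_mem (scaledSummand_mem heS hfS hk hl) hharmonic)
  rw [shiftedHarmonic, mul_sum, smul_sum]
  refine sum_mem fun m hm ↦ ?_
  rw [pow_one]
  exact smul_scaledSummand_mul_truncInv_mem he hf heS hfS hk hl (Nat.le_add_left 1 m)
    (mem_range.1 hm)

theorem smul_scaledSummand_mul_zetaFiveTest_mem (he : e ^ 2 = 0) (hf : f ^ 2 = 0)
    (heS : (Dlcm n : ℚ)⁻¹ • e ∈ S) (hfS : (Dlcm n : ℚ)⁻¹ • f ∈ S) {k l : ℕ} (hk : k ≤ n)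
    (hl : l ≤ n) : ((Dlcm n : ℚ) ^ 3) • (scaledSummand e f n k l * zetaFiveTest e f k l) ∈ S := by
  have hmixed {g : W} {z : ℕ} (hg : ((Dlcm n : ℚ) ^ 2) • g ∈ S) (h₁ : 1 ≤ z) (h₂ : z ≤ k + l) :
      ((Dlcm n : ℚ) ^ 3) • (scaledSummand e f n k l * (g * truncInv (e + f) z)) ∈ S := by
    rw [pow_succ, mul_left_comm, ← smul_mul_smul_comm]
    exact mul_mem hg (smul_scaledSummand_mul_truncInv_mem he hf heS hfS hk hl h₁ h₂)
  have hpure {g : W} {z : ℕ} (hg : ((Dlcm n : ℚ) ^ 2) • g ∈ S) (h₁ : 1 ≤ z) (h₂ : z ≤ n) :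
      ((Dlcm n : ℚ) ^ 3) • (scaledSummand e f n k l * (g * truncInv e z)) ∈ S := by
    rw [pow_succ, ← mul_smul_comm, ← smul_mul_smul_comm]
    exact mul_mem (scaledSummand_mem heS hfS hk hl) (mul_mem hg (smul_truncInv_mem heS h₁ h₂))
  have hle {m j : ℕ} (hj : j ≤ n) (hm : m ∈ range j) : m + 1 ≤ n := (mem_range.1 hm).trans_le hj
  have hl₂ := smul_shiftedHarmonic_mem hfS 2 hl
  simp only [zetaFiveTest, mul_sub, mul_sum, smul_sub, smul_sum]
  refine sub_mem (sum_mem fun m hm ↦ sub_mem (hpure hl₂ (Nat.le_add_left 1 m) (hle hk hm))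
    (hmixed ?_ (Nat.le_add_left 1 _) ?_)) (sum_mem fun m hm ↦ hmixed ?_ (Nat.le_add_left 1 m) ?_)
  · rw [smul_add]
    exact add_mem hl₂ (smul_shiftedHarmonic_mem heS 2 ((Nat.le_succ m).trans (hle hk hm)))
  · linarith [mem_range.1 hm]
  · exact smul_shiftedHarmonic_mem hfS 2 ((Nat.le_succ m).trans (hle hl hm))
  · linarith [mem_range.1 hm]

theorem exists_int_of_mem_closure {R : Type*} [CommRing R] {x y u : R} (hx : x ^ 2 = 0)
    (hy : y ^ 2 = 0) (hu : u ∈ Subring.closure {x, y}) :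
    ∃ a b c d : ℤ, u = a + b * x + c * y + d * (x * y) := by
  induction hu using Subring.closure_induction with
  | mem u hu =>
    obtain rfl | rfl := hu
    · exact ⟨0, 1, 0, 0, by push_cast; ring⟩
    · exact ⟨0, 0, 1, 0, by push_cast; ring⟩
  | zero => exact ⟨0, 0, 0, 0, by push_cast; ring⟩
  | one => exact ⟨1, 0, 0, 0, by push_cast; ring⟩
  | neg u _ hu =>
    obtain ⟨a, b, c, d, rfl⟩ := hu
    exact ⟨-a, -b, -c, -d, by push_cast; ring⟩
  | add u v _ _ hu hv =>
    obtain ⟨a, b, c, d, rfl⟩ := hu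
    obtain ⟨a', b', c', d', rfl⟩ := hv
    exact ⟨a + a', b + b', c + c', d + d', by push_cast; ring⟩
  | mul u v _ _ hu hv =>
    obtain ⟨a, b, c, d, rfl⟩ := hu
    obtain ⟨a', b', c', d', rfl⟩ := hv
    refine ⟨a * a', a * b' + b * a', a * c' + c * a', a * d' + b * c' + c * b' + d * a', ?_⟩
    push_cast
    linear_combination (b + d * y) * (b' + d' * y) * hx +
      (c * c' + (c * d' + d * c') * x) * hy

variable {π : W →ₗ[ℚ] ℚ}

theorem IsTopCoeff.exists_int_sq_mul (h : IsTopCoeff π e f) {D : ℚ} (hD : D ≠ 0) {u : W}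
    (hu : u ∈ Subring.closure {D⁻¹ • e, D⁻¹ • f}) : ∃ z : ℤ, D ^ 2 * π u = z := by
  obtain ⟨a, b, c, d, rfl⟩ := exists_int_of_mem_closure (by rw [smul_pow, h.sq_left, smul_zero])
    (by rw [smul_pow, h.sq_right, smul_zero]) hu
  refine ⟨d, ?_⟩
  rw [← zsmul_one a]
  simp only [← zsmul_eq_mul, map_add, map_zsmul, smul_mul_smul_comm, map_smul, h.map_one,
    h.map_left, h.map_right, h.map_mul, smul_zero, zero_add]
  rw [zsmul_eq_mul, smul_eq_mul]
  field_simp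

theorem IsTopCoeff.exists_int_mul_solution (h : IsTopCoeff π e f) {F : ℕ → ℕ → W} (c : ℚ)
    (hF : ∀ k ≤ n, ∀ l ≤ n, c • (scaledSummand e f n k l * F k l) ∈
      Subring.closure {(Dlcm n : ℚ)⁻¹ • e, (Dlcm n : ℚ)⁻¹ • f}) :
    ∃ z : ℤ, (Dlcm n : ℚ) ^ 2 * c * solution π e f F n = z := by
  obtain ⟨z, hz⟩ := h.exists_int_sq_mul (Nat.cast_ne_zero.2 (Dlcm_ne_zero n))
    (sum_mem fun k hk ↦ sum_mem fun l hl ↦ hF k (Nat.lt_succ_iff.1 (mem_range.1 hk)) l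
      (Nat.lt_succ_iff.1 (mem_range.1 hl)))
  refine ⟨(-1) ^ (n + 1) * z, ?_⟩
  push_cast
  simp only [map_sum, map_smul, scaledSummand, smul_mul_assoc, ← smul_sum, smul_eq_mul] at hz
  rw [← hz, solution, residuePairing]
  ring

theorem IsTopCoeff.exists_int_solution_const (h : IsTopCoeff π e f) (n : ℕ) :
    ∃ z : ℤ, solution π e f (fun _ _ ↦ e * f) n = z := by
  have hD : (Dlcm n : ℚ) ≠ 0 := Nat.cast_ne_zero.2 (Dlcm_ne_zero n)
  have heS : (Dlcm n : ℚ)⁻¹ • e ∈ Subring.closure {(Dlcm n : ℚ)⁻¹ • e, (Dlcm n : ℚ)⁻¹ • f} :=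
    Subring.mem_closure_of_mem (.inl rfl)
  have hfS : (Dlcm n : ℚ)⁻¹ • f ∈ Subring.closure {(Dlcm n : ℚ)⁻¹ • e, (Dlcm n : ℚ)⁻¹ • f} :=
    Subring.mem_closure_of_mem (.inr rfl)
  obtain ⟨z, hz⟩ := h.exists_int_mul_solution (n := n) (F := fun _ _ ↦ e * f)
    ((Dlcm n : ℚ)⁻¹ * (Dlcm n : ℚ)⁻¹) fun k hk l hl ↦ by
      rw [← mul_smul_comm, ← smul_mul_smul_comm]
      exact mul_mem (scaledSummand_mem heS hfS hk hl) (mul_mem heS hfS)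
  refine ⟨z, ?_⟩
  rw [← hz]
  field_simp

theorem IsTopCoeff.exists_int_solution_zetaFiveTest (h : IsTopCoeff π e f) (n : ℕ) :
    ∃ z : ℤ, (Dlcm n : ℚ) ^ 5 * solution π e f (zetaFiveTest e f) n = z := by
  rw [show (Dlcm n : ℚ) ^ 5 = (Dlcm n : ℚ) ^ 2 * (Dlcm n : ℚ) ^ 3 by ring]
  exact h.exists_int_mul_solution _ fun k hk l hl ↦
    smul_scaledSummand_mul_zetaFiveTest_mem h.sq_left h.sq_right
      (Subring.mem_closure_of_mem (.inl rfl)) (Subring.mem_closure_of_mem (.inr rfl)) hk hl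

theorem IsTopCoeff.exists_int_solution_zetaThreeTest (h : IsTopCoeff π e f) (n : ℕ) :
    ∃ z : ℤ, (Dlcm n : ℚ) ^ 3 * solution π e f (zetaThreeTest e f) n = z := by
  rw [pow_succ]
  exact h.exists_int_mul_solution _ fun k hk l hl ↦
    smul_scaledSummand_mul_zetaThreeTest_mem h.sq_left h.sq_right
      (Subring.mem_closure_of_mem (.inl rfl)) (Subring.mem_closure_of_mem (.inr rfl)) hk hl

end Integrality

/-- For all `n ≥ 1` one has `q_n ∈ ℤ`, `2 D_n^5 p_n ∈ ℤ` and `2 D_n^3 p̃_n ∈ ℤ`,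
with `D_n = lcm(1, 2, …, n)`. -/
theorem stmt5
    (q p pt : ℕ → ℚ)
    (hq : Rec1 q) (hp : Rec1 p) (hpt : Rec1 pt)
    (hq0 : q 0 = -1) (hq1 : q 1 = 42) (hq2 : q 2 = -17934)
    (hp0 : p 0 = 0) (hp1 : p 1 = 87/2) (hp2 : p 2 = -1190161/64)
    (hpt0 : pt 0 = 0) (hpt1 : pt 1 = 101/2) (hpt2 : pt 2 = -344923/16) :
    ∀ n : ℕ, 1 ≤ n →
      (∃ z : ℤ, q n = (z : ℚ)) ∧
      (∃ z : ℤ, 2 * (Dlcm n : ℚ)^5 * p n = (z : ℚ)) ∧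
      (∃ z : ℤ, 2 * (Dlcm n : ℚ)^3 * pt n = (z : ℚ)) := by
  intro n _
  rw [mul_right_comm _ _ (p n), mul_right_comm _ _ (pt n), eq_solution_const hq hq0 hq1 hq2,
    two_mul_eq_solution_zetaFiveTest hp hp0 hp1 hp2,
    two_mul_eq_solution_zetaThreeTest hpt hpt0 hpt1 hpt2, mul_comm _ (_ ^ 5), mul_comm _ (_ ^ 3)]
  exact ⟨BidualNumber.isTopCoeff.exists_int_solution_const n,
    BidualNumber.isTopCoeff.exists_int_solution_zetaFiveTest n,
    BidualNumber.isTopCoeff.exists_int_solution_zetaThreeTest n⟩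
end
end
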